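/- arXiv:math/0604024 — 3 statements merged into one kernel-verified Lean document; each statement's English description precedes it below -/
import Mathlib

section
/- For all integers n ≥ 4 and l ≥ 1, the numbers of connected components of the spaces of very nice M-morsifications satisfy the recurrence #comp(V(n−2, l+1)) = #comp(V(n, l)) − n·l·#comp(V(n, l−1)), where #comp denotes the number of connected components (Nat.card of the type of connected components of the subspace). -/
open Polynomial

/-- `V n l ⊆ ℝ^{n-2} × ℝ^l` : the space of very nice M-morsifications of the
multiboundary singularity `B_n^l`.  A pair `(λ, b)` belongs to it iff the polynomial
`p(x) = x^n + λ₂ x^{n-2} + ⋯ + λ_{n-1} x` has `n-1` distinct real critical points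
(its derivative has `n-1` distinct real roots) and the `n-1` critical values together
with the `l` boundary values `p(b₁), …, p(b_l)` are pairwise distinct. -/
noncomputable def V (n l : ℕ) : Set ((Fin (n - 2) → ℝ) × (Fin l → ℝ)) :=
  {q | ∀ p : ℝ[X],
      p = X ^ n + ∑ j : Fin (n - 2), C (q.1 j) * X ^ (n - 2 - (j : ℕ)) →
      (p.derivative.roots.toFinset.card = n - 1 ∧
        (∀ x ∈ p.derivative.roots.toFinset, ∀ y ∈ p.derivative.roots.toFinset,
          x ≠ y → p.eval x ≠ p.eval y) ∧
        (∀ x ∈ p.derivative.roots.toFinset, ∀ i : Fin l, p.eval x ≠ p.eval (q.2 i)) ∧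
        (∀ i j : Fin l, i ≠ j → p.eval (q.2 i) ≠ p.eval (q.2 j)))}


theorem mm_global_homeo {E : Type*} [NormedAddCommGroup E] [NormedSpace ℝ E]
    [FiniteDimensional ℝ E] (Z W : Set E) (hZo : IsOpen Z) (hWo : IsOpen W)
    (hZc : Convex ℝ Z) (hWc : Convex ℝ W) (hZn : Z.Nonempty) (G : E → E)
    (hG : ContDiff ℝ 1 G) (hinj : ∀ z ∈ Z, ∀ v, fderiv ℝ G z v = 0 → v = 0)
    (hmaps : ∀ z ∈ Z, G z ∈ W)
    (hprop : ∀ K ⊆ W, IsCompact K → IsCompact (Z ∩ G ⁻¹' K)) :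
    ∃ S : W → E, Continuous S ∧ (∀ w, S w ∈ Z) ∧ (∀ w, G (S w) = w) ∧
      (∀ z (hz : z ∈ Z), S ⟨G z, hmaps z hz⟩ = z) := by
  let g : Z → W := fun z => ⟨G z, hmaps z z.2⟩
  have hgc : Continuous g :=
    Continuous.subtype_mk (hG.continuous.comp continuous_subtype_val) _
  obtain ⟨z0, hz0⟩ := hZn
  have hloc : IsLocalHomeomorph g := by
    have h1 : IsLocalHomeomorphOn G Z := by
      intro z hz
      have hd : HasFDerivAt G (fderiv ℝ G z) z :=
        (hG.differentiable (by norm_num) z).hasFDerivAt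
      have hi : Function.Injective (fderiv ℝ G z : E →ₗ[ℝ] E) := by
        rw [injective_iff_map_eq_zero]
        exact fun v hv => hinj z hz v hv
      let e : E ≃ₗ[ℝ] E := LinearEquiv.ofInjectiveEndo _ hi
      let e' : E ≃L[ℝ] E := e.toContinuousLinearEquiv
      have hee : (e' : E →L[ℝ] E) = fderiv ℝ G z := by
        ext v
        rfl
      rw [← hee] at hd
      exact ⟨(hG.contDiffAt).toOpenPartialHomeomorph G hd (by norm_num),
        ContDiffAt.mem_toOpenPartialHomeomorph_source _ hd (by norm_num), rfl⟩
    have h2 : IsLocalHomeomorph (fun z : Z => G z) := by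
      rw [isLocalHomeomorph_iff_isLocalHomeomorphOn_univ]
      exact h1.comp (hZo.isOpenEmbedding_subtypeVal.isLocalHomeomorph.isLocalHomeomorphOn)
        (fun z _ => z.2)
    exact IsLocalHomeomorph.of_comp (g := (Subtype.val : W → E)) (f := g) h2
      hWo.isOpenEmbedding_subtypeVal.isLocalHomeomorph hgc
  have : SimplyConnectedSpace W := by
    have := hWc.contractibleSpace ⟨G z0, hmaps z0 hz0⟩
    infer_instance
  have : LocallyPathConnectedSpace W := hWo.locallyPathConnectedSpace
  have : ConnectedSpace Z := by
    rw [← isConnected_iff_connectedSpace]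
    exact hZc.isConnected ⟨z0, hz0⟩
  have : LocallyCompactSpace W := hWo.locallyCompactSpace
  have hpr : IsProperMap g := by
    rw [isProperMap_iff_isCompact_preimage]
    refine ⟨hgc, fun K hK => ?_⟩
    have h3 := hprop (Subtype.val '' K) (by rintro _ ⟨w, _, rfl⟩; exact w.2)
      (hK.image continuous_subtype_val)
    rw [Subtype.isCompact_iff]
    convert h3 using 1
    ext z
    constructor
    · rintro ⟨z, hz, rfl⟩
      exact ⟨z.2, ⟨_, hz, rfl⟩⟩
    · rintro ⟨hz, ⟨w, hw, hwz⟩⟩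
      refine ⟨⟨z, hz⟩, ?_, rfl⟩
      have : g ⟨z, hz⟩ = w := Subtype.ext hwz.symm
      simpa [this] using hw
  have hcov : IsCoveringMap g := by
    rw [isCoveringMap_iff_isCoveringMapOn_univ]
    refine hpr.isClosedMap.isCoveringMapOn_of_isLocalHomeomorphOn ?_ ?_
    · intro w _
      have hc := hpr.isCompact_preimage (isCompact_singleton (x := w))
      have hd : IsDiscrete (g ⁻¹' {w}) := by
        refine IsDiscrete.of_openPartialHomeomorph g subset_rfl ?_
        intro e _
        obtain ⟨φ, h, h'⟩ := hloc e
        exact ⟨φ, h, h'.symm⟩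
      exact hc.finite hd
    · exact hloc.isLocalHomeomorphOn.mono (Set.subset_univ _)
  obtain ⟨S, ⟨hS0, hS⟩, -⟩ := hcov.existsUnique_continuousMap_lifts (ContinuousMap.id W)
    (g ⟨z0, hz0⟩) ⟨z0, hz0⟩ rfl
  have hSG : (S ∘ g) = id := by
    refine hcov.eq_of_comp_eq (S.continuous.comp hgc) continuous_id ?_ ⟨z0, hz0⟩ hS0
    rw [← Function.comp_assoc, hS]
    rfl
  refine ⟨fun w => (S w : E), continuous_subtype_val.comp S.continuous, fun w => (S w).2,
    fun w => ?_, fun z hz => ?_⟩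
  · exact congrArg Subtype.val (congrFun hS w)
  · exact congrArg Subtype.val (congrFun hSG ⟨z, hz⟩)

noncomputable def mmQ {m : ℕ} (x : Fin m → ℝ) : ℝ[X] := ∏ j, (X - C (x j))

noncomputable def mmP {m : ℕ} (x : Fin m → ℝ) : ℝ[X] :=
  ∑ k ∈ Finset.range (m + 1), C (((m : ℝ) + 1) * (mmQ x).coeff k / ((k : ℝ) + 1)) * X ^ (k + 1)

theorem mmQ_eval {m : ℕ} (x : Fin m → ℝ) (t : ℝ) : (mmQ x).eval t = ∏ j, (t - x j) := by
  simp [mmQ, eval_prod]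

theorem mmQ_monic {m : ℕ} (x : Fin m → ℝ) : (mmQ x).Monic :=
  monic_prod_of_monic _ _ fun j _ => monic_X_sub_C (x j)

theorem mmQ_natDegree {m : ℕ} (x : Fin m → ℝ) : (mmQ x).natDegree = m := by
  simp [mmQ, natDegree_prod_of_monic _ _ (fun j _ => monic_X_sub_C (x j))]

theorem mmQ_coeff_top {m : ℕ} (x : Fin m → ℝ) : (mmQ x).coeff m = 1 := by
  have := mmQ_monic x
  rw [Monic, leadingCoeff, mmQ_natDegree] at this
  exact this

theorem mmQ_coeff_pred {m : ℕ} (hm : 0 < m) (x : Fin m → ℝ) :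
    (mmQ x).coeff (m - 1) = - ∑ j, x j := by
  have := Polynomial.prod_X_sub_C_coeff_card_pred Finset.univ x (by simpa using hm)
  simpa [mmQ] using this

theorem mmP_derivative {m : ℕ} (x : Fin m → ℝ) :
    (mmP x).derivative = C ((m : ℝ) + 1) * mmQ x := by
  rw [(mmQ x).as_sum_range_C_mul_X_pow, mmQ_natDegree, Finset.mul_sum, mmP, derivative_sum]
  refine Finset.sum_congr rfl fun k _ => ?_
  rw [derivative_C_mul_X_pow, ← mul_assoc, ← C_mul]
  congr 2
  push_cast
  have : (k : ℝ) + 1 ≠ 0 := by positivity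
  field_simp

theorem mmP_eval {m : ℕ} (x : Fin m → ℝ) (t : ℝ) : (mmP x).eval t =
    ∑ k ∈ Finset.range (m + 1), (((m : ℝ) + 1) * (mmQ x).coeff k / ((k : ℝ) + 1)) * t ^ (k + 1) := by
  simp [mmP, eval_finsetSum]

theorem mmQ_coeff_contDiff_aux {m : ℕ} (s : Finset (Fin m)) (k : ℕ) :
    ContDiff ℝ 1 (fun x : Fin m → ℝ => (∏ j ∈ s, (X - C (x j)) : ℝ[X]).coeff k) := by
  classical
  induction s using Finset.induction_on generalizing k with
  | empty => simpa using contDiff_const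
  | insert a s ha ih =>
    simp only [Finset.prod_insert ha, sub_mul, coeff_sub, coeff_C_mul]
    cases k with
    | zero =>
      simp only [coeff_X_mul_zero]
      have := ih 0
      fun_prop
    | succ k =>
      simp only [coeff_X_mul]
      have := ih k
      have := ih (k + 1)
      fun_prop

theorem mmQ_coeff_contDiff {m : ℕ} (k : ℕ) :
    ContDiff ℝ 1 (fun x : Fin m → ℝ => (mmQ x).coeff k) :=
  mmQ_coeff_contDiff_aux Finset.univ k

theorem mmP_eval_contDiff {m : ℕ} :
    ContDiff ℝ 1 (fun z : (Fin m → ℝ) × ℝ => (mmP z.1).eval z.2) := by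
  simp only [mmP_eval]
  refine ContDiff.sum fun k _ => ?_
  have := (mmQ_coeff_contDiff (m := m) k).comp (contDiff_fst (F := ℝ) (E := Fin m → ℝ) (𝕜 := ℝ))
  simp only [Function.comp_def] at this
  fun_prop

/-- Critical points `z.1`, constant term `z.2.1` and boundary points `z.2.2` are sent to critical
values, sum of the critical points, boundary values. -/
noncomputable def mmG {m l : ℕ} (z : (Fin m → ℝ) × ℝ × (Fin l → ℝ)) :
    (Fin m → ℝ) × ℝ × (Fin l → ℝ) :=
  (fun j => z.2.1 + (mmP z.1).eval (z.1 j), ∑ j, z.1 j, fun i => z.2.1 + (mmP z.1).eval (z.2.2 i))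

theorem mmG_contDiff {m l : ℕ} : ContDiff ℝ 1 (mmG (m := m) (l := l)) := by
  unfold mmG
  have h := mmP_eval_contDiff (m := m)
  refine ContDiff.prodMk ?_ (ContDiff.prodMk ?_ ?_)
  · rw [contDiff_pi]
    intro j
    have : ContDiff ℝ 1 (fun z : (Fin m → ℝ) × ℝ × (Fin l → ℝ) => (z.1, z.1 j)) := by fun_prop
    have := h.comp this
    simp only [Function.comp_def] at this
    fun_prop
  · fun_prop
  · rw [contDiff_pi]
    intro j
    have : ContDiff ℝ 1 (fun z : (Fin m → ℝ) × ℝ × (Fin l → ℝ) => (z.1, z.2.2 j)) := by fun_prop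
    have := h.comp this
    simp only [Function.comp_def] at this
    fun_prop

theorem mmG_fderiv_inj {m l : ℕ} (hm : 0 < m) (z : (Fin m → ℝ) × ℝ × (Fin l → ℝ))
    (hx : Function.Injective z.1) (hb : ∀ i j, z.2.2 i ≠ z.1 j)
    (v : (Fin m → ℝ) × ℝ × (Fin l → ℝ)) (hv : fderiv ℝ mmG z v = 0) : v = 0 := by
  have hG : HasDerivAt (fun e : ℝ => mmG (z + e • v)) 0 0 := by
    have h1 : HasFDerivAt mmG (fderiv ℝ mmG z) (z + (0:ℝ) • v) := by
      simpa using (mmG_contDiff.differentiable (by norm_num) z).hasFDerivAt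
    have h2 : HasDerivAt (fun e : ℝ => z + e • v) v 0 := by
      simpa using ((hasDerivAt_id (0:ℝ)).smul_const v).const_add z
    have := h1.comp_hasDerivAt (0:ℝ) h2
    rw [hv] at this
    exact this
  obtain ⟨x, c, b⟩ := z
  obtain ⟨dx, dc, db⟩ := v
  simp only at hx hb
  have hG1 : HasDerivAt (fun e : ℝ => (mmG ((x, c, b) + e • (dx, dc, db))).1) 0 0 := hG.fst
  have hG2 : HasDerivAt (fun e : ℝ => (mmG ((x, c, b) + e • (dx, dc, db))).2.1) 0 0 := hG.snd.fst
  have hG3 : HasDerivAt (fun e : ℝ => (mmG ((x, c, b) + e • (dx, dc, db))).2.2) 0 0 := hG.snd.snd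
  -- derivatives of the coefficients
  have hq : ∀ k, ∃ d, HasDerivAt (fun e : ℝ => (mmQ (x + e • dx)).coeff k) d 0 := by
    intro k
    have : ContDiff ℝ 1 (fun e : ℝ => (mmQ (x + e • dx)).coeff k) :=
      (mmQ_coeff_contDiff k).comp (by fun_prop)
    exact ⟨_, (this.differentiable (by norm_num) 0).hasDerivAt⟩
  choose q hq using hq
  have hqm : q m = 0 := by
    have h := hq m
    simp only [mmQ_coeff_top] at h
    exact h.unique (hasDerivAt_const _ _)
  have hqm1 : q (m - 1) = 0 := by
    have h := hq (m - 1)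
    simp only [mmQ_coeff_pred hm] at h
    have h2 := hG2.neg
    simp only [mmG, Prod.fst_add, Prod.smul_fst] at h2
    simpa using h.unique h2
  set a : ℕ → ℝ := fun k => ((m : ℝ) + 1) * q k / ((k : ℝ) + 1) with ha
  have key : ∀ t dt : ℝ, HasDerivAt
      (fun e : ℝ => (c + e * dc) + (mmP (x + e • dx)).eval (t + e * dt))
      (dc + ∑ k ∈ Finset.range (m + 1), a k * t ^ (k + 1) +
        ((m : ℝ) + 1) * (mmQ x).eval t * dt) 0 := by
    intro t dt
    have h1 : HasDerivAt (fun e : ℝ => c + e * dc) dc 0 := by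
      simpa using ((hasDerivAt_id (0:ℝ)).mul_const dc).const_add c
    have h2 : HasDerivAt (fun e : ℝ => t + e * dt) dt 0 := by
      simpa using ((hasDerivAt_id (0:ℝ)).mul_const dt).const_add t
    have h3 : ∀ k ∈ Finset.range (m + 1), HasDerivAt (fun e : ℝ =>
        (((m : ℝ) + 1) * (mmQ (x + e • dx)).coeff k / ((k : ℝ) + 1)) * (t + e * dt) ^ (k + 1))
        (a k * t ^ (k + 1) + ((m : ℝ) + 1) * ((mmQ x).coeff k * t ^ k) * dt) 0 := by
      intro k _
      have h4 := (((hq k).const_mul ((m : ℝ) + 1)).div_const ((k : ℝ) + 1)).mul (h2.pow (k + 1))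
      refine h4.congr_deriv ?_
      have : (k : ℝ) + 1 ≠ 0 := by positivity
      simp [ha]
      field_simp
    have h5 := h1.add (HasDerivAt.fun_sum h3)
    refine (h5.congr_deriv ?_).congr_of_eventuallyEq ?_
    · rw [Finset.sum_add_distrib, ← Finset.sum_mul, ← Finset.mul_sum]
      rw [eval_eq_sum_range' (n := m + 1) (by rw [mmQ_natDegree]; omega)]
      ring
    · filter_upwards with e
      simp [mmP_eval]
  let R : ℝ[X] := C dc + ∑ k ∈ Finset.range (m + 1), C (a k) * X ^ (k + 1)
  have hReval : ∀ t, R.eval t = dc + ∑ k ∈ Finset.range (m + 1), a k * t ^ (k + 1) := by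
    intro t
    simp [R, eval_finsetSum]
  have hRcoeff : ∀ k, R.coeff (k + 1) = if k < m + 1 then a k else 0 := by
    intro k
    simp [R]
  have hRdeg : R.natDegree < m := by
    have : R.natDegree ≤ m - 1 := by
      rw [natDegree_le_iff_coeff_eq_zero]
      intro N hN
      obtain ⟨k, rfl⟩ : ∃ k, N = k + 1 := ⟨N - 1, by omega⟩
      rw [hRcoeff]
      split_ifs with hk
      · obtain h | h : k = m ∨ k = m - 1 := by omega
        · subst h; simp [ha, hqm]
        · subst h; simp [ha, hqm1]
      · rfl
    omega
  have hRx : ∀ j, R.eval (x j) = 0 := by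
    intro j
    have h1 := key (x j) (dx j)
    have h2 : HasDerivAt (fun e : ℝ => (mmG ((x, c, b) + e • (dx, dc, db))).1 j) 0 0 :=
      (hasDerivAt_pi.1 hG1) j
    have h3 : HasDerivAt (fun e : ℝ => (c + e * dc) + (mmP (x + e • dx)).eval (x j + e * dx j))
      0 0 := by
      simpa [mmG] using h2
    have h4 := h1.unique h3
    have h5 : (mmQ x).eval (x j) = 0 := by
      rw [mmQ_eval]
      exact Finset.prod_eq_zero (Finset.mem_univ j) (sub_self _)
    rw [h5] at h4
    rw [hReval]
    linarith
  have hR0 : R = 0 :=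
    eq_zero_of_natDegree_lt_card_of_eval_eq_zero R hx hRx (by simpa using hRdeg)
  have hdc : dc = 0 := by
    have := congrArg (fun r : ℝ[X] => r.eval 0) hR0
    simpa [hReval] using this
  have hq0 : ∀ k ≤ m, q k = 0 := by
    intro k hk
    have h1 := hRcoeff k
    rw [hR0, if_pos (by omega)] at h1
    have h2 : (m : ℝ) + 1 ≠ 0 := by positivity
    have h3 : (k : ℝ) + 1 ≠ 0 := by positivity
    have h4 : ((m : ℝ) + 1) * q k / ((k : ℝ) + 1) = 0 := by simpa [ha] using h1.symm
    field_simp at h4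
    simpa [h2] using h4
  have hdx : ∀ j, dx j = 0 := by
    intro j
    have h1 : HasDerivAt (fun e : ℝ => (mmQ (x + e • dx)).eval (x j)) 0 0 := by
      have h2 : HasDerivAt (fun e : ℝ => ∑ k ∈ Finset.range (m + 1),
          (mmQ (x + e • dx)).coeff k * (x j) ^ k)
          (∑ k ∈ Finset.range (m + 1), q k * (x j) ^ k) 0 :=
        HasDerivAt.fun_sum fun k _ => (hq k).mul_const _
      rw [Finset.sum_eq_zero (fun k hk => by
        rw [hq0 k (by simpa [Nat.lt_succ_iff] using hk), zero_mul])] at h2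
      refine h2.congr_of_eventuallyEq ?_
      filter_upwards with e
      rw [eval_eq_sum_range' (n := m + 1) (by rw [mmQ_natDegree]; omega)]
    have h2 : HasDerivAt (fun e : ℝ => ∏ i, (x j - (x i + e * dx i)))
        (∑ i, (∏ k ∈ Finset.univ.erase i, (x j - (x k + 0 * dx k))) • (- dx i)) 0 := by
      refine HasDerivAt.fun_finsetProd fun i _ => ?_
      have := (((hasDerivAt_id (0:ℝ)).mul_const (dx i)).const_add (x i)).const_sub (x j)
      simpa using this
    have h3 : (fun e : ℝ => (mmQ (x + e • dx)).eval (x j)) =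
        (fun e : ℝ => ∏ i, (x j - (x i + e * dx i))) := by
      funext e
      simp [mmQ_eval]
    rw [h3] at h1
    have h4 := h2.unique h1
    rw [Finset.sum_eq_single j] at h4
    · have h5 : ∏ k ∈ Finset.univ.erase j, (x j - (x k + 0 * dx k)) ≠ 0 := by
        rw [Finset.prod_ne_zero_iff]
        intro k hk h0
        have : x j = x k := by linarith
        exact (Finset.ne_of_mem_erase hk) (hx this).symm
      simp only [smul_eq_mul, mul_eq_zero, h5, false_or, neg_eq_zero] at h4
      exact h4
    · intro i _ hij
      have : ∏ k ∈ Finset.univ.erase i, (x j - (x k + 0 * dx k)) = 0 :=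
        Finset.prod_eq_zero (Finset.mem_erase.2 ⟨hij.symm, Finset.mem_univ j⟩) (by ring)
      rw [this, zero_smul]
    · simp
  have hdb : ∀ i, db i = 0 := by
    intro i
    have h1 := key (b i) (db i)
    have h2 : HasDerivAt (fun e : ℝ => (mmG ((x, c, b) + e • (dx, dc, db))).2.2 i) 0 0 :=
      (hasDerivAt_pi.1 hG3) i
    have h3 : HasDerivAt (fun e : ℝ => (c + e * dc) + (mmP (x + e • dx)).eval (b i + e * db i))
      0 0 := by
      simpa [mmG] using h2
    have h4 := h1.unique h3
    have h5 : (mmQ x).eval (b i) ≠ 0 := by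
      rw [mmQ_eval, Finset.prod_ne_zero_iff]
      intro j _
      exact sub_ne_zero.2 (hb i j)
    rw [← hReval, hR0, eval_zero, zero_add] at h4
    have h2 : (m : ℝ) + 1 ≠ 0 := by positivity
    simpa [h2, h5] using h4
  simp only [Prod.mk_eq_zero]
  exact ⟨funext hdx, hdc, funext hdb⟩

def mmBr {m : ℕ} (x : Fin m → ℝ) (k : ℕ) (t : ℝ) : Prop :=
  ∀ j : Fin m, ((j : ℕ) < k → t ≤ x j) ∧ (k ≤ (j : ℕ) → x j ≤ t)

theorem mmBr_mid {m : ℕ} {x : Fin m → ℝ} {k : ℕ} {a b t : ℝ} (ha : mmBr x k a) (hb : mmBr x k b)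
    (h1 : a ≤ t) (h2 : t ≤ b) : mmBr x k t :=
  fun j => ⟨fun h => h2.trans ((hb j).1 h), fun h => ((ha j).2 h).trans h1⟩

theorem mmQ_sign {m : ℕ} {x : Fin m → ℝ} {k : ℕ} (hk : k ≤ m) {t : ℝ} (ht : mmBr x k t) :
    (-1) ^ k * (mmQ x).eval t = ∏ j, |t - x j| := by
  have h1 : ((-1 : ℝ)) ^ k = ∏ j : Fin m, (if (j : ℕ) < k then (-1 : ℝ) else 1) := by
    rw [Finset.prod_ite]
    simp only [Finset.prod_const, one_pow, mul_one]
    rw [Fin.card_filter_val_lt, min_eq_right hk]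
  rw [h1, mmQ_eval, ← Finset.prod_mul_distrib]
  refine Finset.prod_congr rfl fun j _ => ?_
  split_ifs with h
  · rw [abs_of_nonpos (by linarith [(ht j).1 h])]; ring
  · rw [abs_of_nonneg (by linarith [(ht j).2 (not_lt.1 h)])]; ring

theorem mm_gap {m : ℕ} {x : Fin m → ℝ} {k : ℕ} (hk : k ≤ m) {a b : ℝ} (hab : a ≤ b)
    (ha : mmBr x k a) (hb : mmBr x k b) :
    ((m : ℝ) + 1) * ((b - a) / 3) ^ (m + 1) ≤
      (-1) ^ k * ((mmP x).eval b - (mmP x).eval a) := by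
  rcases hab.eq_or_lt with rfl | hlt
  · simp
  set f : ℝ → ℝ := fun t => (-1) ^ k * (mmP x).eval t with hf
  have hd : ∀ t, HasDerivAt f ((-1) ^ k * (((m : ℝ) + 1) * (mmQ x).eval t)) t := by
    intro t
    have := ((mmP x).hasDerivAt t).const_mul ((-1 : ℝ) ^ k)
    rwa [mmP_derivative, eval_mul, eval_C] at this
  have hd' : ∀ t, mmBr x k t → (-1) ^ k * (((m : ℝ) + 1) * (mmQ x).eval t) =
      ((m : ℝ) + 1) * ∏ j, |t - x j| := by
    intro t ht
    rw [← mmQ_sign hk ht]; ring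
  have hcont : Continuous f := by
    rw [continuous_iff_continuousAt]; exact fun t => (hd t).continuousAt
  have hmono : MonotoneOn f (Set.Icc a b) := by
    refine monotoneOn_of_deriv_nonneg (convex_Icc a b) hcont.continuousOn
      (fun t _ => (hd t).differentiableAt.differentiableWithinAt) ?_
    intro t ht
    rw [interior_Icc] at ht
    rw [(hd t).deriv, hd' t (mmBr_mid ha hb ht.1.le ht.2.le)]
    positivity
  set h := (b - a) / 3 with hh
  have hpos : 0 < h := by rw [hh]; linarith
  have e1 : b = a + 3 * h := by rw [hh]; ring
  obtain ⟨t, ht, hslope⟩ := exists_hasDerivAt_eq_slope f _ (show a + h < a + 2 * h by linarith)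
    hcont.continuousOn (fun t _ => hd t)
  have htb : mmBr x k t := mmBr_mid ha hb (by linarith [ht.1]) (by linarith [ht.2])
  rw [hd' t htb] at hslope
  have h3 : h ^ m ≤ ∏ j, |t - x j| := by
    have : ∏ _j : Fin m, h ≤ ∏ j, |t - x j| := by
      refine Finset.prod_le_prod (fun _ _ => hpos.le) fun j _ => ?_
      rcases lt_or_ge (j : ℕ) k with hj | hj
      · have := (hb j).1 hj
        rw [abs_of_nonpos (by linarith [ht.2])]
        linarith [ht.2]
      · have := (ha j).2 hj
        rw [abs_of_nonneg (by linarith [ht.1])]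
        linarith [ht.1]
    simpa using this
  have h4 : f (a + 2 * h) - f (a + h) = h * (((m : ℝ) + 1) * ∏ j, |t - x j|) := by
    rw [hslope]
    have : a + 2 * h - (a + h) = h := by ring
    rw [this]
    field_simp
  have h5 : f a ≤ f (a + h) := hmono ⟨le_rfl, hab⟩ ⟨by linarith, by linarith⟩ (by linarith)
  have h6 : f (a + 2 * h) ≤ f b := hmono ⟨by linarith, by linarith⟩ ⟨hab, le_rfl⟩ (by linarith)
  have h7 : ((m : ℝ) + 1) * h ^ (m + 1) ≤ h * (((m : ℝ) + 1) * ∏ j, |t - x j|) := by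
    have : ((m : ℝ) + 1) * h ^ (m + 1) = h * (((m : ℝ) + 1) * h ^ m) := by ring
    rw [this]
    gcongr
  calc _ ≤ f b - f a := by linarith
    _ = _ := by simp only [hf]; ring

/-- The order constraints between critical values (`Sum.inl`, even index: minimum, odd index:
maximum, counted from the right) and boundary values (`Sum.inr`, on the branch `β i`). -/
def mmR {m l : ℕ} (β : Fin l → Fin (m + 1)) : Fin m ⊕ Fin l → Fin m ⊕ Fin l → Prop
  | .inl i, .inl j => (i : ℕ) % 2 = 0 ∧ ((j : ℕ) = i + 1 ∨ (i : ℕ) = j + 1)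
  | .inl j, .inr i => (j : ℕ) % 2 = 0 ∧ ((β i : ℕ) = j ∨ (β i : ℕ) = j + 1)
  | .inr i, .inl j => (j : ℕ) % 2 = 1 ∧ ((β i : ℕ) = j ∨ (β i : ℕ) = j + 1)
  | .inr _, .inr _ => False

def mmval {m l : ℕ} (w : (Fin m → ℝ) × ℝ × (Fin l → ℝ)) : Fin m ⊕ Fin l → ℝ :=
  Sum.elim w.1 w.2.2

def mmZ {m l : ℕ} (β : Fin l → Fin (m + 1)) : Set ((Fin m → ℝ) × ℝ × (Fin l → ℝ)) :=
  {z | (∀ i j : Fin m, i < j → z.1 j < z.1 i) ∧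
    ∀ (i : Fin l) (j : Fin m), ((j : ℕ) < β i → z.2.2 i < z.1 j) ∧
      ((β i : ℕ) ≤ j → z.1 j < z.2.2 i)}

def mmZc {m l : ℕ} (β : Fin l → Fin (m + 1)) : Set ((Fin m → ℝ) × ℝ × (Fin l → ℝ)) :=
  {z | (∀ i j : Fin m, i < j → z.1 j ≤ z.1 i) ∧ ∀ i : Fin l, mmBr z.1 (β i) (z.2.2 i)}

def mmW {m l : ℕ} (β : Fin l → Fin (m + 1)) : Set ((Fin m → ℝ) × ℝ × (Fin l → ℝ)) :=
  {w | ∀ a b, mmR β a b → mmval w a < mmval w b}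

theorem mmZ_sub {m l : ℕ} (β : Fin l → Fin (m + 1)) : mmZ β ⊆ mmZc β :=
  fun _ hz => ⟨fun i j h => (hz.1 i j h).le,
    fun i j => ⟨fun h => ((hz.2 i j).1 h).le, fun h => ((hz.2 i j).2 h).le⟩⟩

theorem mmval_cont {m l : ℕ} (a : Fin m ⊕ Fin l) :
    Continuous (fun w : (Fin m → ℝ) × ℝ × (Fin l → ℝ) => mmval w a) := by
  cases a <;> simp only [mmval, Sum.elim_inl, Sum.elim_inr] <;> fun_prop

theorem mmBr_self {m : ℕ} {x : Fin m → ℝ} (hx : ∀ i j : Fin m, i < j → x j ≤ x i) (i : Fin m)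
    (k : ℕ) (hk : k = i ∨ k = i + 1) : mmBr x k (x i) := by
  intro j
  constructor
  · intro h
    rcases lt_or_eq_of_le (show (j : ℕ) ≤ i by omega) with h' | h'
    · exact hx _ _ h'
    · rw [Fin.ext h']
  · intro h
    rcases lt_or_eq_of_le (show (i : ℕ) ≤ j by omega) with h' | h'
    · exact hx _ _ h'
    · rw [Fin.ext h']

theorem mm_gap_abs {m : ℕ} {x : Fin m → ℝ} {k : ℕ} (hk : k ≤ m) {a b : ℝ} (hab : a ≤ b)
    (ha : mmBr x k a) (hb : mmBr x k b) :
    (k % 2 = 0 → ((m : ℝ) + 1) * (|b - a| / 3) ^ (m + 1) ≤ (mmP x).eval b - (mmP x).eval a) ∧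
    (k % 2 = 1 → ((m : ℝ) + 1) * (|b - a| / 3) ^ (m + 1) ≤ (mmP x).eval a - (mmP x).eval b) := by
  have h := mm_gap hk hab ha hb
  rw [abs_of_nonneg (by linarith)]
  constructor
  · intro h0
    rw [Even.neg_one_pow (Nat.even_iff.2 h0)] at h
    linarith
  · intro h0
    rw [Odd.neg_one_pow (Nat.odd_iff.2 h0)] at h
    linarith

theorem mm_main_gap {m l : ℕ} (β : Fin l → Fin (m + 1)) (z : (Fin m → ℝ) × ℝ × (Fin l → ℝ))
    (hz : z ∈ mmZc β) (a b : Fin m ⊕ Fin l) (hab : mmR β a b) :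
    ((m : ℝ) + 1) * (|mmval z b - mmval z a| / 3) ^ (m + 1) ≤
      mmval (mmG z) b - mmval (mmG z) a := by
  obtain ⟨hx, hb⟩ := hz
  rcases a with i | i <;> rcases b with j | j <;> simp only [mmR] at hab
  · obtain ⟨h0, h1 | h1⟩ := hab
    · have h2 : i < j := by rw [Fin.lt_def]; omega
      have := (mm_gap_abs (k := i + 1) (by omega) (hx i j h2) (mmBr_self hx j _ (by omega))
        (mmBr_self hx i _ (by omega))).2 (by omega)
      rw [abs_sub_comm] at this
      simp only [mmval, mmG, Sum.elim_inl]
      linarith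
    · have h2 : j < i := by rw [Fin.lt_def]; omega
      have := (mm_gap_abs (k := i) (by omega) (hx j i h2) (mmBr_self hx i _ (by omega))
        (mmBr_self hx j _ (by omega))).1 (by omega)
      simp only [mmval, mmG, Sum.elim_inl]
      linarith
  · obtain ⟨h0, h1 | h1⟩ := hab
    · have := (mm_gap_abs (k := β j) (by omega) ((hb j i).2 (by omega))
        (mmBr_self hx i _ (by omega)) (hb j)).1 (by omega)
      simp only [mmval, mmG, Sum.elim_inl, Sum.elim_inr]
      linarith
    · have := (mm_gap_abs (k := β j) (by omega) ((hb j i).1 (by omega))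
        (hb j) (mmBr_self hx i _ (by omega))).2 (by omega)
      rw [abs_sub_comm] at this
      simp only [mmval, mmG, Sum.elim_inl, Sum.elim_inr]
      linarith
  · obtain ⟨h0, h1 | h1⟩ := hab
    · have := (mm_gap_abs (k := β i) (by omega) ((hb i j).2 (by omega))
        (mmBr_self hx j _ (by omega)) (hb i)).2 (by omega)
      rw [abs_sub_comm] at this
      simp only [mmval, mmG, Sum.elim_inl, Sum.elim_inr]
      linarith
    · have := (mm_gap_abs (k := β i) (by omega) ((hb i j).1 (by omega))
        (hb i) (mmBr_self hx j _ (by omega))).1 (by omega)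
      simp only [mmval, mmG, Sum.elim_inl, Sum.elim_inr]
      linarith

theorem mmZ_posne {m l : ℕ} (β : Fin l → Fin (m + 1)) (z : (Fin m → ℝ) × ℝ × (Fin l → ℝ))
    (hz : z ∈ mmZ β) (a b : Fin m ⊕ Fin l) (hab : mmR β a b) : mmval z b ≠ mmval z a := by
  obtain ⟨hx, hb⟩ := hz
  rcases a with i | i <;> rcases b with j | j <;> simp only [mmR] at hab <;>
    simp only [mmval, Sum.elim_inl, Sum.elim_inr]
  · obtain ⟨h0, h1 | h1⟩ := hab
    · exact (hx i j (by rw [Fin.lt_def]; omega)).ne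
    · exact (hx j i (by rw [Fin.lt_def]; omega)).ne'
  · obtain ⟨h0, h1 | h1⟩ := hab
    · exact ((hb j i).2 (by omega)).ne'
    · exact ((hb j i).1 (by omega)).ne
  · obtain ⟨h0, h1 | h1⟩ := hab
    · exact ((hb i j).2 (by omega)).ne
    · exact ((hb i j).1 (by omega)).ne'

theorem mmG_mapsTo {m l : ℕ} (β : Fin l → Fin (m + 1)) (z : (Fin m → ℝ) × ℝ × (Fin l → ℝ))
    (hz : z ∈ mmZ β) : mmG z ∈ mmW β := by
  intro a b hab
  have h1 := mm_main_gap β z (mmZ_sub β hz) a b hab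
  have h2 : 0 < |mmval z b - mmval z a| := abs_pos.2 (sub_ne_zero.2 (mmZ_posne β z hz a b hab))
  have : 0 < ((m : ℝ) + 1) * (|mmval z b - mmval z a| / 3) ^ (m + 1) := by positivity
  linarith

theorem mm_val_eq {m l : ℕ} (z : (Fin m → ℝ) × ℝ × (Fin l → ℝ)) (a : Fin m ⊕ Fin l) :
    mmval (mmG z) a = z.2.1 + (mmP z.1).eval (mmval z a) := by
  cases a <;> rfl

theorem mmZ_of_closed {m l : ℕ} (β : Fin l → Fin (m + 1)) (z : (Fin m → ℝ) × ℝ × (Fin l → ℝ))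
    (hz : z ∈ mmZc β) (hw : mmG z ∈ mmW β) : z ∈ mmZ β := by
  have hne : ∀ a b, mmR β a b → mmval z a ≠ mmval z b := by
    intro a b hab h
    have := hw a b hab
    rw [mm_val_eq, mm_val_eq, h] at this
    exact lt_irrefl _ this
  obtain ⟨hx, hb⟩ := hz
  have hcons : ∀ i j : Fin m, (j : ℕ) = i + 1 → z.1 j < z.1 i := by
    intro i j hij
    refine lt_of_le_of_ne (hx i j (by rw [Fin.lt_def]; omega)) ?_
    rcases Nat.mod_two_eq_zero_or_one i with h | h
    · exact (hne (.inl i) (.inl j) ⟨h, by omega⟩).symm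
    · exact (hne (.inl j) (.inl i) ⟨by omega, by omega⟩)
  have hbne : ∀ (i : Fin l) (j : Fin m), ((β i : ℕ) = j ∨ (β i : ℕ) = j + 1) →
      z.1 j ≠ z.2.2 i := by
    intro i j h
    rcases Nat.mod_two_eq_zero_or_one j with h' | h'
    · exact (hne (.inl j) (.inr i) ⟨h', h⟩)
    · exact (hne (.inr i) (.inl j) ⟨h', h⟩).symm
  refine ⟨fun i j hij => ?_, fun i j => ⟨fun h => ?_, fun h => ?_⟩⟩
  · let j' : Fin m := ⟨i + 1, by rw [Fin.lt_def] at hij; omega⟩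
    refine lt_of_le_of_lt ?_ (hcons i j' rfl)
    rcases lt_or_eq_of_le (show j' ≤ j from hij) with h' | h'
    · exact hx _ _ h'
    · rw [h']
  · let j' : Fin m := ⟨β i - 1, by omega⟩
    have h1 : z.2.2 i < z.1 j' :=
      lt_of_le_of_ne ((hb i j').1 (by simp only [j']; omega))
        (hbne i j' (by simp only [j']; omega)).symm
    refine lt_of_lt_of_le h1 ?_
    rcases lt_or_eq_of_le (show j ≤ j' from by rw [Fin.le_def]; simp only [j']; omega) with h' | h'
    · exact hx _ _ h'
    · rw [h']
  · let j' : Fin m := ⟨β i, by omega⟩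
    have h1 : z.1 j' < z.2.2 i :=
      lt_of_le_of_ne ((hb i j').2 le_rfl) (hbne i j' (Or.inl rfl))
    refine lt_of_le_of_lt ?_ h1
    rcases lt_or_eq_of_le (show j' ≤ j from h) with h' | h'
    · exact hx _ _ h'
    · rw [h']

theorem mmZ_open {m l : ℕ} (β : Fin l → Fin (m + 1)) : IsOpen (mmZ β) := by
  have : mmZ β = (⋂ i : Fin m, ⋂ j : Fin m, ⋂ _ : i < j, {z | z.1 j < z.1 i}) ∩
      ⋂ i : Fin l, ⋂ j : Fin m, ((⋂ _ : (j : ℕ) < β i, {z | z.2.2 i < z.1 j}) ∩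
        (⋂ _ : (β i : ℕ) ≤ j, {z | z.1 j < z.2.2 i})) := by
    ext z
    simp [mmZ]
  rw [this]
  refine IsOpen.inter ?_ ?_
  · refine isOpen_iInter_of_finite fun i => isOpen_iInter_of_finite fun j =>
      isOpen_iInter_of_finite fun _ => isOpen_lt (by fun_prop) (by fun_prop)
  · refine isOpen_iInter_of_finite fun i => isOpen_iInter_of_finite fun j => IsOpen.inter ?_ ?_
    · exact isOpen_iInter_of_finite fun _ => isOpen_lt (by fun_prop) (by fun_prop)
    · exact isOpen_iInter_of_finite fun _ => isOpen_lt (by fun_prop) (by fun_prop)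

theorem mmZc_closed {m l : ℕ} (β : Fin l → Fin (m + 1)) : IsClosed (mmZc β) := by
  have : mmZc β = (⋂ i : Fin m, ⋂ j : Fin m, ⋂ _ : i < j, {z | z.1 j ≤ z.1 i}) ∩
      ⋂ i : Fin l, ⋂ j : Fin m, ((⋂ _ : (j : ℕ) < β i, {z | z.2.2 i ≤ z.1 j}) ∩
        (⋂ _ : (β i : ℕ) ≤ j, {z | z.1 j ≤ z.2.2 i})) := by
    ext z
    simp [mmZc, mmBr]
  rw [this]
  refine IsClosed.inter ?_ ?_
  · refine isClosed_iInter fun i => isClosed_iInter fun j =>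
      isClosed_iInter fun _ => isClosed_le (by fun_prop) (by fun_prop)
  · refine isClosed_iInter fun i => isClosed_iInter fun j => IsClosed.inter ?_ ?_
    · exact isClosed_iInter fun _ => isClosed_le (by fun_prop) (by fun_prop)
    · exact isClosed_iInter fun _ => isClosed_le (by fun_prop) (by fun_prop)

theorem mm_cvx_lt {a b c d s t : ℝ} (hab : a < b) (hcd : c < d) (hs : 0 ≤ s) (ht : 0 ≤ t)
    (hst : s + t = 1) : s * a + t * c < s * b + t * d := by
  rcases hs.eq_or_lt with rfl | hs
  · have : t = 1 := by linarith
    subst this; linarith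
  · have := mul_lt_mul_of_pos_left hab hs
    have := mul_le_mul_of_nonneg_left hcd.le ht
    linarith

theorem mmZ_convex {m l : ℕ} (β : Fin l → Fin (m + 1)) : Convex ℝ (mmZ β) := by
  intro z hz w hw s t hs ht hst
  refine ⟨fun i j h => ?_, fun i j => ⟨fun h => ?_, fun h => ?_⟩⟩
  · simpa using mm_cvx_lt (hz.1 i j h) (hw.1 i j h) hs ht hst
  · simpa using mm_cvx_lt ((hz.2 i j).1 h) ((hw.2 i j).1 h) hs ht hst
  · simpa using mm_cvx_lt ((hz.2 i j).2 h) ((hw.2 i j).2 h) hs ht hst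

theorem mmval_lin {m l : ℕ} (z w : (Fin m → ℝ) × ℝ × (Fin l → ℝ)) (s t : ℝ)
    (a : Fin m ⊕ Fin l) : mmval (s • z + t • w) a = s * mmval z a + t * mmval w a := by
  cases a <;> simp [mmval]

theorem mmCone_convex {m l : ℕ} (r : Fin m ⊕ Fin l → Fin m ⊕ Fin l → Prop) :
    Convex ℝ {w : (Fin m → ℝ) × ℝ × (Fin l → ℝ) | ∀ a b, r a b → mmval w a < mmval w b} := by
  intro z hz w hw s t hs ht hst a b hab
  rw [mmval_lin, mmval_lin]
  exact mm_cvx_lt (hz a b hab) (hw a b hab) hs ht hst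

theorem mmW_open {m l : ℕ} (β : Fin l → Fin (m + 1)) : IsOpen (mmW β) := by
  have : mmW β = ⋂ a : Fin m ⊕ Fin l, ⋂ b : Fin m ⊕ Fin l, ⋂ _ : mmR β a b,
      {w | mmval w a < mmval w b} := by
    ext z
    simp [mmW]
  rw [this]
  exact isOpen_iInter_of_finite fun i => isOpen_iInter_of_finite fun j =>
      isOpen_iInter_of_finite fun _ => isOpen_lt (mmval_cont _) (mmval_cont _)

theorem mmZ_nonempty {m l : ℕ} (β : Fin l → Fin (m + 1)) : (mmZ β).Nonempty := by
  refine ⟨(fun j => -(j : ℝ), 0, fun i => -(β i : ℝ) + 1 / 2), fun i j h => ?_,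
    fun i j => ⟨fun h => ?_, fun h => ?_⟩⟩
  · simpa using h
  · have : ((j : ℕ) : ℝ) + 1 ≤ ((β i : ℕ) : ℝ) := by exact_mod_cast h
    simp only
    linarith
  · have : ((β i : ℕ) : ℝ) ≤ ((j : ℕ) : ℝ) := by exact_mod_cast h
    simp only
    linarith

theorem mm_bound_aux {m : ℕ} {h M : ℝ} (hh : 0 ≤ h) (hM : 0 ≤ M)
    (hle : ((m : ℝ) + 1) * (h / 3) ^ (m + 1) ≤ 2 * M) : h ≤ 3 * (2 * M + 1) := by
  by_contra hcon
  push Not at hcon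
  have h1 : 2 * M + 1 < h / 3 := by linarith
  have h2 : h / 3 ≤ (h / 3) ^ (m + 1) := le_self_pow₀ (by linarith) (by omega)
  have h3 : (h / 3) ^ (m + 1) ≤ ((m : ℝ) + 1) * (h / 3) ^ (m + 1) := by
    have : 0 ≤ (m : ℝ) := by positivity
    have : 0 ≤ (h / 3) ^ (m + 1) := by positivity
    nlinarith
  linarith

theorem mm_proper {m l : ℕ} (hm : 0 < m) (β : Fin l → Fin (m + 1))
    (K : Set ((Fin m → ℝ) × ℝ × (Fin l → ℝ))) (hKW : K ⊆ mmW β) (hK : IsCompact K) :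
    IsCompact (mmZ β ∩ mmG ⁻¹' K) := by
  have heq : mmZ β ∩ mmG ⁻¹' K = mmZc β ∩ mmG ⁻¹' K := by
    ext z
    exact ⟨fun h => ⟨mmZ_sub β h.1, h.2⟩, fun h => ⟨mmZ_of_closed β z h.1 (hKW h.2), h.2⟩⟩
  rw [heq]
  have hcl : IsClosed (mmZc β ∩ mmG ⁻¹' K) :=
    (mmZc_closed β).inter (hK.isClosed.preimage mmG_contDiff.continuous)
  obtain ⟨M, hM⟩ := hK.isBounded.exists_norm_le
  set M' := max M 0
  set B := 3 * (2 * M' + 1) with hB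
  have hM'0 : 0 ≤ M' := le_max_right _ _
  have hB0 : 0 ≤ B := by rw [hB]; linarith
  set L := M' + m * B with hL
  set T := L + B
  have hT0 : 0 ≤ T := by positivity
  let F : (Fin m → ℝ) × ℝ × (Fin l → ℝ) → (Fin m → ℝ) × ℝ × (Fin l → ℝ) :=
    fun y => (y.1, y.2.1 - (mmP y.1).eval (y.1 ⟨0, hm⟩), y.2.2)
  have hF : Continuous F := by
    have h1 : Continuous (fun y : (Fin m → ℝ) × ℝ × (Fin l → ℝ) => (y.1, y.1 ⟨0, hm⟩)) := by
      fun_prop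
    have h2 := (mmP_eval_contDiff (m := m)).continuous.comp h1
    simp only [Function.comp_def] at h2
    fun_prop
  have hcomp : IsCompact (F '' (Metric.closedBall 0 (T + M'))) :=
    (isCompact_closedBall 0 (T + M')).image hF
  refine hcomp.of_isClosed_subset hcl ?_
  rintro z ⟨hz, hzK⟩
  have hnorm : ‖mmG z‖ ≤ M' := (hM _ hzK).trans (le_max_left _ _)
  have hn1 : ∀ j, |(mmG z).1 j| ≤ M' := fun j =>
    (norm_le_pi_norm (mmG z).1 j).trans ((norm_fst_le _).trans hnorm)
  have hn2 : |∑ j, z.1 j| ≤ M' := (norm_fst_le (mmG z).2).trans ((norm_snd_le _).trans hnorm)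
  have hn3 : ∀ i, |(mmG z).2.2 i| ≤ M' := fun j =>
    (norm_le_pi_norm (mmG z).2.2 j).trans
      ((norm_snd_le _).trans ((norm_snd_le _).trans hnorm))
  have hval : ∀ a, |mmval (mmG z) a| ≤ M' := by
    rintro (a | a)
    · exact hn1 a
    · exact hn3 a
  have hpos : ∀ a b, mmR β a b → |mmval z b - mmval z a| ≤ B := by
    intro a b hab
    refine mm_bound_aux (m := m) (abs_nonneg _) hM'0 ((mm_main_gap β z hz a b hab).trans ?_)
    have h1 := abs_le.1 (hval a)
    have h2 := abs_le.1 (hval b)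
    linarith
  have hcons : ∀ i j : Fin m, (j : ℕ) = i + 1 → |z.1 j - z.1 i| ≤ B := by
    intro i j hij
    rcases Nat.mod_two_eq_zero_or_one i with h | h
    · exact hpos (.inl i) (.inl j) ⟨h, by omega⟩
    · rw [abs_sub_comm]
      exact hpos (.inl j) (.inl i) ⟨by omega, by omega⟩
  have hx0 : ∀ (k : ℕ) (hk : k < m), |z.1 ⟨k, hk⟩ - z.1 ⟨0, hm⟩| ≤ k * B := by
    intro k
    induction k with
    | zero => intro hk; simp
    | succ k ih =>
      intro hk
      have h1 := abs_le.1 (ih (by omega))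
      have h2 := abs_le.1 (hcons ⟨k, by omega⟩ ⟨k + 1, hk⟩ rfl)
      push_cast
      rw [abs_le]
      constructor <;> linarith [h1.1, h1.2, h2.1, h2.2]
  have hanti : ∀ i j : Fin m, i ≤ j → z.1 j ≤ z.1 i := by
    intro i j hij
    rcases hij.lt_or_eq with h | h
    · exact hz.1 i j h
    · rw [h]
  have hspread : ∀ i j : Fin m, z.1 i - z.1 j ≤ m * B := by
    intro i j
    have h1 := hanti ⟨0, hm⟩ i (Fin.le_def.2 (Nat.zero_le _))
    have h2 := abs_le.1 (hx0 j j.2)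
    have h3 : ((j : ℕ) : ℝ) * B ≤ m * B := by
      have : ((j : ℕ) : ℝ) ≤ m := by exact_mod_cast j.2.le
      gcongr
    have : z.1 ⟨(j : ℕ), j.2⟩ = z.1 j := rfl
    rw [this] at h2
    linarith [h2.1, h2.2]
  have hm1 : (1 : ℝ) ≤ m := by exact_mod_cast hm
  have hxb : ∀ j, |z.1 j| ≤ L := by
    intro j
    have h1 : ∑ i, (z.1 j - z.1 i) = m * z.1 j - ∑ i, z.1 i := by
      simp [Finset.sum_sub_distrib]
    have h2 : ∑ i, (z.1 j - z.1 i) ≤ m * (m * B) := by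
      have := Finset.sum_le_sum (fun i (_ : i ∈ Finset.univ) => hspread j i)
      simpa using this
    have h3 : - (m * (m * B)) ≤ ∑ i, (z.1 j - z.1 i) := by
      have := Finset.sum_le_sum (fun i (_ : i ∈ Finset.univ) => hspread i j)
      have h4 : ∑ i, (z.1 i - z.1 j) = - ∑ i, (z.1 j - z.1 i) := by
        rw [← Finset.sum_neg_distrib]
        exact Finset.sum_congr rfl fun i _ => by ring
      rw [h4] at this
      simp only [Finset.sum_const, Finset.card_univ, Fintype.card_fin, nsmul_eq_mul] at this
      linarith
    have h5 := abs_le.1 hn2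
    have h6 : M' ≤ m * M' := by nlinarith
    rw [abs_le, hL]
    constructor
    · by_contra hcon
      push Not at hcon
      have := mul_lt_mul_of_pos_left hcon (by linarith : (0:ℝ) < m)
      nlinarith [h5.1, h5.2]
    · by_contra hcon
      push Not at hcon
      have := mul_lt_mul_of_pos_left hcon (by linarith : (0:ℝ) < m)
      nlinarith [h5.1, h5.2]
  have hbb : ∀ i, |z.2.2 i| ≤ T := by
    intro i
    have h1 : ∃ j : Fin m, ((β i : ℕ) = j ∨ (β i : ℕ) = j + 1) := by
      by_cases h : (β i : ℕ) < m
      · exact ⟨⟨β i, h⟩, Or.inl rfl⟩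
      · exact ⟨⟨m - 1, by omega⟩, Or.inr (by simp only; omega)⟩
    obtain ⟨j, hj⟩ := h1
    have h2 : |z.2.2 i - z.1 j| ≤ B := by
      rcases Nat.mod_two_eq_zero_or_one j with h' | h'
      · exact (hpos (.inl j) (.inr i) ⟨h', hj⟩)
      · rw [abs_sub_comm]
        exact (hpos (.inr i) (.inl j) ⟨h', hj⟩)
    have h3 := abs_le.1 (hxb j)
    have h4 := abs_le.1 h2
    rw [abs_le]
    constructor <;> simp only [T] <;> linarith [h3.1, h3.2, h4.1, h4.2]
  refine ⟨(z.1, (mmG z).1 ⟨0, hm⟩, z.2.2), ?_, ?_⟩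
  · rw [mem_closedBall_zero_iff]
    have hLT : L ≤ T + M' := by simp only [T]; linarith
    refine norm_prod_le_iff.2 ⟨?_, norm_prod_le_iff.2 ⟨?_, ?_⟩⟩
    · exact (pi_norm_le_iff_of_nonneg (by linarith)).2 fun j => (hxb j).trans hLT
    · exact (hn1 _).trans (by linarith)
    · exact (pi_norm_le_iff_of_nonneg (by linarith)).2 fun j => (hbb j).trans (by linarith)
  · simp only [F, mmG]
    ext <;> simp

theorem mm_inverse {m l : ℕ} (hm : 0 < m) (β : Fin l → Fin (m + 1)) :
    ∃ S : mmW (m := m) β → (Fin m → ℝ) × ℝ × (Fin l → ℝ), Continuous S ∧ (∀ w, S w ∈ mmZ β) ∧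
      (∀ w, mmG (S w) = w) ∧ (∀ z (hz : z ∈ mmZ β), S ⟨mmG z, mmG_mapsTo β z hz⟩ = z) := by
  refine mm_global_homeo (mmZ β) (mmW β) (mmZ_open β) (mmW_open β) (mmZ_convex β)
    (mmCone_convex _) (mmZ_nonempty β) mmG mmG_contDiff ?_ (mmG_mapsTo β) (mm_proper hm β)
  intro z hz v hv
  refine mmG_fderiv_inj hm z ?_ ?_ v hv
  · intro i j hij
    rcases lt_trichotomy i j with h | h | h
    · exact absurd hij (hz.1 i j h).ne'
    · exact h
    · exact absurd hij (hz.1 j i h).ne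
  · intro i j
    rcases lt_or_ge (j : ℕ) (β i) with h | h
    · exact ((hz.2 i j).1 h).ne
    · exact ((hz.2 i j).2 h).ne'

noncomputable def mmPoly (m : ℕ) (u : Fin (m + 1 - 2) → ℝ) : ℝ[X] :=
  X ^ (m + 1) + ∑ j : Fin (m + 1 - 2), C (u j) * X ^ (m + 1 - 2 - (j : ℕ))

theorem mmPoly_coeff (m : ℕ) (u : Fin (m + 1 - 2) → ℝ) (e : ℕ) : (mmPoly m u).coeff e =
    (if e = m + 1 then 1 else 0) + ∑ j : Fin (m + 1 - 2),
      (if e = m + 1 - 2 - (j : ℕ) then u j else 0) := by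
  simp [mmPoly, coeff_X_pow]

theorem mmPoly_coeff_zero (m : ℕ) (u : Fin (m + 1 - 2) → ℝ) : (mmPoly m u).coeff 0 = 0 := by
  rw [mmPoly_coeff, if_neg (by omega), Finset.sum_eq_zero, zero_add]
  intro j _
  exact if_neg (by omega)

theorem mmPoly_coeff_big (m : ℕ) (hm : 0 < m) (u : Fin (m + 1 - 2) → ℝ) (e : ℕ) (he : m ≤ e) :
    (mmPoly m u).coeff e = if e = m + 1 then 1 else 0 := by
  rw [mmPoly_coeff, Finset.sum_eq_zero, add_zero]
  intro j _
  exact if_neg (by omega)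

theorem mmPoly_coeff_mid (m : ℕ) (u : Fin (m + 1 - 2) → ℝ) (j : Fin (m + 1 - 2)) :
    (mmPoly m u).coeff (m + 1 - 2 - (j : ℕ)) = u j := by
  rw [mmPoly_coeff, if_neg (by omega), zero_add, Finset.sum_eq_single j]
  · simp
  · intro i _ hij
    refine if_neg ?_
    intro h
    exact hij (Fin.ext (by omega))
  · simp

noncomputable def mmLam {m : ℕ} (x : Fin m → ℝ) : Fin (m + 1 - 2) → ℝ :=
  fun j => (mmP x).coeff (m + 1 - 2 - (j : ℕ))

theorem mmP_coeff_zero {m : ℕ} (x : Fin m → ℝ) : (mmP x).coeff 0 = 0 := by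
  simp [mmP]

theorem mmP_coeff_succ {m : ℕ} (x : Fin m → ℝ) (k : ℕ) :
    (mmP x).coeff (k + 1) = ((m : ℝ) + 1) * (mmQ x).coeff k / ((k : ℝ) + 1) := by
  have h := congrArg (fun r : ℝ[X] => r.coeff k) (mmP_derivative x)
  simp only [coeff_derivative, coeff_C_mul] at h
  have : (k : ℝ) + 1 ≠ 0 := by positivity
  field_simp
  linarith

theorem mmPoly_lam {m : ℕ} (hm : 0 < m) (x : Fin m → ℝ) (hx : ∑ j, x j = 0) :
    mmPoly m (mmLam x) = mmP x := by
  ext e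
  rcases Nat.eq_zero_or_pos e with rfl | he
  · rw [mmPoly_coeff_zero, mmP_coeff_zero]
  rcases lt_or_ge e m with h | h
  · have h1 := mmPoly_coeff_mid m (mmLam x) ⟨m - 1 - e, by omega⟩
    have h2 : m + 1 - 2 - (m - 1 - e) = e := by omega
    simp only [mmLam, h2] at h1
    exact h1
  · rw [mmPoly_coeff_big m hm _ e h]
    obtain ⟨k, rfl⟩ : ∃ k, e = k + 1 := ⟨e - 1, by omega⟩
    rw [mmP_coeff_succ]
    split_ifs with h'
    · obtain rfl : k = m := by omega
      rw [mmQ_coeff_top]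
      have : (k : ℝ) + 1 ≠ 0 := by positivity
      field_simp
    · rcases Nat.lt_or_ge m k with h3 | h3
      · rw [coeff_eq_zero_of_natDegree_lt (by rw [mmQ_natDegree]; exact h3)]
        simp
      · obtain rfl : k = m - 1 := by omega
        rw [mmQ_coeff_pred hm, hx]
        simp

theorem mmQ_eq_of_P {m : ℕ} {x y : Fin m → ℝ} (h : mmP x = mmP y) : mmQ x = mmQ y := by
  have h1 := congrArg derivative h
  rw [mmP_derivative, mmP_derivative] at h1
  refine mul_left_cancel₀ ?_ h1
  rw [Ne, C_eq_zero]
  positivity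

theorem mm_range_sub {m : ℕ} {x y : Fin m → ℝ} (h : mmQ x = mmQ y) (j : Fin m) :
    ∃ i, y i = x j := by
  have h1 : (mmQ y).eval (x j) = 0 := by
    rw [← h, mmQ_eval]
    exact Finset.prod_eq_zero (Finset.mem_univ j) (sub_self _)
  rw [mmQ_eval, Finset.prod_eq_zero_iff] at h1
  obtain ⟨i, _, hi⟩ := h1
  exact ⟨i, by linarith⟩

/-- A sorted tuple with the same polynomial as a strictly sorted one is equal to it. -/
theorem mm_sorted_unique {m : ℕ} {x y : Fin m → ℝ} (h : mmP x = mmP y)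
    (hx : ∀ i j : Fin m, i < j → x j < x i) (hy : ∀ i j : Fin m, i < j → y j ≤ y i) : x = y := by
  have hxa : StrictAnti x := fun i j hij => hx i j hij
  have hQ := mmQ_eq_of_P h
  choose g hg using mm_range_sub hQ
  have hginj : Function.Injective g := by
    intro i j hij
    apply hxa.injective
    rw [← hg, ← hg, hij]
  have hgs : Function.Surjective g := Finite.surjective_of_injective hginj
  have hgm : StrictMono g := by
    intro i j hij
    by_contra hcon
    have h1 : g j < g i := lt_of_le_of_ne (not_lt.1 hcon) (fun h => hij.ne' (hginj h))
    have h2 := hy _ _ h1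
    rw [hg, hg] at h2
    exact absurd (hx i j hij) (not_lt.2 h2)
  have hid : g = id := by
    have := Set.range_eq_univ.2 hgs
    refine (StrictMono.range_inj hgm strictMono_id).1 ?_
    rw [this, Set.range_id]
  funext j
  rw [← hg j, hid]
  rfl

theorem mmPoly_factor {m : ℕ} (hm : 0 < m) (u : Fin (m + 1 - 2) → ℝ)
    (h : (mmPoly m u).derivative.roots.toFinset.card = m) :
    ∃ x : Fin m → ℝ, (∀ i j : Fin m, i < j → x j < x i) ∧ ∑ j, x j = 0 ∧ mmP x = mmPoly m u := by
  set s := (mmPoly m u).derivative.roots.toFinset with hs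
  let f := s.orderEmbOfFin h
  let x : Fin m → ℝ := fun j => f (Fin.rev j)
  have hx : ∀ i j : Fin m, i < j → x j < x i := by
    intro i j hij
    exact f.strictMono (Fin.rev_lt_rev.2 hij)
  have hxa : StrictAnti x := fun i j hij => hx i j hij
  have hroot : ∀ j, (mmPoly m u).derivative.eval (x j) = 0 := by
    intro j
    have : x j ∈ s := s.orderEmbOfFin_mem h _
    rw [hs, Multiset.mem_toFinset] at this
    exact (mem_roots'.1 this).2
  have hD : (mmPoly m u).derivative - C ((m : ℝ) + 1) * mmQ x = 0 := by
    refine eq_zero_of_natDegree_lt_card_of_eval_eq_zero _ hxa.injective ?_ ?_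
    · intro j
      rw [eval_sub, hroot, eval_mul, mmQ_eval,
        Finset.prod_eq_zero (Finset.mem_univ j) (sub_self _)]
      simp
    · have : ((mmPoly m u).derivative - C ((m : ℝ) + 1) * mmQ x).natDegree ≤ m - 1 := by
        rw [natDegree_le_iff_coeff_eq_zero]
        intro N hN
        rw [coeff_sub, coeff_derivative, coeff_C_mul, mmPoly_coeff_big m hm _ _ (by omega)]
        rcases eq_or_lt_of_le (show m ≤ N by omega) with h1 | h1
        · subst h1
          rw [mmQ_coeff_top]; simp
        · rw [coeff_eq_zero_of_natDegree_lt (p := mmQ x) (by rw [mmQ_natDegree]; exact h1)]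
          rw [if_neg (by omega)]
          simp
      simp only [Fintype.card_fin]
      omega
  have hP : mmP x = mmPoly m u := by
    ext e
    rcases Nat.eq_zero_or_pos e with rfl | he
    · rw [mmPoly_coeff_zero, mmP_coeff_zero]
    · obtain ⟨k, rfl⟩ : ∃ k, e = k + 1 := ⟨e - 1, by omega⟩
      rw [mmP_coeff_succ]
      have h1 := congrArg (fun r : ℝ[X] => r.coeff k) hD
      simp only [coeff_sub, coeff_derivative, coeff_C_mul, coeff_zero] at h1
      have : (k : ℝ) + 1 ≠ 0 := by positivity
      field_simp
      linarith
  refine ⟨x, hx, ?_, hP⟩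
  have h1 := mmP_coeff_succ x (m - 1)
  rw [show m - 1 + 1 = m by omega, hP, mmPoly_coeff_big m hm _ _ le_rfl, if_neg (by omega),
    mmQ_coeff_pred hm] at h1
  have h2 : (m : ℝ) + 1 ≠ 0 := by positivity
  have h3 : (((m - 1 : ℕ) : ℝ)) + 1 ≠ 0 := by positivity
  field_simp at h1
  simpa [h2] using h1

theorem mmP_roots {m : ℕ} (x : Fin m → ℝ) :
    (mmP x).derivative.roots.toFinset = Finset.univ.image x := by
  ext t
  have h2 : (m : ℝ) + 1 ≠ 0 := by positivity
  have hne : C ((m : ℝ) + 1) * mmQ x ≠ 0 :=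
    mul_ne_zero (by rwa [Ne, C_eq_zero]) (mmQ_monic x).ne_zero
  rw [Multiset.mem_toFinset, mmP_derivative, mem_roots hne, IsRoot, eval_mul, eval_C, mul_eq_zero,
    mmQ_eval, Finset.prod_eq_zero_iff]
  simp only [h2, false_or, Finset.mem_univ, true_and, Finset.mem_image, sub_eq_zero]
  exact ⟨fun ⟨a, h⟩ => ⟨a, h.symm⟩, fun ⟨a, h⟩ => ⟨a, h.symm⟩⟩

theorem mm_root_bound {m : ℕ} (x : Fin m → ℝ) (j : Fin m) :
    |x j| ≤ 1 + ∑ k ∈ Finset.range m, |(mmQ x).coeff k| := by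
  by_contra hcon
  push Not at hcon
  set t := x j
  set A := ∑ k ∈ Finset.range m, |(mmQ x).coeff k|
  have hA : 0 ≤ A := Finset.sum_nonneg fun _ _ => abs_nonneg _
  have hm : 0 < m := j.pos
  have h0 : (mmQ x).eval t = 0 := by
    rw [mmQ_eval]
    exact Finset.prod_eq_zero (Finset.mem_univ j) (sub_self _)
  rw [eval_eq_sum_range' (n := m + 1) (by rw [mmQ_natDegree]; omega), Finset.sum_range_succ,
    mmQ_coeff_top, one_mul] at h0
  have h1 : |t| ^ m ≤ A * |t| ^ (m - 1) := by
    rw [← abs_pow, show t ^ m = - ∑ k ∈ Finset.range m, (mmQ x).coeff k * t ^ k by linarith,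
      abs_neg, Finset.sum_mul]
    refine (Finset.abs_sum_le_sum_abs _ _).trans (Finset.sum_le_sum fun k hk => ?_)
    rw [abs_mul, abs_pow]
    have : |t| ^ k ≤ |t| ^ (m - 1) :=
      pow_le_pow_right₀ (by linarith) (by have := Finset.mem_range.1 hk; omega)
    gcongr
  have h2 : |t| ^ m = |t| * |t| ^ (m - 1) := by
    rw [← pow_succ', show m - 1 + 1 = m by omega]
  rw [h2] at h1
  have h3 : 0 < |t| ^ (m - 1) := by
    have : 0 < |t| := by linarith
    positivity
  have := le_of_mul_le_mul_right h1 h3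
  linarith

theorem mmLam_cont {m : ℕ} : Continuous (mmLam (m := m)) := by
  rw [continuous_pi_iff]
  intro j
  unfold mmLam
  obtain ⟨k, hk⟩ : ∃ k, m + 1 - 2 - (j : ℕ) = k + 1 := ⟨m + 1 - 2 - (j : ℕ) - 1, by omega⟩
  simp only [hk, mmP_coeff_succ]
  have := (mmQ_coeff_contDiff (m := m) k).continuous
  fun_prop

/-- Strict total orders. -/
def mmSTO {ι : Type*} (r : ι → ι → Prop) : Prop :=
  (∀ a, ¬ r a a) ∧ (∀ a b c, r a b → r b c → r a c) ∧ (∀ a b, a ≠ b → r a b ∨ r b a)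

/-- Combinatorial types. -/
def mmTy (m l : ℕ) : Type :=
  {t : (Fin l → Fin (m + 1)) × (Fin m ⊕ Fin l → Fin m ⊕ Fin l → Prop) //
    mmSTO t.2 ∧ ∀ a b, mmR t.1 a b → t.2 a b}

instance mmTy_finite (m l : ℕ) : Finite (mmTy m l) := by
  unfold mmTy
  infer_instance

def mmRel {m l : ℕ} (q : (Fin (m + 1 - 2) → ℝ) × (Fin l → ℝ)) (τ : mmTy m l) : Prop :=
  ∃ x : Fin m → ℝ, (x, 0, q.2) ∈ mmZ τ.1.1 ∧ ∑ j, x j = 0 ∧ q.1 = mmLam x ∧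
    ∀ a b, τ.1.2 a b ↔ mmval (mmG (x, 0, q.2)) a < mmval (mmG (x, 0, q.2)) b

theorem mmLam_of_poly {m : ℕ} {x : Fin m → ℝ} {u : Fin (m + 1 - 2) → ℝ}
    (h : mmP x = mmPoly m u) : u = mmLam x := by
  funext j
  rw [mmLam, h, mmPoly_coeff_mid]

theorem mmval_zero {m l : ℕ} (x : Fin m → ℝ) (b : Fin l → ℝ) (a : Fin m ⊕ Fin l) :
    mmval (mmG (x, 0, b)) a = (mmP x).eval (mmval (x, (0 : ℝ), b) a) := by
  rw [mm_val_eq]; simp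

theorem mmV_mem {m l : ℕ} (hm : 0 < m) (q : (Fin (m + 1 - 2) → ℝ) × (Fin l → ℝ)) :
    q ∈ V (m + 1) l ↔ ∃ x : Fin m → ℝ, (∀ i j : Fin m, i < j → x j < x i) ∧ ∑ j, x j = 0 ∧
      q.1 = mmLam x ∧ Function.Injective (mmval (mmG (x, 0, q.2))) := by
  constructor
  · intro hq
    obtain ⟨h1, h2, h3, h4⟩ := hq (mmPoly m q.1) rfl
    obtain ⟨x, hx, hs, hP⟩ := mmPoly_factor hm q.1 h1
    refine ⟨x, hx, hs, mmLam_of_poly hP, ?_⟩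
    rw [← hP, mmP_roots] at h2 h3
    rw [← hP] at h4
    have hxi : ∀ i j, i ≠ j → x i ≠ x j := by
      intro i j hij
      rcases lt_or_gt_of_ne hij with h | h
      · exact (hx i j h).ne'
      · exact (hx j i h).ne
    intro a b hab
    rw [mmval_zero, mmval_zero] at hab
    by_contra hne
    rcases a with i | i <;> rcases b with j | j <;>
      simp only [mmval, Sum.elim_inl, Sum.elim_inr] at hab
    · exact h2 (x i) (by simp) (x j) (by simp) (hxi i j (fun h => hne (by rw [h]))) hab
    · exact h3 (x i) (by simp) j hab
    · exact h3 (x j) (by simp) i hab.symm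
    · exact h4 i j (fun h => hne (by rw [h])) hab
  · rintro ⟨x, hx, hs, hu, hinj⟩ p hp
    have hpP : p = mmP x := by
      rw [← mmPoly_lam hm x hs, ← hu]; exact hp
    have hxi : Function.Injective x := by
      have : StrictAnti x := fun i j hij => hx i j hij
      exact this.injective
    have key : ∀ a b, a ≠ b → (mmP x).eval (mmval (x, (0 : ℝ), q.2) a) ≠
        (mmP x).eval (mmval (x, (0 : ℝ), q.2) b) := by
      intro a b hab h
      rw [← mmval_zero, ← mmval_zero] at h
      exact hab (hinj h)
    rw [hpP, mmP_roots]
    refine ⟨?_, ?_, ?_, ?_⟩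
    · rw [Finset.card_image_of_injective _ hxi]; simp
    · intro s hs t ht hst
      obtain ⟨i, -, rfl⟩ := Finset.mem_image.1 hs
      obtain ⟨j, -, rfl⟩ := Finset.mem_image.1 ht
      exact key (.inl i) (.inl j) (fun h => hst (by rw [Sum.inl.inj h]))
    · intro s hs j
      obtain ⟨i, -, rfl⟩ := Finset.mem_image.1 hs
      exact key (.inl i) (.inr j) (by simp)
    · intro i j hij
      exact key (.inr i) (.inr j) (fun h => hij (Sum.inr.inj h))

theorem mmRel_V {m l : ℕ} (hm : 0 < m) (q : (Fin (m + 1 - 2) → ℝ) × (Fin l → ℝ)) (τ : mmTy m l)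
    (h : mmRel q τ) : q ∈ V (m + 1) l := by
  obtain ⟨x, hz, hs, hu, hr⟩ := h
  refine (mmV_mem hm q).2 ⟨x, hz.1, hs, hu, ?_⟩
  intro a b hab
  by_contra hne
  rcases τ.2.1.2.2 a b hne with h | h
  · exact ((hr _ _).1 h).ne hab
  · exact ((hr _ _).1 h).ne' hab

theorem mmRel_exists {m l : ℕ} (hm : 0 < m) (q : (Fin (m + 1 - 2) → ℝ) × (Fin l → ℝ))
    (hq : q ∈ V (m + 1) l) : ∃ τ : mmTy m l, mmRel q τ := by
  obtain ⟨x, hx, hs, hu, hinj⟩ := (mmV_mem hm q).1 hq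
  have hbx : ∀ i j, q.2 i ≠ x j := by
    intro i j h
    have : mmval (mmG (x, 0, q.2)) (.inr i) = mmval (mmG (x, 0, q.2)) (.inl j) := by
      rw [mmval_zero, mmval_zero]; simp [mmval, h]
    exact absurd (hinj this) (by simp)
  have hβ : ∀ i : Fin l, ∃ k : Fin (m + 1), ∀ j : Fin m,
      ((j : ℕ) < k → q.2 i < x j) ∧ ((k : ℕ) ≤ j → x j < q.2 i) := by
    intro i
    classical
    have hex : ∃ k : ℕ, ∀ j : Fin m, k ≤ (j : ℕ) → x j < q.2 i :=
      ⟨m, fun j hj => absurd j.2 (by omega)⟩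
    have hle : Nat.find hex ≤ m := Nat.find_min' hex fun j hj => absurd j.2 (by omega)
    refine ⟨⟨Nat.find hex, by omega⟩, fun j => ⟨fun h => ?_, fun h => Nat.find_spec hex j h⟩⟩
    have h1 : ∃ j' : Fin m, (j : ℕ) ≤ j' ∧ q.2 i < x j' := by
      by_contra hcon
      push Not at hcon
      exact Nat.find_min hex h fun j' hj' => lt_of_le_of_ne (hcon j' hj') (hbx i j').symm
    obtain ⟨j', h2, h3⟩ := h1
    rcases lt_or_eq_of_le h2 with h4 | h4
    · exact h3.trans (hx j j' h4)
    · rw [Fin.ext h4]; exact h3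
  choose β hβ using hβ
  have hz : (x, (0 : ℝ), q.2) ∈ mmZ β := ⟨hx, hβ⟩
  refine ⟨⟨(β, fun a b => mmval (mmG (x, 0, q.2)) a < mmval (mmG (x, 0, q.2)) b),
    ⟨fun a => lt_irrefl _, fun a b c => lt_trans, fun a b hab => ?_⟩, ?_⟩, x, hz, hs, hu, ?_⟩
  · exact lt_or_gt_of_ne fun h => hab (hinj h)
  · exact mmG_mapsTo β _ hz
  · intro a b; rfl

theorem mmRel_unique {m l : ℕ} (hm : 0 < m) (q : (Fin (m + 1 - 2) → ℝ) × (Fin l → ℝ))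
    (τ σ : mmTy m l) (h1 : mmRel q τ) (h2 : mmRel q σ) : τ = σ := by
  obtain ⟨x, hz, hs, hu, hr⟩ := h1
  obtain ⟨y, hz', hs', hu', hr'⟩ := h2
  have hxy : x = y := by
    refine mm_sorted_unique ?_ hz.1 fun i j h => (hz'.1 i j h).le
    rw [← mmPoly_lam hm x hs, ← mmPoly_lam hm y hs', ← hu, ← hu']
  subst hxy
  refine Subtype.ext (Prod.ext ?_ ?_)
  · funext i
    apply Fin.ext
    rcases lt_trichotomy (τ.1.1 i : ℕ) (σ.1.1 i) with h | h | h
    · have h3 := (σ.1.1 i).2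
      exact absurd ((hz.2 i ⟨τ.1.1 i, by omega⟩).2 le_rfl)
        (not_lt.2 ((hz'.2 i ⟨τ.1.1 i, by omega⟩).1 h).le)
    · exact h
    · have h3 := (τ.1.1 i).2
      exact absurd ((hz'.2 i ⟨σ.1.1 i, by omega⟩).2 le_rfl)
        (not_lt.2 ((hz.2 i ⟨σ.1.1 i, by omega⟩).1 h).le)
  · funext a b
    exact propext ((hr a b).trans (hr' a b).symm)

theorem mmRel_conn {m l : ℕ} (hm : 0 < m) (τ : mmTy m l) :
    IsPreconnected {q : (Fin (m + 1 - 2) → ℝ) × (Fin l → ℝ) | mmRel q τ} ∧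
    {q : (Fin (m + 1 - 2) → ℝ) × (Fin l → ℝ) | mmRel q τ}.Nonempty := by
  obtain ⟨S, hSc, hSZ, hGS, hSG⟩ := mm_inverse hm τ.1.1
  let K : Set ((Fin m → ℝ) × ℝ × (Fin l → ℝ)) :=
    {w | w.2.1 = 0} ∩ {w | ∀ a b, τ.1.2 a b → mmval w a < mmval w b}
  have hKconv : Convex ℝ K := by
    refine Convex.inter ?_ (mmCone_convex _)
    intro z hz w hw s t _ _ _
    simp only [Set.mem_setOf_eq] at hz hw ⊢
    simp [hz, hw]
  have hKW : K ⊆ mmW τ.1.1 := fun w hw a b hab => hw.2 a b (τ.2.2 a b hab)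
  have hKpre : IsPreconnected (Subtype.val ⁻¹' K : Set (mmW (m := m) (l := l) τ.1.1)) := by
    refine (Topology.IsInducing.subtypeVal.isPreconnected_image).1 ?_
    rw [Subtype.image_preimage_coe, Set.inter_eq_right.2 hKW]
    exact hKconv.isPreconnected
  let Ψ : (Fin m → ℝ) × ℝ × (Fin l → ℝ) → (Fin (m + 1 - 2) → ℝ) × (Fin l → ℝ) :=
    fun z => (mmLam z.1, z.2.2)
  have hΨ : Continuous Ψ :=
    (mmLam_cont.comp continuous_fst).prodMk (continuous_snd.comp continuous_snd)
  have hcmp : ∀ (z : (Fin m → ℝ) × ℝ × (Fin l → ℝ)) a b,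
      mmval (mmG z) a < mmval (mmG z) b ↔
        mmval (mmG (z.1, 0, z.2.2)) a < mmval (mmG (z.1, 0, z.2.2)) b := by
    intro z a b
    rw [mm_val_eq, mm_val_eq, mm_val_eq, mm_val_eq, add_lt_add_iff_left, add_lt_add_iff_left]
    rfl
  have himg : {q : (Fin (m + 1 - 2) → ℝ) × (Fin l → ℝ) | mmRel q τ} =
      (fun w => Ψ (S w)) '' (Subtype.val ⁻¹' K) := by
    ext q
    constructor
    · rintro ⟨x, hz, hs, hu, hr⟩
      refine ⟨⟨mmG (x, 0, q.2), mmG_mapsTo _ _ hz⟩, ⟨hs, fun a b h => (hr a b).1 h⟩, ?_⟩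
      simp only [hSG _ hz]
      exact Prod.ext hu.symm rfl
    · rintro ⟨w, hw, rfl⟩
      have hG := hGS w
      refine ⟨(S w).1, ?_, ?_, rfl, ?_⟩
      · exact ⟨(hSZ w).1, (hSZ w).2⟩
      · have : (mmG (S w)).2.1 = 0 := by rw [hG]; exact hw.1
        exact this
      · have hfor : ∀ a b, τ.1.2 a b → mmval (mmG ((S w).1, 0, (Ψ (S w)).2)) a <
            mmval (mmG ((S w).1, 0, (Ψ (S w)).2)) b := by
          intro a b h
          refine (hcmp (S w) a b).1 ?_
          rw [hG]
          exact hw.2 a b h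
        intro a b
        refine ⟨hfor a b, fun h => ?_⟩
        by_contra hn
        have hne : a ≠ b := by rintro rfl; exact lt_irrefl _ h
        exact lt_asymm h (hfor b a ((τ.2.1.2.2 a b hne).resolve_left hn))
  rw [himg]
  refine ⟨hKpre.image _ (hΨ.comp hSc).continuousOn, Set.Nonempty.image _ ?_⟩
  classical
  let ρ : Fin m ⊕ Fin l → ℝ := fun a => ((Finset.univ.filter fun c => τ.1.2 c a).card : ℝ)
  have hρ : ∀ a b, τ.1.2 a b → ρ a < ρ b := by
    intro a b h
    simp only [ρ, Nat.cast_lt]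
    refine Finset.card_lt_card (Finset.ssubset_iff_of_subset ?_ |>.2 ⟨a, ?_, ?_⟩)
    · intro c hc
      simp only [Finset.mem_filter, Finset.mem_univ, true_and] at hc ⊢
      exact τ.2.1.2.1 _ _ _ hc h
    · simpa using h
    · simpa using τ.2.1.1 a
  let w : (Fin m → ℝ) × ℝ × (Fin l → ℝ) := (fun i => ρ (.inl i), 0, fun i => ρ (.inr i))
  have hwv : ∀ a, mmval w a = ρ a := by rintro (a | a) <;> rfl
  have hwK : w ∈ K := ⟨rfl, fun a b h => by rw [hwv, hwv]; exact hρ a b h⟩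
  exact ⟨⟨w, hKW hwK⟩, hwK⟩

theorem mmRel_closed {m l : ℕ} (hm : 0 < m) (τ : mmTy m l) :
    IsClosed {q : V (m + 1) l | mmRel q.1 τ} := by
  refine IsSeqClosed.isClosed ?_
  intro qs q hqs hlim
  choose xs hz hs hu hr using hqs
  have hlim' : Filter.Tendsto (fun n => (qs n).1) Filter.atTop (nhds q.1) :=
    (continuous_subtype_val.tendsto q).comp hlim
  have hlim1 : Filter.Tendsto (fun n => (qs n).1.1) Filter.atTop (nhds q.1.1) :=
    (continuous_fst.tendsto _).comp hlim'
  have hlim2 : Filter.Tendsto (fun n => (qs n).1.2) Filter.atTop (nhds q.1.2) :=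
    (continuous_snd.tendsto _).comp hlim'
  let B : (Fin (m + 1 - 2) → ℝ) → ℝ := fun u =>
    1 + ∑ k ∈ Finset.range m, |(mmPoly m u).coeff (k + 1) * ((k : ℝ) + 1) / ((m : ℝ) + 1)|
  have hB : Continuous B := by
    simp only [B, mmPoly_coeff]
    refine continuous_const.add (continuous_finsetSum _ fun k _ => ?_)
    refine (((continuous_const.add (continuous_finsetSum _ fun j _ => ?_)).mul
      continuous_const).div_const _).abs
    split_ifs
    · fun_prop
    · fun_prop
  have hbd : ∀ n j, |xs n j| ≤ B (qs n).1.1 := by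
    intro n j
    refine (mm_root_bound (xs n) j).trans_eq ?_
    simp only [B]
    congr 1
    refine Finset.sum_congr rfl fun k _ => ?_
    rw [hu n, mmPoly_lam hm _ (hs n), mmP_coeff_succ]
    congr 1
    have h1 : (k : ℝ) + 1 ≠ 0 := by positivity
    have h2 : (m : ℝ) + 1 ≠ 0 := by positivity
    field_simp
  obtain ⟨M, hM⟩ := ((hB.tendsto _).comp hlim1).bddAbove_range
  have hmem : ∀ n, xs n ∈ Set.pi Set.univ (fun _ : Fin m => Set.Icc (-M) M) := by
    intro n j _
    have := (hbd n j).trans (hM ⟨n, rfl⟩)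
    exact ⟨by linarith [neg_abs_le (xs n j)], by linarith [le_abs_self (xs n j)]⟩
  obtain ⟨y, -, φ, hφ, hy⟩ :=
    (isCompact_univ_pi fun _ : Fin m => isCompact_Icc (a := -M) (b := M)).tendsto_subseq hmem
  have hlim1' := hlim1.comp hφ.tendsto_atTop
  have hlim2' := hlim2.comp hφ.tendsto_atTop
  have hyz : Filter.Tendsto (fun n => (xs (φ n), (0 : ℝ), (qs (φ n)).1.2)) Filter.atTop
      (nhds (y, (0 : ℝ), q.1.2)) :=
    hy.prodMk_nhds (tendsto_const_nhds.prodMk_nhds hlim2')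
  have hZc : (y, (0 : ℝ), q.1.2) ∈ mmZc τ.1.1 :=
    (mmZc_closed τ.1.1).mem_of_tendsto hyz
      (Filter.Eventually.of_forall fun n => mmZ_sub _ (hz (φ n)))
  have hys : ∑ j, y j = 0 := by
    have h1 : Filter.Tendsto (fun n => ∑ j, xs (φ n) j) Filter.atTop (nhds (∑ j, y j)) :=
      tendsto_finsetSum _ fun j _ => ((continuous_apply j).tendsto y).comp hy
    simp only [hs] at h1
    exact tendsto_nhds_unique h1 tendsto_const_nhds
  have hyu : q.1.1 = mmLam y := by
    have h1 : Filter.Tendsto (fun n => mmLam (xs (φ n))) Filter.atTop (nhds (mmLam y)) :=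
      (mmLam_cont.tendsto y).comp hy
    refine tendsto_nhds_unique hlim1' ?_
    refine h1.congr fun n => ?_
    exact (hu (φ n)).symm
  have hyr : ∀ a b, τ.1.2 a b → mmval (mmG (y, 0, q.1.2)) a ≤ mmval (mmG (y, 0, q.1.2)) b := by
    intro a b hab
    have hc : ∀ a, Filter.Tendsto (fun n => mmval (mmG (xs (φ n), (0 : ℝ), (qs (φ n)).1.2)) a)
        Filter.atTop (nhds (mmval (mmG (y, (0 : ℝ), q.1.2)) a)) := fun a =>
      (((mmval_cont a).comp mmG_contDiff.continuous).tendsto _).comp hyz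
    exact le_of_tendsto_of_tendsto' (hc a) (hc b) fun n => ((hr (φ n) a b).1 hab).le
  obtain ⟨x, hx, hxs, hxu, hinj⟩ := (mmV_mem hm q.1).1 q.2
  have hxy : x = y := by
    refine mm_sorted_unique ?_ hx hZc.1
    rw [← mmPoly_lam hm x hxs, ← mmPoly_lam hm y hys, ← hxu, ← hyu]
  subst hxy
  have hlt : ∀ a b, τ.1.2 a b → mmval (mmG (x, 0, q.1.2)) a < mmval (mmG (x, 0, q.1.2)) b := by
    intro a b hab
    refine lt_of_le_of_ne (hyr a b hab) fun h => ?_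
    have := hinj h
    subst this
    exact τ.2.1.1 _ hab
  refine ⟨x, mmZ_of_closed _ _ hZc fun a b hab => hlt a b (τ.2.2 a b hab), hxs, hxu, ?_⟩
  intro a b
  refine ⟨hlt a b, fun h => ?_⟩
  by_contra hn
  have hne : a ≠ b := by rintro rfl; exact lt_irrefl _ h
  exact lt_asymm h (hlt b a ((τ.2.1.2.2 a b hne).resolve_left hn))

theorem mm_count {m l : ℕ} (hm : 0 < m) :
    Nat.card (ConnectedComponents ↥(V (m + 1) l)) = Nat.card (mmTy m l) := by
  letI : TopologicalSpace (mmTy m l) := ⊥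
  haveI : DiscreteTopology (mmTy m l) := ⟨rfl⟩
  choose f hf using fun q : V (m + 1) l => mmRel_exists hm q.1 q.2
  have hfib : ∀ (q : V (m + 1) l) τ, f q = τ ↔ mmRel q.1 τ := fun q τ =>
    ⟨fun h => h ▸ hf q, fun h => mmRel_unique hm _ _ _ (hf q) h⟩
  have hcont : Continuous f := by
    rw [continuous_iff_isClosed]
    intro s _
    have : f ⁻¹' s = ⋃ τ ∈ s, {q : V (m + 1) l | mmRel q.1 τ} := by
      ext q
      simp only [Set.mem_preimage, Set.mem_iUnion, Set.mem_setOf_eq, ← hfib, exists_prop,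
        exists_eq_right']
    rw [this]
    exact (Set.toFinite s).isClosed_biUnion fun τ _ => mmRel_closed hm τ
  have hpre : ∀ τ, IsPreconnected {q : V (m + 1) l | mmRel q.1 τ} := by
    intro τ
    refine (Topology.IsInducing.subtypeVal.isPreconnected_image).1 ?_
    have : (Subtype.val '' {q : V (m + 1) l | mmRel q.1 τ}) = {q | mmRel q τ} := by
      ext q
      constructor
      · rintro ⟨q, h, rfl⟩; exact h
      · intro h; exact ⟨⟨q, mmRel_V hm q τ h⟩, h, rfl⟩
    rw [this]
    exact (mmRel_conn hm τ).1
  refine Nat.card_congr (Equiv.ofBijective hcont.connectedComponentsLift ⟨?_, ?_⟩)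
  · intro a b
    obtain ⟨p, rfl⟩ := ConnectedComponents.surjective_coe a
    obtain ⟨q, rfl⟩ := ConnectedComponents.surjective_coe b
    intro h
    rw [hcont.connectedComponentsLift_apply_coe, hcont.connectedComponentsLift_apply_coe] at h
    rw [ConnectedComponents.coe_eq_coe']
    exact (hpre (f q)).subset_connectedComponent (x := q) (hf q) ((hfib p (f q)).1 h)
  · intro τ
    obtain ⟨q, hq⟩ := (mmRel_conn hm τ).2
    refine ⟨((⟨q, mmRel_V hm q τ hq⟩ : V (m + 1) l) : ConnectedComponents _), ?_⟩
    rw [hcont.connectedComponentsLift_apply_coe]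
    exact (hfib _ _).2 hq

open Classical in
/-- Integer indicator of a proposition. -/
noncomputable def mmI (p : Prop) : ℤ := if p then 1 else 0

theorem mmI_pos {p : Prop} (h : p) : mmI p = 1 := by simp [mmI, h]

theorem mmI_neg {p : Prop} (h : ¬ p) : mmI p = 0 := by simp [mmI, h]

theorem mmI_sum {α : Type*} [Fintype α] (P : α → Prop) :
    ∑ t, mmI (P t) = (Nat.card {t // P t} : ℤ) := by
  classical
  rw [Nat.card_eq_fintype_card, Fintype.card_subtype, Finset.card_filter]
  push_cast
  refine Finset.sum_congr rfl fun t _ => ?_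
  unfold mmI
  congr

/-- Covering pairs of a relation. -/
def mmCov {ι : Type*} (r : ι → ι → Prop) (a b : ι) : Prop := r a b ∧ ∀ c, ¬ (r a c ∧ r c b)

theorem mmSTO_flip {ι : Type*} {r : ι → ι → Prop} (h : mmSTO r) : mmSTO (fun a b => r b a) :=
  ⟨h.1, fun a b c h1 h2 => h.2.1 c b a h2 h1, fun a b hab => h.2.2 b a hab.symm⟩

theorem mmSTO_pull {ι κ : Type*} {r : ι → ι → Prop} (h : mmSTO r) (f : κ → ι)
    (hf : Function.Injective f) : mmSTO (fun a b => r (f a) (f b)) :=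
  ⟨fun a => h.1 _, fun a b c h1 h2 => h.2.1 _ _ _ h1 h2,
    fun a b hab => h.2.2 _ _ (fun hh => hab (hf hh))⟩

theorem mmSTO_asymm {ι : Type*} {r : ι → ι → Prop} (h : mmSTO r) {a b : ι} (h1 : r a b) :
    ¬ r b a := fun h2 => h.1 a (h.2.1 a b a h1 h2)

theorem mmCov_exists {ι : Type*} [Fintype ι] {r : ι → ι → Prop} (h : mmSTO r) {b : ι}
    (hb : ∃ a, r a b) : ∃ a, mmCov r a b := by
  classical
  obtain ⟨a, ha, hmax⟩ := Finset.exists_max_image (Finset.univ.filter fun a => r a b)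
    (fun a => (Finset.univ.filter fun c => r c a).card)
    (by obtain ⟨a, ha⟩ := hb; exact ⟨a, by simpa using ha⟩)
  refine ⟨a, by simpa using ha, fun c hc => ?_⟩
  have h1 := hmax c (by simpa using hc.2)
  refine absurd h1 (not_le.2 (Finset.card_lt_card
    ((Finset.ssubset_iff_of_subset ?_).2 ⟨a, ?_, ?_⟩)))
  · intro d hd
    simp only [Finset.mem_filter, Finset.mem_univ, true_and] at hd ⊢
    exact h.2.1 _ _ _ hd hc.1
  · simpa using hc.1
  · simpa using h.1 a

theorem mmCov_unique {ι : Type*} {r : ι → ι → Prop} (h : mmSTO r) {a a' b : ι}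
    (h1 : mmCov r a b) (h2 : mmCov r a' b) : a = a' := by
  by_contra hne
  rcases h.2.2 a a' hne with h3 | h3
  · exact h1.2 a' ⟨h3, h2.1⟩
  · exact h2.2 a ⟨h3, h1.1⟩

theorem mmCov_flip {ι : Type*} {r : ι → ι → Prop} {a b : ι} :
    mmCov (fun a b => r b a) a b ↔ mmCov r b a := by
  unfold mmCov
  refine and_congr_right fun _ => forall_congr' fun c => ?_
  rw [and_comm]

theorem mmCov_sum {ι : Type*} [Fintype ι] {r : ι → ι → Prop} (h : mmSTO r) (b : ι) :
    ∑ a, mmI (mmCov r a b) = 1 - mmI (∀ y, ¬ r y b) := by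
  by_cases hb : ∃ a, r a b
  · obtain ⟨a, ha⟩ := mmCov_exists h hb
    rw [Finset.sum_eq_single a, mmI_pos ha, mmI_neg (by push Not; exact hb), sub_zero]
    · intro a' _ hne
      exact mmI_neg fun h' => hne (mmCov_unique h h' ha)
    · simp
  · rw [Finset.sum_eq_zero, mmI_pos (by push Not at hb; exact hb), sub_self]
    intro a _
    exact mmI_neg fun h' => hb ⟨a, h'.1⟩

theorem mm_telescope {ι : Type*} [Fintype ι] {r : ι → ι → Prop} (h : mmSTO r) (s : ι → ℤ) :
    ∑ a, ∑ b, mmI (mmCov r a b) * (s b - s a) =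
      ∑ x, mmI (∀ y, ¬ r x y) * s x - ∑ x, mmI (∀ y, ¬ r y x) * s x := by
  have h1 : ∑ a, ∑ b, mmI (mmCov r a b) * s b = ∑ b, (1 - mmI (∀ y, ¬ r y b)) * s b := by
    rw [Finset.sum_comm]
    refine Finset.sum_congr rfl fun b _ => ?_
    rw [← Finset.sum_mul, mmCov_sum h]
  have h2 : ∑ a, ∑ b, mmI (mmCov r a b) * s a = ∑ a, (1 - mmI (∀ y, ¬ r a y)) * s a := by
    refine Finset.sum_congr rfl fun a _ => ?_
    rw [← Finset.sum_mul, ← mmCov_sum (mmSTO_flip h)]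
    simp only [mmCov_flip]
  simp only [mul_sub, Finset.sum_sub_distrib, h1, h2, sub_mul, one_mul]
  ring

theorem mm_bot_unique {ι : Type*} [Fintype ι] [Nonempty ι] {r : ι → ι → Prop} (h : mmSTO r) :
    ∑ x, mmI (∀ y, ¬ r y x) = 1 := by
  classical
  obtain ⟨a, -, hmin⟩ := Finset.exists_min_image (Finset.univ : Finset ι)
    (fun a => (Finset.univ.filter fun c => r c a).card) Finset.univ_nonempty
  have ha : ∀ y, ¬ r y a := by
    intro y hy
    refine absurd (hmin y (Finset.mem_univ _)) (not_le.2 (Finset.card_lt_card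
      ((Finset.ssubset_iff_of_subset ?_).2 ⟨y, ?_, ?_⟩)))
    · intro d hd
      simp only [Finset.mem_filter, Finset.mem_univ, true_and] at hd ⊢
      exact h.2.1 _ _ _ hd hy
    · simpa using hy
    · simpa using h.1 y
  rw [Finset.sum_eq_single a, mmI_pos ha]
  · intro b _ hne
    refine mmI_neg fun hb => ?_
    rcases h.2.2 a b hne.symm with h1 | h1
    · exact hb _ h1
    · exact ha _ h1
  · simp

/-- The sign attached to an element: minima are negative, maxima positive. -/
def mmS {m l : ℕ} : Fin m ⊕ Fin l → ℤ
  | .inl j => if (j : ℕ) % 2 = 0 then -1 else 1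
  | .inr _ => 0

theorem mm_nbr {m l : ℕ} (hm : 2 ≤ m) (τ : mmTy m l) (j : Fin m) :
    ((j : ℕ) % 2 = 0 → ∃ y, τ.1.2 (.inl j) y) ∧ ((j : ℕ) % 2 = 1 → ∃ y, τ.1.2 y (.inl j)) := by
  have hR := τ.2.2
  constructor
  · intro h
    by_cases h1 : (j : ℕ) + 1 < m
    · exact ⟨.inl ⟨j + 1, h1⟩, hR _ _ ⟨h, Or.inl rfl⟩⟩
    · have := j.2
      exact ⟨.inl ⟨j - 1, by omega⟩, hR _ _ ⟨h, Or.inr (by simp only; omega)⟩⟩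
  · intro h
    exact ⟨.inl ⟨j - 1, by omega⟩, hR _ _ ⟨by simp only; omega, Or.inl (by simp only; omega)⟩⟩

theorem mm_top_sum {m l : ℕ} (hm : 2 ≤ m) (τ : mmTy m l) :
    ∑ x, mmI (∀ y, ¬ τ.1.2 x y) * mmS x = 1 - ∑ i : Fin l, mmI (∀ y, ¬ τ.1.2 (.inr i) y) := by
  haveI : Nonempty (Fin m ⊕ Fin l) := ⟨.inl ⟨0, by omega⟩⟩
  have h1 := mm_bot_unique (mmSTO_flip τ.2.1)
  rw [Fintype.sum_sum_type] at h1 ⊢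
  rw [← h1]
  simp only [mmS, mul_zero, Finset.sum_const_zero, add_zero, add_sub_cancel_right]
  refine Finset.sum_congr rfl fun j _ => ?_
  split_ifs with h
  · obtain ⟨y, hy⟩ := (mm_nbr hm τ j).1 h
    rw [mmI_neg (fun h' => h' y hy)]; simp
  · simp

theorem mm_bot_sum {m l : ℕ} (hm : 2 ≤ m) (τ : mmTy m l) :
    ∑ x, mmI (∀ y, ¬ τ.1.2 y x) * mmS x = -1 + ∑ i : Fin l, mmI (∀ y, ¬ τ.1.2 y (.inr i)) := by
  haveI : Nonempty (Fin m ⊕ Fin l) := ⟨.inl ⟨0, by omega⟩⟩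
  have h1 := mm_bot_unique τ.2.1
  rw [Fintype.sum_sum_type] at h1 ⊢
  rw [← h1]
  simp only [mmS, mul_zero, Finset.sum_const_zero, add_zero, neg_add_rev,
    neg_add_cancel_comm]
  rw [← Finset.sum_neg_distrib]
  refine Finset.sum_congr rfl fun j _ => ?_
  split_ifs with h
  · simp
  · obtain ⟨y, hy⟩ := (mm_nbr hm τ j).2 (by omega)
    rw [mmI_neg (fun h' => h' y hy)]; simp

theorem mm_swap_rel {ι : Type*} [DecidableEq ι] {r : ι → ι → Prop} (h : mmSTO r) {a b x y : ι}
    (hc : mmCov r a b) (hxy : r x y) (hne : ¬ (x = a ∧ y = b)) :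
    r (Equiv.swap a b x) (Equiv.swap a b y) := by
  have hab : a ≠ b := by rintro rfl; exact h.1 _ hc.1
  have hl : ∀ z, z ≠ a → r z b → r z a := by
    intro z hz hzb
    rcases h.2.2 z a hz with h1 | h1
    · exact h1
    · exact absurd ⟨h1, hzb⟩ (hc.2 z)
  have hu : ∀ z, z ≠ b → r a z → r b z := by
    intro z hz hzb
    rcases h.2.2 z b hz with h1 | h1
    · exact absurd ⟨hzb, h1⟩ (hc.2 z)
    · exact h1
  have hxyne : x ≠ y := by rintro rfl; exact h.1 _ hxy
  by_cases hxa : x = a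
  · subst hxa
    rw [Equiv.swap_apply_left, Equiv.swap_apply_of_ne_of_ne hxyne.symm (fun hh => hne ⟨rfl, hh⟩)]
    exact hu y (fun hh => hne ⟨rfl, hh⟩) hxy
  by_cases hxb : x = b
  · subst hxb
    have hya : y ≠ a := by rintro rfl; exact mmSTO_asymm h hxy hc.1
    rw [Equiv.swap_apply_right, Equiv.swap_apply_of_ne_of_ne hya hxyne.symm]
    exact h.2.1 _ _ _ hc.1 hxy
  rw [Equiv.swap_apply_of_ne_of_ne hxa hxb]
  by_cases hya : y = a
  · subst hya
    rw [Equiv.swap_apply_left]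
    exact h.2.1 _ _ _ hxy hc.1
  by_cases hyb : y = b
  · subst hyb
    rw [Equiv.swap_apply_right]
    exact hl x hxa hxy
  rw [Equiv.swap_apply_of_ne_of_ne hya hyb]
  exact hxy

/-- Types in which the covering pair `a, b` may be exchanged. -/
def mmFree {m l : ℕ} (a b : Fin m ⊕ Fin l) (τ : mmTy m l) : Prop :=
  mmCov τ.1.2 a b ∧ ¬ mmR τ.1.1 a b

theorem mm_free_le {m l : ℕ} (a b : Fin m ⊕ Fin l) :
    Nat.card {τ : mmTy m l // mmFree a b τ} ≤ Nat.card {τ : mmTy m l // mmFree b a τ} := by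
  classical
  have key : ∀ τ : mmTy m l, mmFree a b τ → ∀ x y, τ.1.2 x y → ¬ (x = a ∧ y = b) →
      τ.1.2 (Equiv.swap a b x) (Equiv.swap a b y) :=
    fun τ h x y h1 h2 => mm_swap_rel τ.2.1 h.1 h1 h2
  let F : {τ : mmTy m l // mmFree a b τ} → {τ : mmTy m l // mmFree b a τ} := fun t =>
    ⟨⟨(t.1.1.1, fun x y => t.1.1.2 (Equiv.swap a b x) (Equiv.swap a b y)),
      mmSTO_pull t.1.2.1 _ (Equiv.injective _), fun x y hxy => key t.1 t.2 x y (t.1.2.2 x y hxy)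
        (by rintro ⟨rfl, rfl⟩; exact t.2.2 hxy)⟩, by
      refine ⟨⟨?_, ?_⟩, ?_⟩
      · simp only [Equiv.swap_apply_left, Equiv.swap_apply_right]
        exact t.2.1.1
      · intro c
        simp only [Equiv.swap_apply_left, Equiv.swap_apply_right]
        exact t.2.1.2 _
      · intro hR
        exact mmSTO_asymm t.1.2.1 t.2.1.1 (t.1.2.2 _ _ hR)⟩
  refine Nat.card_le_card_of_injective F ?_
  intro s t hst
  have h1 := congrArg (fun u => u.1.1) hst
  have h2 := congrArg Prod.fst h1
  have h3 := congrArg Prod.snd h1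
  refine Subtype.ext (Subtype.ext (Prod.ext h2 ?_))
  funext x y
  have h4 := congrFun (congrFun h3 (Equiv.swap a b x)) (Equiv.swap a b y)
  simpa [F] using h4

noncomputable instance mmTy_fintype (m l : ℕ) : Fintype (mmTy m l) := Fintype.ofFinite _

theorem mm_free_sum {m l : ℕ} :
    ∑ τ : mmTy m l, ∑ a, ∑ b, mmI (mmFree a b τ) * (mmS b - mmS a) = 0 := by
  have h1 : ∑ τ : mmTy m l, ∑ a, ∑ b, mmI (mmFree a b τ) * (mmS b - mmS a) =
      ∑ a : Fin m ⊕ Fin l, ∑ b : Fin m ⊕ Fin l,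
        (Nat.card {τ : mmTy m l // mmFree a b τ} : ℤ) * (mmS b - mmS a) := by
    rw [Finset.sum_comm]
    refine Finset.sum_congr rfl fun a _ => ?_
    rw [Finset.sum_comm]
    refine Finset.sum_congr rfl fun b _ => ?_
    rw [← Finset.sum_mul, mmI_sum]
  have h2 : ∑ a : Fin m ⊕ Fin l, ∑ b : Fin m ⊕ Fin l,
        (Nat.card {τ : mmTy m l // mmFree a b τ} : ℤ) * (mmS b - mmS a) =
      - ∑ a : Fin m ⊕ Fin l, ∑ b : Fin m ⊕ Fin l,
        (Nat.card {τ : mmTy m l // mmFree a b τ} : ℤ) * (mmS b - mmS a) := by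
    conv_lhs => rw [Finset.sum_comm]
    rw [← Finset.sum_neg_distrib]
    refine Finset.sum_congr rfl fun a _ => ?_
    rw [← Finset.sum_neg_distrib]
    refine Finset.sum_congr rfl fun b _ => ?_
    rw [le_antisymm (mm_free_le a b) (mm_free_le b a)]
    ring
  rw [h1]
  linarith

abbrev mmEnd (m : ℕ) : Type := (Fin m × Bool) ⊕ Bool

/-- The branch of an end. -/
def mmBrn {m : ℕ} : mmEnd m → ℕ
  | .inl (j, false) => j
  | .inl (j, true) => j + 1
  | .inr false => 0
  | .inr true => m

/-- The down-closed set of an end. -/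
def mmD {m l : ℕ} (r : Fin m ⊕ Fin l → Fin m ⊕ Fin l → Prop) : mmEnd m → Fin m ⊕ Fin l → Prop
  | .inl (j, _), x => ((j : ℕ) % 2 = 0 ∧ x = .inl j) ∨ r x (.inl j)
  | .inr false, _ => True
  | .inr true, _ => m % 2 = 1

def mmAdj {m l : ℕ} (i : Fin l) (e : mmEnd m) (τ : mmTy m l) : Prop :=
  (τ.1.1 i : ℕ) = mmBrn e ∧ ∀ x, x ≠ .inr i → (τ.1.2 x (.inr i) ↔ mmD τ.1.2 e x)

theorem mmD_down {m l : ℕ} {r : Fin m ⊕ Fin l → Fin m ⊕ Fin l → Prop} (h : mmSTO r) (e : mmEnd m)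
    (x y : Fin m ⊕ Fin l) (hxy : r x y) (hy : mmD r e y) : mmD r e x := by
  rcases e with ⟨j, δ⟩ | δ
  · rcases hy with ⟨_, rfl⟩ | hy
    · exact Or.inr hxy
    · exact Or.inr (h.2.1 _ _ _ hxy hy)
  · cases δ <;> exact hy

def mmOpt {J : Type*} (r : J → J → Prop) (D : J → Prop) : Option J → Option J → Prop
  | some a, some b => r a b
  | some a, none => D a
  | none, some b => ¬ D b
  | none, none => False

theorem mmOpt_STO {J : Type*} {r : J → J → Prop} {D : J → Prop} (h : mmSTO r)
    (hD : ∀ x y, r x y → D y → D x) : mmSTO (mmOpt r D) := by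
  refine ⟨?_, ?_, ?_⟩
  · rintro (_ | a)
    · exact id
    · exact h.1 a
  · rintro (_ | a) (_ | b) (_ | c) h1 h2 <;> simp only [mmOpt] at h1 h2 ⊢
    · exact h1 h2
    · exact fun hc => h1 (hD _ _ h2 hc)
    · by_contra hn
      by_cases hac : a = c
      · subst hac; exact h2 h1
      · exact h2 (hD _ _ ((h.2.2 a c hac).resolve_left hn) h1)
    · exact hD _ _ h1 h2
    · exact h.2.1 _ _ _ h1 h2
  · rintro (_ | a) (_ | b) hab <;> simp only [mmOpt]
    · exact absurd rfl hab
    · exact (em (D b)).symm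
    · exact em (D a)
    · exact h.2.2 _ _ (fun hh => hab (by rw [hh]))

def mmIota {m l : ℕ} (i : Fin (l + 1)) : Fin m ⊕ Fin l → Fin m ⊕ Fin (l + 1) :=
  Sum.map id i.succAbove

theorem mmIota_inj {m l : ℕ} (i : Fin (l + 1)) : Function.Injective (mmIota (m := m) i) :=
  Sum.map_injective.2 ⟨Function.injective_id, Fin.succAbove_right_injective⟩

theorem mmIota_ne {m l : ℕ} (i : Fin (l + 1)) (a : Fin m ⊕ Fin l) : mmIota i a ≠ .inr i := by
  rcases a with a | a
  · simp [mmIota]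
  · simp [mmIota, Fin.succAbove_ne]

theorem mmIota_cases {m l : ℕ} (i : Fin (l + 1)) (x : Fin m ⊕ Fin (l + 1)) :
    x = .inr i ∨ ∃ a, mmIota i a = x := by
  rcases x with j | k
  · exact Or.inr ⟨.inl j, rfl⟩
  · by_cases h : k = i
    · exact Or.inl (by rw [h])
    · obtain ⟨z, hz⟩ := Fin.exists_succAbove_eq h
      exact Or.inr ⟨.inr z, by simp [mmIota, hz]⟩

theorem mmR_iota {m l : ℕ} (i : Fin (l + 1)) (β : Fin (l + 1) → Fin (m + 1))
    (a b : Fin m ⊕ Fin l) :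
    mmR β (mmIota i a) (mmIota i b) ↔ mmR (fun k => β (i.succAbove k)) a b := by
  rcases a with a | a <;> rcases b with b | b <;> exact Iff.rfl

theorem mmD_iota {m l : ℕ} (i : Fin (l + 1)) (r : Fin m ⊕ Fin (l + 1) → Fin m ⊕ Fin (l + 1) → Prop)
    (e : mmEnd m) (a : Fin m ⊕ Fin l) :
    mmD r e (mmIota i a) ↔ mmD (fun x y => r (mmIota i x) (mmIota i y)) e a := by
  rcases e with ⟨j, δ⟩ | δ
  · simp only [mmD]
    have : mmIota i a = .inl j ↔ a = .inl j := by
      rw [show (Sum.inl j : Fin m ⊕ Fin (l + 1)) = mmIota i (.inl j) from rfl,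
        (mmIota_inj i).eq_iff]
    rw [this]
    exact Iff.rfl
  · cases δ <;> exact Iff.rfl

theorem mm_ins_inj {m l : ℕ} (i : Fin (l + 1)) (e : mmEnd m) (s t : mmTy m (l + 1))
    (hs : mmAdj i e s) (ht : mmAdj i e t)
    (hβ : ∀ k, s.1.1 (i.succAbove k) = t.1.1 (i.succAbove k))
    (hr : ∀ a b, s.1.2 (mmIota i a) (mmIota i b) ↔ t.1.2 (mmIota i a) (mmIota i b)) : s = t := by
  have hD : ∀ a, s.1.2 (mmIota i a) (.inr i) ↔ t.1.2 (mmIota i a) (.inr i) := by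
    intro a
    rw [hs.2 _ (mmIota_ne i a), ht.2 _ (mmIota_ne i a), mmD_iota, mmD_iota]
    simp only [hr]
  have hD' : ∀ (u : mmTy m (l + 1)) a, u.1.2 (.inr i) (mmIota i a) ↔
      ¬ u.1.2 (mmIota i a) (.inr i) := by
    intro u a
    refine ⟨fun h => mmSTO_asymm u.2.1 h, fun h => ?_⟩
    exact (u.2.1.2.2 _ _ (mmIota_ne i a)).resolve_left h
  refine Subtype.ext (Prod.ext ?_ ?_)
  · funext k
    by_cases h : k = i
    · rw [h]; exact Fin.ext (hs.1.trans ht.1.symm)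
    · obtain ⟨z, rfl⟩ := Fin.exists_succAbove_eq h
      exact hβ z
  · funext x y
    refine propext ?_
    rcases mmIota_cases i x with rfl | ⟨a, rfl⟩ <;> rcases mmIota_cases i y with rfl | ⟨b, rfl⟩
    · exact ⟨fun h => absurd h (s.2.1.1 _), fun h => absurd h (t.2.1.1 _)⟩
    · rw [hD', hD', hD]
    · exact hD a
    · exact hr a b

theorem mmD_compat {m l : ℕ} (σ : mmTy m l) (e : mmEnd m) (j : Fin m)
    (hj : mmBrn e = j ∨ mmBrn e = j + 1) :
    ((j : ℕ) % 2 = 0 → mmD σ.1.2 e (.inl j)) ∧ ((j : ℕ) % 2 = 1 → ¬ mmD σ.1.2 e (.inl j)) := by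
  have hjm := j.2
  rcases e with ⟨j0, δ⟩ | δ
  · have hk : mmBrn (.inl (j0, δ) : mmEnd m) = j0 ∨ mmBrn (.inl (j0, δ) : mmEnd m) = j0 + 1 := by
      cases δ <;> simp [mmBrn]
    simp only [mmD]
    constructor
    · intro h0
      by_cases h1 : j = j0
      · subst h1; exact Or.inl ⟨h0, rfl⟩
      · have h1' : (j : ℕ) ≠ j0 := fun h => h1 (Fin.ext h)
        exact Or.inr (σ.2.2 _ _ ⟨h0, by omega⟩)
    · intro h0 h2
      by_cases h1 : j = j0
      · subst h1
        rcases h2 with h2 | h2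
        · omega
        · exact σ.2.1.1 _ h2
      · have h1' : (j : ℕ) ≠ j0 := fun h => h1 (Fin.ext h)
        rcases h2 with h2 | h2
        · exact h1 (Sum.inl.inj h2.2)
        · exact mmSTO_asymm σ.2.1 h2 (σ.2.2 (.inl j0) (.inl j) ⟨by omega, by omega⟩)
  · cases δ
    · simp only [mmBrn] at hj
      exact ⟨fun _ => trivial, fun h => by omega⟩
    · simp only [mmBrn] at hj
      simp only [mmD]
      exact ⟨fun _ => by omega, fun h => by omega⟩

theorem mmBrn_lt {m : ℕ} (e : mmEnd m) : mmBrn e < m + 1 := by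
  rcases e with ⟨j, δ⟩ | δ
  · have := j.2
    cases δ <;> simp only [mmBrn] <;> omega
  · cases δ <;> simp only [mmBrn] <;> omega

theorem mm_ins_surj {m l : ℕ} (i : Fin (l + 1)) (e : mmEnd m) (σ : mmTy m l) :
    ∃ τ : mmTy m (l + 1), mmAdj i e τ ∧ (∀ k, τ.1.1 (i.succAbove k) = σ.1.1 k) ∧
      ∀ a b, τ.1.2 (mmIota i a) (mmIota i b) ↔ σ.1.2 a b := by
  classical
  let ρ : Fin m ⊕ Fin (l + 1) → Option (Fin m ⊕ Fin l) := fun x =>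
    if h : ∃ a, mmIota i a = x then some h.choose else none
  have hρ1 : ∀ a, ρ (mmIota i a) = some a := by
    intro a
    have h : ∃ b, mmIota (m := m) i b = mmIota i a := ⟨a, rfl⟩
    simp only [ρ, dif_pos h]
    rw [mmIota_inj i h.choose_spec]
  have hρ2 : ρ (.inr i) = none := by
    simp only [ρ]
    rw [dif_neg]
    rintro ⟨a, ha⟩
    exact mmIota_ne i a ha
  have hρinj : Function.Injective ρ := by
    intro x y hxy
    rcases mmIota_cases i x with rfl | ⟨a, rfl⟩ <;> rcases mmIota_cases i y with rfl | ⟨b, rfl⟩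
    · rfl
    · simp [hρ1, hρ2] at hxy
    · simp [hρ1, hρ2] at hxy
    · rw [hρ1, hρ1] at hxy; rw [Option.some.inj hxy]
  let r : Fin m ⊕ Fin (l + 1) → Fin m ⊕ Fin (l + 1) → Prop :=
    fun x y => mmOpt σ.1.2 (mmD σ.1.2 e) (ρ x) (ρ y)
  let β : Fin (l + 1) → Fin (m + 1) := i.insertNth ⟨mmBrn e, mmBrn_lt e⟩ σ.1.1
  have hβi : (β i : ℕ) = mmBrn e := by simp [β]
  have hβs : ∀ k, β (i.succAbove k) = σ.1.1 k := by intro k; simp [β]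
  have hr11 : ∀ a b, r (mmIota i a) (mmIota i b) ↔ σ.1.2 a b := by
    intro a b; simp only [r, hρ1]; exact Iff.rfl
  have hr10 : ∀ a, r (mmIota i a) (.inr i) ↔ mmD σ.1.2 e a := by
    intro a; simp only [r, hρ1, hρ2]; exact Iff.rfl
  have hr01 : ∀ a, r (.inr i) (mmIota i a) ↔ ¬ mmD σ.1.2 e a := by
    intro a; simp only [r, hρ1, hρ2]; exact Iff.rfl
  have hsto : mmSTO r := mmSTO_pull (mmOpt_STO σ.2.1 (mmD_down σ.2.1 e)) ρ hρinj
  have hR : ∀ x y, mmR β x y → r x y := by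
    intro x y hxy
    rcases mmIota_cases i x with rfl | ⟨a, rfl⟩ <;> rcases mmIota_cases i y with rfl | ⟨b, rfl⟩
    · exact absurd hxy id
    · rw [hr01]
      rcases b with j | k
      · have h2 : (j : ℕ) % 2 = 1 ∧ ((β i : ℕ) = j ∨ (β i : ℕ) = j + 1) := hxy
        rw [hβi] at h2
        exact (mmD_compat σ e j h2.2).2 h2.1
      · exact absurd hxy id
    · rw [hr10]
      rcases a with j | k
      · have h2 : (j : ℕ) % 2 = 0 ∧ ((β i : ℕ) = j ∨ (β i : ℕ) = j + 1) := hxy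
        rw [hβi] at h2
        exact (mmD_compat σ e j h2.2).1 h2.1
      · exact absurd hxy id
    · rw [hr11]
      rw [mmR_iota] at hxy
      simp only [hβs] at hxy
      exact σ.2.2 _ _ hxy
  refine ⟨⟨(β, r), hsto, hR⟩, ⟨hβi, ?_⟩, hβs, hr11⟩
  intro x hx
  rcases mmIota_cases i x with rfl | ⟨a, rfl⟩
  · exact absurd rfl hx
  · simp only
    rw [hr10, mmD_iota]
    simp only [hr11]

theorem mm_ins_card {m l : ℕ} (i : Fin (l + 1)) (e : mmEnd m) :
    Nat.card {τ : mmTy m (l + 1) // mmAdj i e τ} = Nat.card (mmTy m l) := by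
  let F : {τ : mmTy m (l + 1) // mmAdj i e τ} → mmTy m l := fun t =>
    ⟨(fun k => t.1.1.1 (i.succAbove k), fun a b => t.1.1.2 (mmIota i a) (mmIota i b)),
      mmSTO_pull t.1.2.1 _ (mmIota_inj i), fun a b h => t.1.2.2 _ _ ((mmR_iota i _ a b).2 h)⟩
  refine Nat.card_congr (Equiv.ofBijective F ⟨?_, ?_⟩)
  · intro s t h
    have h1 := congrArg Subtype.val h
    have h2 := congrArg Prod.fst h1
    have h3 := congrArg Prod.snd h1
    exact Subtype.ext (mm_ins_inj i e s.1 t.1 s.2 t.2 (fun k => congrFun h2 k)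
      fun a b => iff_of_eq (congrFun (congrFun h3 a) b))
  · intro σ
    obtain ⟨τ, h1, h2, h3⟩ := mm_ins_surj i e σ
    refine ⟨⟨τ, h1⟩, Subtype.ext (Prod.ext (funext h2) ?_)⟩
    funext a b
    exact propext (h3 a b)

theorem mm_adj_crit {m l : ℕ} (i : Fin l) (τ : mmTy m l) (j : Fin m) :
    mmI (mmAdj i (.inl (j, false)) τ) + mmI (mmAdj i (.inl (j, true)) τ) =
      mmI (mmCov τ.1.2 (.inl j) (.inr i) ∧ mmR τ.1.1 (.inl j) (.inr i)) +
      mmI (mmCov τ.1.2 (.inr i) (.inl j) ∧ mmR τ.1.1 (.inr i) (.inl j)) := by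
  have hS := τ.2.1
  have h0 : (j : ℕ) % 2 = 0 → ((∀ x, x ≠ .inr i → (τ.1.2 x (.inr i) ↔
      (((j : ℕ) % 2 = 0 ∧ x = .inl j) ∨ τ.1.2 x (.inl j)))) ↔
      mmCov τ.1.2 (.inl j) (.inr i)) := by
    intro hj
    constructor
    · intro h
      refine ⟨(h (.inl j) (by simp)).2 (Or.inl ⟨hj, rfl⟩), fun c hc => ?_⟩
      have hci : c ≠ .inr i := by rintro rfl; exact hS.1 _ hc.2
      rcases (h c hci).1 hc.2 with ⟨_, rfl⟩ | h1
      · exact hS.1 _ hc.1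
      · exact mmSTO_asymm hS h1 hc.1
    · intro h x hx
      constructor
      · intro h1
        by_cases hxj : x = .inl j
        · exact Or.inl ⟨hj, hxj⟩
        · exact Or.inr ((hS.2.2 x _ hxj).resolve_right fun h2 => h.2 x ⟨h2, h1⟩)
      · rintro (⟨_, rfl⟩ | h1)
        · exact h.1
        · exact hS.2.1 _ _ _ h1 h.1
  have h1 : (j : ℕ) % 2 = 1 → ((∀ x, x ≠ .inr i → (τ.1.2 x (.inr i) ↔
      (((j : ℕ) % 2 = 0 ∧ x = .inl j) ∨ τ.1.2 x (.inl j)))) ↔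
      mmCov τ.1.2 (.inr i) (.inl j)) := by
    intro hj
    have hj' : ¬ (j : ℕ) % 2 = 0 := by omega
    simp only [hj', false_and, false_or]
    constructor
    · intro h
      refine ⟨(hS.2.2 _ _ (by simp)).resolve_right fun h1 =>
        hS.1 _ ((h (.inl j) (by simp)).1 h1), fun c hc => ?_⟩
      have hci : c ≠ .inr i := by rintro rfl; exact hS.1 _ hc.1
      exact mmSTO_asymm hS ((h c hci).2 hc.2) hc.1
    · intro h x hx
      constructor
      · intro h1
        exact hS.2.1 _ _ _ h1 h.1
      · intro h1
        exact (hS.2.2 x _ hx).resolve_right fun h2 => h.2 x ⟨h2, h1⟩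
  simp only [mmAdj, mmBrn, mmD, mmR]
  rcases Nat.mod_two_eq_zero_or_one j with hj | hj
  · simp only [h0 hj]
    simp only [hj, true_and, zero_ne_one, false_and, and_false, mmI_neg not_false]
    by_cases ha : (τ.1.1 i : ℕ) = j
    · have hb : ¬ (τ.1.1 i : ℕ) = j + 1 := by omega
      simp [ha, mmI_neg]
    · simp [ha, mmI_neg, and_comm]
  · simp only [h1 hj]
    simp only [hj, true_and, one_ne_zero, false_and, and_false, mmI_neg not_false]
    by_cases ha : (τ.1.1 i : ℕ) = j
    · have hb : ¬ (τ.1.1 i : ℕ) = j + 1 := by omega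
      simp [ha, mmI_neg]
    · simp [ha, mmI_neg, and_comm]

theorem mm_adj_inf {m l : ℕ} (hm : 0 < m) (i : Fin l) (τ : mmTy m l) :
    mmI (mmAdj i (.inr false) τ) + mmI (mmAdj i (.inr true) τ) =
      mmI (∀ y, ¬ τ.1.2 (.inr i) y) + mmI (∀ y, ¬ τ.1.2 y (.inr i)) := by
  have hS := τ.2.1
  have htop : (∀ x, x ≠ .inr i → (τ.1.2 x (.inr i) ↔ True)) ↔ ∀ y, ¬ τ.1.2 (.inr i) y := by
    constructor
    · intro h y hy
      by_cases hyi : y = .inr i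
      · subst hyi; exact hS.1 _ hy
      · exact mmSTO_asymm hS hy ((h y hyi).2 trivial)
    · intro h x hx
      exact ⟨fun _ => trivial, fun _ => (hS.2.2 x _ hx).resolve_right (h x)⟩
  have hbot : (∀ x, x ≠ .inr i → (τ.1.2 x (.inr i) ↔ False)) ↔ ∀ y, ¬ τ.1.2 y (.inr i) := by
    constructor
    · intro h y hy
      by_cases hyi : y = .inr i
      · subst hyi; exact hS.1 _ hy
      · exact (h y hyi).1 hy
    · intro h x _
      exact ⟨fun h1 => h x h1, fun h1 => h1.elim⟩
  have hb := (τ.1.1 i).2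
  -- away from the two extreme branches there are neighbours on both sides
  have hup : ∀ j : Fin m, (j : ℕ) % 2 = 1 → ((τ.1.1 i : ℕ) = j ∨ (τ.1.1 i : ℕ) = j + 1) →
      ¬ ∀ y, ¬ τ.1.2 (.inr i) y := fun j h1 h2 h3 => h3 _ (τ.2.2 (.inr i) (.inl j) ⟨h1, h2⟩)
  have hdn : ∀ j : Fin m, (j : ℕ) % 2 = 0 → ((τ.1.1 i : ℕ) = j ∨ (τ.1.1 i : ℕ) = j + 1) →
      ¬ ∀ y, ¬ τ.1.2 y (.inr i) := fun j h1 h2 h3 => h3 _ (τ.2.2 (.inl j) (.inr i) ⟨h1, h2⟩)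
  simp only [mmAdj, mmBrn, mmD]
  rw [htop]
  by_cases h0 : (τ.1.1 i : ℕ) = 0
  · rw [mmI_neg (hdn ⟨0, hm⟩ rfl (Or.inl h0)),
      mmI_neg (p := (τ.1.1 i : ℕ) = m ∧ _) (fun h => by omega)]
    simp [h0]
  by_cases h1 : (τ.1.1 i : ℕ) = m
  · rw [mmI_neg (p := (τ.1.1 i : ℕ) = 0 ∧ _) (fun h => h0 h.1)]
    rcases Nat.mod_two_eq_zero_or_one m with hp | hp
    · have hp' : ¬ m % 2 = 1 := by omega
      rw [mmI_neg (hup ⟨m - 1, by omega⟩ (by simp only; omega) (Or.inr (by simp only; omega)))]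
      simp only [hp', h1, true_and, hbot]
    · rw [mmI_neg (hdn ⟨m - 1, by omega⟩ (by simp only; omega) (Or.inr (by simp only; omega)))]
      have : (m % 2 = 1) = True := eq_true hp
      simp only [this, h1, true_and, htop]
      ring
  · rw [mmI_neg (p := (τ.1.1 i : ℕ) = 0 ∧ _) (fun h => h0 h.1),
      mmI_neg (p := (τ.1.1 i : ℕ) = m ∧ _) (fun h => h1 h.1)]
    rcases Nat.mod_two_eq_zero_or_one (τ.1.1 i : ℕ) with hp | hp
    · rw [mmI_neg (hdn ⟨τ.1.1 i, by omega⟩ (by simp only; omega) (Or.inl rfl)),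
        mmI_neg (hup ⟨(τ.1.1 i : ℕ) - 1, by omega⟩ (by simp only; omega)
          (Or.inr (by simp only; omega)))]
    · rw [mmI_neg (hup ⟨τ.1.1 i, by omega⟩ (by simp only; omega) (Or.inl rfl)),
        mmI_neg (hdn ⟨(τ.1.1 i : ℕ) - 1, by omega⟩ (by simp only; omega)
          (Or.inr (by simp only; omega)))]

theorem mm_adj_sum {m l : ℕ} (hm : 0 < m) (i : Fin l) (τ : mmTy m l) :
    ∑ e : mmEnd m, mmI (mmAdj i e τ) =
      ∑ j : Fin m, (mmI (mmCov τ.1.2 (.inl j) (.inr i) ∧ mmR τ.1.1 (.inl j) (.inr i)) +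
      mmI (mmCov τ.1.2 (.inr i) (.inl j) ∧ mmR τ.1.1 (.inr i) (.inl j))) +
      (mmI (∀ y, ¬ τ.1.2 (.inr i) y) + mmI (∀ y, ¬ τ.1.2 y (.inr i))) := by
  rw [Fintype.sum_sum_type, Fintype.sum_prod_type]
  simp only [Fintype.sum_bool]
  rw [← mm_adj_inf hm, add_comm (mmI (mmAdj i (.inr true) τ))]
  congr 1
  refine Finset.sum_congr rfl fun j _ => ?_
  rw [← mm_adj_crit, add_comm]

/-- Validity with respect to a parity shift. -/
def mmVal (ε : ℕ) {m l : ℕ} (β : Fin l → Fin (m + 1))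
    (r : Fin m ⊕ Fin l → Fin m ⊕ Fin l → Prop) : Prop :=
  (∀ j j' : Fin m, (j' : ℕ) = j + 1 → (((j : ℕ) + ε) % 2 = 0 → r (.inl j) (.inl j')) ∧
    (((j : ℕ) + ε) % 2 = 1 → r (.inl j') (.inl j))) ∧
  (∀ (i : Fin l) (j : Fin m), ((β i : ℕ) = j ∨ (β i : ℕ) = j + 1) →
    (((j : ℕ) + ε) % 2 = 0 → r (.inl j) (.inr i)) ∧
    (((j : ℕ) + ε) % 2 = 1 → r (.inr i) (.inl j)))

def mmFlip (ε : ℕ) {ι : Type*} (r : ι → ι → Prop) : ι → ι → Prop :=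
  fun a b => (ε % 2 = 0 ∧ r a b) ∨ (ε % 2 = 1 ∧ r b a)

theorem mmFlip_even {ε : ℕ} (h : ε % 2 = 0) {ι : Type*} (r : ι → ι → Prop) : mmFlip ε r = r := by
  funext a b
  simp [mmFlip, h]

theorem mmFlip_odd {ε : ℕ} (h : ε % 2 = 1) {ι : Type*} (r : ι → ι → Prop) :
    mmFlip ε r = fun a b => r b a := by
  funext a b
  simp [mmFlip, h]

theorem mmFlip_flip (ε : ℕ) {ι : Type*} (r : ι → ι → Prop) : mmFlip ε (mmFlip ε r) = r := by
  rcases Nat.mod_two_eq_zero_or_one ε with h | h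
  · rw [mmFlip_even h, mmFlip_even h]
  · rw [mmFlip_odd h, mmFlip_odd h]

theorem mmFlip_STO (ε : ℕ) {ι : Type*} {r : ι → ι → Prop} (hr : mmSTO r) : mmSTO (mmFlip ε r) := by
  rcases Nat.mod_two_eq_zero_or_one ε with h | h
  · rwa [mmFlip_even h]
  · rw [mmFlip_odd h]; exact mmSTO_flip hr

theorem mmVal_iff (ε : ℕ) {m l : ℕ} (β : Fin l → Fin (m + 1))
    (r : Fin m ⊕ Fin l → Fin m ⊕ Fin l → Prop) :
    (∀ a b, mmR β a b → r a b) ↔ mmVal ε β (mmFlip ε r) := by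
  constructor
  · intro h
    constructor
    · intro j j' hj
      rcases Nat.mod_two_eq_zero_or_one ε with he | he
      · rw [mmFlip_even he]
        exact ⟨fun h1 => h (.inl j) (.inl j') ⟨by omega, by omega⟩,
          fun h1 => h (.inl j') (.inl j) ⟨by omega, by omega⟩⟩
      · rw [mmFlip_odd he]
        exact ⟨fun h1 => h (.inl j') (.inl j) ⟨by omega, by omega⟩,
          fun h1 => h (.inl j) (.inl j') ⟨by omega, by omega⟩⟩
    · intro i j hj
      rcases Nat.mod_two_eq_zero_or_one ε with he | he
      · rw [mmFlip_even he]
        exact ⟨fun h1 => h (.inl j) (.inr i) ⟨by omega, hj⟩,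
          fun h1 => h (.inr i) (.inl j) ⟨by omega, hj⟩⟩
      · rw [mmFlip_odd he]
        exact ⟨fun h1 => h (.inr i) (.inl j) ⟨by omega, hj⟩,
          fun h1 => h (.inl j) (.inr i) ⟨by omega, hj⟩⟩
  · rintro ⟨h1, h2⟩ a b hab
    rcases Nat.mod_two_eq_zero_or_one ε with he | he
    · rw [mmFlip_even he] at h1 h2
      rcases a with j | i <;> rcases b with j' | i'
      · obtain ⟨h3, h4 | h4⟩ := hab
        · exact (h1 j j' h4).1 (by omega)
        · exact (h1 j' j h4).2 (by omega)
      · exact (h2 i' j hab.2).1 (by have := hab.1; omega)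
      · exact (h2 i j' hab.2).2 (by have := hab.1; omega)
      · exact hab.elim
    · rw [mmFlip_odd he] at h1 h2
      rcases a with j | i <;> rcases b with j' | i'
      · obtain ⟨h3, h4 | h4⟩ := hab
        · exact (h1 j j' h4).2 (by omega)
        · exact (h1 j' j h4).1 (by omega)
      · exact (h2 i' j hab.2).2 (by have := hab.1; omega)
      · exact (h2 i j' hab.2).1 (by have := hab.1; omega)
      · exact hab.elim

/-- Re-insertion of the collapsed pair: the lower element. -/
def mmZeta {m l : ℕ} (p : Fin (m + 1)) : Fin m ⊕ Fin (l + 1) → Fin (m + 2) ⊕ Fin l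
  | .inl j => if (j : ℕ) < p then .inl ⟨j, by omega⟩ else .inl ⟨j + 2, by omega⟩
  | .inr k => Fin.cases (motive := fun _ => Fin (m + 2) ⊕ Fin l) (.inl ⟨p, by omega⟩) Sum.inr k

def mmH {m l : ℕ} (p : Fin (m + 1)) : Fin (m + 2) ⊕ Fin l := .inl ⟨p + 1, by omega⟩

theorem mmZeta_lt {m l : ℕ} (p : Fin (m + 1)) (j : Fin m) (h : (j : ℕ) < p) :
    mmZeta (l := l) p (.inl j) = .inl ⟨j, by omega⟩ := by
  simp [mmZeta, h]

theorem mmZeta_ge {m l : ℕ} (p : Fin (m + 1)) (j : Fin m) (h : (p : ℕ) ≤ j) :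
    mmZeta (l := l) p (.inl j) = .inl ⟨j + 2, by omega⟩ := by
  simp [mmZeta, not_lt.2 h]

theorem mmZeta_zero {m l : ℕ} (p : Fin (m + 1)) :
    mmZeta (m := m) (l := l) p (.inr 0) = .inl ⟨p, by omega⟩ := rfl

theorem mmZeta_succ {m l : ℕ} (p : Fin (m + 1)) (i : Fin l) :
    mmZeta (m := m) p (.inr i.succ) = .inr i := rfl

theorem mmZeta_cases {m l : ℕ} (p : Fin (m + 1)) (x : Fin (m + 2) ⊕ Fin l) :
    x = mmH p ∨ ∃ a, mmZeta p a = x := by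
  rcases x with j | i
  · have hj := j.2
    rcases lt_trichotomy (j : ℕ) p with h | h | h
    · exact Or.inr ⟨.inl ⟨j, by omega⟩, mmZeta_lt p _ h⟩
    · refine Or.inr ⟨.inr 0, ?_⟩
      rw [mmZeta_zero]
      exact congrArg _ (Fin.ext h.symm)
    · by_cases h1 : (j : ℕ) = p + 1
      · exact Or.inl (congrArg _ (Fin.ext h1))
      · refine Or.inr ⟨.inl ⟨j - 2, by omega⟩, ?_⟩
        rw [mmZeta_ge p _ (by simp only; omega)]
        exact congrArg _ (Fin.ext (by simp only; omega))
  · exact Or.inr ⟨.inr i.succ, rfl⟩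

theorem mmZeta_ne {m l : ℕ} (p : Fin (m + 1)) (a : Fin m ⊕ Fin (l + 1)) :
    mmZeta p a ≠ mmH p := by
  rcases a with j | k
  · rcases lt_or_ge (j : ℕ) p with h | h
    · rw [mmZeta_lt p j h]
      intro hh
      have := congrArg Fin.val (Sum.inl.inj hh)
      simp only at this
      omega
    · rw [mmZeta_ge p j h]
      intro hh
      have := congrArg Fin.val (Sum.inl.inj hh)
      simp only at this
      omega
  · refine Fin.cases ?_ (fun i => ?_) k
    · rw [mmZeta_zero]
      intro hh
      have := congrArg Fin.val (Sum.inl.inj hh)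
      simp only at this
      omega
    · rw [mmZeta_succ]
      exact Sum.inr_ne_inl

/-- A left inverse of `mmZeta`. -/
def mmKap {m l : ℕ} (p : Fin (m + 1)) : Fin (m + 2) ⊕ Fin l → ℕ ⊕ Fin l
  | .inl j => .inl j
  | .inr i => .inr i

theorem mmZeta_inj {m l : ℕ} (p : Fin (m + 1)) : Function.Injective (mmZeta (m := m) (l := l) p) := by
  intro a b hab
  have hL : ∀ j : Fin m, ∃ k : Fin (m + 2), mmZeta (l := l) p (.inl j) = .inl k ∧
      (((j : ℕ) < p ∧ (k : ℕ) = j) ∨ ((p : ℕ) ≤ j ∧ (k : ℕ) = j + 2)) := by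
    intro j
    rcases lt_or_ge (j : ℕ) p with h | h
    · exact ⟨_, mmZeta_lt p j h, Or.inl ⟨h, rfl⟩⟩
    · exact ⟨_, mmZeta_ge p j h, Or.inr ⟨h, rfl⟩⟩
  rcases a with j | k
  · obtain ⟨u, hu, hu'⟩ := hL j
    rw [hu] at hab
    rcases b with j' | k'
    · obtain ⟨v, hv, hv'⟩ := hL j'
      rw [hv] at hab
      have := congrArg Fin.val (Sum.inl.inj hab)
      exact congrArg _ (Fin.ext (by omega))
    · induction k' using Fin.cases with
      | zero =>
        rw [mmZeta_zero] at hab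
        have := congrArg Fin.val (Sum.inl.inj hab)
        simp only at this
        omega
      | succ i => rw [mmZeta_succ] at hab; exact absurd hab Sum.inl_ne_inr
  · induction k using Fin.cases with
    | zero =>
      rcases b with j' | k'
      · obtain ⟨v, hv, hv'⟩ := hL j'
        rw [hv, mmZeta_zero] at hab
        have := congrArg Fin.val (Sum.inl.inj hab)
        simp only at this
        omega
      · induction k' using Fin.cases with
        | zero => rfl
        | succ i => rw [mmZeta_succ] at hab; exact absurd hab Sum.inl_ne_inr
    | succ i =>
      rcases b with j' | k'
      · obtain ⟨v, hv, hv'⟩ := hL j'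
        rw [hv] at hab
        exact absurd hab Sum.inr_ne_inl
      · induction k' using Fin.cases with
        | zero => exact absurd hab Sum.inr_ne_inl
        | succ i' =>
          rw [mmZeta_succ, mmZeta_succ] at hab
          rw [Sum.inr.inj hab]

/-- Types with the pair `p, p+1` adjacent (up to orientation). -/
def mmAset (m l : ℕ) (p : Fin (m + 1)) : Set ((Fin l → Fin (m + 2 + 1)) ×
    (Fin (m + 2) ⊕ Fin l → Fin (m + 2) ⊕ Fin l → Prop)) :=
  {t | mmSTO t.2 ∧ mmVal p t.1 t.2 ∧ mmCov t.2 (mmZeta p (.inr 0)) (mmH p)}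

def mmBset (m l : ℕ) (p : Fin (m + 1)) : Set ((Fin (l + 1) → Fin (m + 1)) ×
    (Fin m ⊕ Fin (l + 1) → Fin m ⊕ Fin (l + 1) → Prop)) :=
  {t | mmSTO t.2 ∧ mmVal p t.1 t.2 ∧ t.1 0 = p}

/-- Collapse of branch numbers. -/
def mmGam {m : ℕ} (p : Fin (m + 1)) (k : Fin (m + 2 + 1)) : Fin (m + 1) :=
  if h : (k : ℕ) ≤ p then ⟨k, by omega⟩ else if h' : (k : ℕ) ≤ p + 2 then p else ⟨k - 2, by omega⟩

theorem mmGam_cases {m : ℕ} (p : Fin (m + 1)) (k : Fin (m + 2 + 1)) :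
    ((k : ℕ) ≤ p ∧ (mmGam p k : ℕ) = k) ∨
    ((p : ℕ) < k ∧ (k : ℕ) ≤ p + 2 ∧ (mmGam p k : ℕ) = p) ∨
    ((p : ℕ) + 2 < k ∧ (mmGam p k : ℕ) = k - 2) := by
  unfold mmGam
  split_ifs with h h'
  · exact Or.inl ⟨h, rfl⟩
  · exact Or.inr (Or.inl ⟨by omega, h', rfl⟩)
  · exact Or.inr (Or.inr ⟨by omega, rfl⟩)

/-- Basic facts for elements of `mmAset`. -/
theorem mmA_facts {m l : ℕ} {p : Fin (m + 1)} {t} (ht : t ∈ mmAset m l p) :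
    (∀ x, x ≠ mmZeta p (.inr 0) → t.2 x (mmH p) → t.2 x (mmZeta p (.inr 0))) ∧
    (∀ j : Fin m, (j : ℕ) + 1 = p → t.2 (mmZeta p (.inr 0)) (mmZeta p (.inl j))) ∧
    (∀ j : Fin m, (j : ℕ) = p → t.2 (mmZeta p (.inl j)) (mmZeta p (.inr 0))) ∧
    (∀ i, (t.1 i : ℕ) = p → t.2 (mmZeta p (.inr 0)) (.inr i)) ∧
    (∀ i, (t.1 i : ℕ) = p + 2 → t.2 (.inr i) (mmZeta p (.inr 0))) ∧
    (∀ i, (t.1 i : ℕ) ≠ p + 1) := by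
  obtain ⟨hS, ⟨h1, h2⟩, hc⟩ := ht
  have hlow : ∀ x, x ≠ mmZeta p (.inr 0) → t.2 x (mmH p) → t.2 x (mmZeta p (.inr 0)) := by
    intro x hx hxh
    exact (hS.2.2 _ _ hx).resolve_right fun h => hc.2 x ⟨h, hxh⟩
  refine ⟨hlow, ?_, ?_, ?_, ?_, ?_⟩
  · intro j hj
    rw [mmZeta_lt p j (by omega)]
    exact (h1 ⟨j, by omega⟩ ⟨p, by omega⟩ hj.symm).2 (by simp only; omega)
  · intro j hj
    refine hlow _ ?_ ?_
    · exact fun h => absurd (mmZeta_inj p h) Sum.inl_ne_inr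
    · rw [mmZeta_ge p j (by omega)]
      exact (h1 ⟨p + 1, by omega⟩ ⟨j + 2, by omega⟩ (by simp only; omega)).2 (by simp only; omega)
  · intro i hi
    exact (h2 i ⟨p, by omega⟩ (Or.inl hi)).1 (by simp only; omega)
  · intro i hi
    refine hlow _ ?_ ?_
    · exact fun h => absurd h Sum.inr_ne_inl
    · exact (h2 i ⟨p + 1, by omega⟩ (Or.inr hi)).2 (by simp only; omega)
  · intro i hi
    refine hc.2 (.inr i) ⟨?_, ?_⟩
    · exact (h2 i ⟨p, by omega⟩ (Or.inr hi)).1 (by simp only; omega)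
    · exact (h2 i ⟨p + 1, by omega⟩ (Or.inl hi)).2 (by simp only; omega)

theorem mm_collapse {m l : ℕ} {p : Fin (m + 1)} {t} (ht : t ∈ mmAset m l p) :
    ((Fin.cons p (fun i => mmGam p (t.1 i)) : Fin (l + 1) → Fin (m + 1)),
      fun a b => t.2 (mmZeta p a) (mmZeta p b)) ∈ mmBset m l p := by
  obtain ⟨hlow, F1, F2, F3, F4, F5⟩ := mmA_facts ht
  obtain ⟨hS, ⟨h1, h2⟩, hc⟩ := ht
  refine ⟨mmSTO_pull hS _ (mmZeta_inj p), ⟨?_, ?_⟩, rfl⟩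
  · intro j j' hj
    simp only
    rcases lt_trichotomy (j' : ℕ) p with h | h | h
    · rw [mmZeta_lt p j (by omega), mmZeta_lt p j' h]
      exact h1 ⟨j, by omega⟩ ⟨j', by omega⟩ hj
    · refine ⟨fun h' => by omega, fun _ => ?_⟩
      exact hS.2.1 _ _ _ (F2 j' h) (F1 j (by omega))
    · rw [mmZeta_ge p j (by omega), mmZeta_ge p j' (by omega)]
      have := h1 ⟨j + 2, by omega⟩ ⟨j' + 2, by omega⟩ (by simp only; omega)
      exact ⟨fun h' => this.1 (by simp only; omega), fun h' => this.2 (by simp only; omega)⟩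
  · intro i j
    induction i using Fin.cases with
    | zero =>
      simp only [Fin.cons_zero]
      rintro (h | h)
      · exact ⟨fun _ => F2 j h.symm, fun h' => by omega⟩
      · exact ⟨fun h' => by omega, fun _ => F1 j h.symm⟩
    | succ i =>
      simp only [Fin.cons_succ, mmZeta_succ]
      intro hj
      have h5 := F5 i
      rcases mmGam_cases p (t.1 i) with ⟨h3, h4⟩ | ⟨h3, h3', h4⟩ | ⟨h3, h4⟩
      · rcases lt_or_ge (j : ℕ) p with h | h
        · rw [mmZeta_lt p j h]
          exact h2 i ⟨j, by omega⟩ (by simp only; omega)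
        · refine ⟨fun _ => ?_, fun h' => by omega⟩
          exact hS.2.1 _ _ _ (F2 j (by omega)) (F3 i (by omega))
      · rcases lt_or_ge (j : ℕ) p with h | h
        · refine ⟨fun h' => by omega, fun _ => ?_⟩
          exact hS.2.1 _ _ _ (F4 i (by omega)) (F1 j (by omega))
        · rw [mmZeta_ge p j h]
          refine ⟨fun _ => ?_, fun h' => by omega⟩
          exact (h2 i ⟨j + 2, by omega⟩ (by simp only; omega)).1 (by simp only; omega)
      · rw [mmZeta_ge p j (by omega)]
        have := h2 i ⟨j + 2, by omega⟩ (by simp only; omega)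
        exact ⟨fun h' => this.1 (by simp only; omega), fun h' => this.2 (by simp only; omega)⟩

theorem mm_collapse_inj {m l : ℕ} {p : Fin (m + 1)} {s t} (hs : s ∈ mmAset m l p)
    (ht : t ∈ mmAset m l p) (hβ : ∀ i, mmGam p (s.1 i) = mmGam p (t.1 i))
    (hr : ∀ a b, s.2 (mmZeta p a) (mmZeta p b) ↔ t.2 (mmZeta p a) (mmZeta p b)) : s = t := by
  have hD : ∀ u ∈ mmAset m l p, ∀ a, u.2 (mmZeta p a) (mmH p) ↔
      a = .inr 0 ∨ u.2 (mmZeta p a) (mmZeta p (.inr 0)) := by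
    intro u hu a
    constructor
    · intro h
      by_cases ha : a = .inr 0
      · exact Or.inl ha
      · exact Or.inr ((mmA_facts hu).1 _ (fun h' => ha (mmZeta_inj p h')) h)
    · rintro (rfl | h)
      · exact hu.2.2.1
      · exact hu.1.2.1 _ _ _ h hu.2.2.1
  have hD' : ∀ u ∈ mmAset m l p, ∀ a, u.2 (mmH p) (mmZeta p a) ↔
      ¬ u.2 (mmZeta p a) (mmH p) := by
    intro u hu a
    refine ⟨fun h => mmSTO_asymm hu.1 h, fun h => ?_⟩
    exact (hu.1.2.2 _ _ (mmZeta_ne p a)).resolve_left h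
  refine Prod.ext ?_ ?_
  · funext i
    have hsi := mmGam_cases p (s.1 i)
    have hti := mmGam_cases p (t.1 i)
    rw [hβ i] at hsi
    obtain ⟨-, -, -, S3, S4, S5⟩ := mmA_facts hs
    obtain ⟨-, -, -, T3, T4, T5⟩ := mmA_facts ht
    have S5 := S5 i
    have T5 := T5 i
    have hA : ¬ ((s.1 i : ℕ) = p ∧ (t.1 i : ℕ) = p + 2) := by
      rintro ⟨h1, h2⟩
      exact mmSTO_asymm ht.1 ((hr (.inr 0) (.inr i.succ)).1 (S3 i h1)) (T4 i h2)
    have hB : ¬ ((t.1 i : ℕ) = p ∧ (s.1 i : ℕ) = p + 2) := by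
      rintro ⟨h1, h2⟩
      exact mmSTO_asymm hs.1 ((hr (.inr 0) (.inr i.succ)).2 (T3 i h1)) (S4 i h2)
    apply Fin.ext
    omega
  · funext x y
    refine propext ?_
    rcases mmZeta_cases p x with rfl | ⟨a, rfl⟩ <;> rcases mmZeta_cases p y with rfl | ⟨b, rfl⟩
    · exact ⟨fun h => absurd h (hs.1.1 _), fun h => absurd h (ht.1.1 _)⟩
    · rw [hD' s hs, hD' t ht, hD s hs, hD t ht, hr]
    · rw [hD s hs, hD t ht, hr]
    · exact hr a b

open Classical in
/-- Expansion of branch numbers. -/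
noncomputable def mmDel {m : ℕ} (p k : Fin (m + 1)) (c : Prop) : Fin (m + 2 + 1) :=
  if (k : ℕ) < p then ⟨k, by omega⟩ else if (p : ℕ) < k then ⟨k + 2, by omega⟩ else
    if c then ⟨p, by omega⟩ else ⟨p + 2, by omega⟩

theorem mmDel_cases {m : ℕ} (p k : Fin (m + 1)) (c : Prop) :
    ((k : ℕ) < p ∧ (mmDel p k c : ℕ) = k) ∨ ((p : ℕ) < k ∧ (mmDel p k c : ℕ) = k + 2) ∨
    ((k : ℕ) = p ∧ c ∧ (mmDel p k c : ℕ) = p) ∨ ((k : ℕ) = p ∧ ¬ c ∧ (mmDel p k c : ℕ) = p + 2) := by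
  unfold mmDel
  split_ifs with h1 h2 h3
  · exact Or.inl ⟨h1, rfl⟩
  · exact Or.inr (Or.inl ⟨h2, rfl⟩)
  · exact Or.inr (Or.inr (Or.inl ⟨by omega, h3, rfl⟩))
  · exact Or.inr (Or.inr (Or.inr ⟨by omega, h3, rfl⟩))

theorem mm_expand {m l : ℕ} {p : Fin (m + 1)} {σ} (hσ : σ ∈ mmBset m l p) :
    ∃ t ∈ mmAset m l p, (∀ i, mmGam p (t.1 i) = σ.1 i.succ) ∧
      ∀ a b, t.2 (mmZeta p a) (mmZeta p b) ↔ σ.2 a b := by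
  classical
  obtain ⟨hS, ⟨h1, h2⟩, h0⟩ := hσ
  have h0' : (σ.1 0 : ℕ) = p := by rw [h0]
  let ρ : Fin (m + 2) ⊕ Fin l → Option (Fin m ⊕ Fin (l + 1)) := fun x =>
    if h : ∃ a, mmZeta p a = x then some h.choose else none
  have hρ1 : ∀ a, ρ (mmZeta p a) = some a := by
    intro a
    have h : ∃ b, mmZeta (m := m) (l := l) p b = mmZeta p a := ⟨a, rfl⟩
    simp only [ρ, dif_pos h]
    rw [mmZeta_inj p h.choose_spec]
  have hρ2 : ρ (mmH p) = none := by
    simp only [ρ]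
    rw [dif_neg]
    rintro ⟨a, ha⟩
    exact mmZeta_ne p a ha
  have hρinj : Function.Injective ρ := by
    intro x y hxy
    rcases mmZeta_cases p x with rfl | ⟨a, rfl⟩ <;> rcases mmZeta_cases p y with rfl | ⟨b, rfl⟩
    · rfl
    · simp [hρ1, hρ2] at hxy
    · simp [hρ1, hρ2] at hxy
    · rw [hρ1, hρ1] at hxy; rw [Option.some.inj hxy]
  let D : Fin m ⊕ Fin (l + 1) → Prop := fun a => a = .inr 0 ∨ σ.2 a (.inr 0)
  have hD : ∀ x y, σ.2 x y → D y → D x := by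
    rintro x y hxy (rfl | hy)
    · exact Or.inr hxy
    · exact Or.inr (hS.2.1 _ _ _ hxy hy)
  let r : Fin (m + 2) ⊕ Fin l → Fin (m + 2) ⊕ Fin l → Prop :=
    fun x y => mmOpt σ.2 D (ρ x) (ρ y)
  have hr11 : ∀ a b, r (mmZeta p a) (mmZeta p b) ↔ σ.2 a b := by
    intro a b; simp only [r, hρ1]; exact Iff.rfl
  have hr10 : ∀ a, r (mmZeta p a) (mmH p) ↔ D a := by
    intro a; simp only [r, hρ1, hρ2]; exact Iff.rfl
  have hsto : mmSTO r := mmSTO_pull (mmOpt_STO hS hD) ρ hρinj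
  let β : Fin l → Fin (m + 2 + 1) := fun i =>
    mmDel p (σ.1 i.succ) (σ.2 (.inr 0) (.inr i.succ))
  have hβ : ∀ i, ((σ.1 i.succ : ℕ) < p ∧ (β i : ℕ) = σ.1 i.succ) ∨
      ((p : ℕ) < σ.1 i.succ ∧ (β i : ℕ) = σ.1 i.succ + 2) ∨
      ((σ.1 i.succ : ℕ) = p ∧ σ.2 (.inr 0) (.inr i.succ) ∧ (β i : ℕ) = p) ∨
      ((σ.1 i.succ : ℕ) = p ∧ ¬ σ.2 (.inr 0) (.inr i.succ) ∧ (β i : ℕ) = p + 2) :=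
    fun i => mmDel_cases p (σ.1 i.succ) (σ.2 (.inr 0) (.inr i.succ))
  -- translations of the elements
  have eL : ∀ j : Fin (m + 2), ∀ h : (j : ℕ) < p,
      (Sum.inl j : Fin (m + 2) ⊕ Fin l) = mmZeta p (.inl ⟨j, by omega⟩) := by
    intro j h
    rw [mmZeta_lt p _ h]
  have eR : ∀ j : Fin (m + 2), ∀ h : (p : ℕ) + 2 ≤ j,
      (Sum.inl j : Fin (m + 2) ⊕ Fin l) = mmZeta p (.inl ⟨j - 2, by omega⟩) := by
    intro j h
    rw [mmZeta_ge p _ (by simp only; omega)]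
    exact congrArg _ (Fin.ext (by simp only; omega))
  have eP : ∀ j : Fin (m + 2), (j : ℕ) = p →
      (Sum.inl j : Fin (m + 2) ⊕ Fin l) = mmZeta p (.inr 0) := by
    intro j h
    rw [mmZeta_zero]
    exact congrArg _ (Fin.ext h)
  have eH : ∀ j : Fin (m + 2), (j : ℕ) = p + 1 →
      (Sum.inl j : Fin (m + 2) ⊕ Fin l) = mmH p := by
    intro j h
    exact congrArg _ (Fin.ext h)
  have eB : ∀ i : Fin l, (Sum.inr i : Fin (m + 2) ⊕ Fin l) = mmZeta p (.inr i.succ) :=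
    fun i => rfl
  have hval : mmVal p β r := by
    constructor
    · intro j j' hj
      have hj2 := j'.2
      rcases lt_trichotomy (j : ℕ) p with h | h | h
      · rw [eL j h]
        by_cases h' : (j' : ℕ) = p
        · rw [eP j' h', hr11, hr11]
          exact h2 0 ⟨j, by omega⟩ (by simp only; omega)
            |> fun H => ⟨fun hh => H.1 hh, fun hh => H.2 hh⟩
        · rw [eL j' (by omega), hr11, hr11]
          exact h1 ⟨j, by omega⟩ ⟨j', by omega⟩ hj
      · rw [eP j h, eH j' (by omega), hr10]
        exact ⟨fun _ => Or.inl rfl, fun hh => by omega⟩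
      · rw [eR j' (by omega)]
        by_cases h' : (j : ℕ) = p + 1
        · rw [eH j h', hr10]
          refine ⟨fun hh => by omega, fun _ => Or.inr ?_⟩
          exact (h2 0 ⟨j' - 2, by omega⟩ (by simp only; omega)).1 (by simp only; omega)
        · rw [eR j (by omega), hr11, hr11]
          have := h1 ⟨j - 2, by omega⟩ ⟨j' - 2, by omega⟩ (by simp only; omega)
          exact ⟨fun hh => this.1 (by simp only; omega), fun hh => this.2 (by simp only; omega)⟩
    · intro i j hj
      have hj2 := j.2
      rw [eB i]
      rcases hβ i with ⟨h3, h4⟩ | ⟨h3, h4⟩ | ⟨h3, h5, h4⟩ | ⟨h3, h5, h4⟩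
      · rw [eL j (by omega), hr11, hr11]
        exact h2 i.succ ⟨j, by omega⟩ (by simp only; omega)
      · rw [eR j (by omega), hr11, hr11]
        have := h2 i.succ ⟨j - 2, by omega⟩ (by simp only; omega)
        exact ⟨fun hh => this.1 (by simp only; omega), fun hh => this.2 (by simp only; omega)⟩
      · rcases hj with hj | hj
        · rw [eP j (by omega), hr11]
          exact ⟨fun _ => h5, fun hh => by omega⟩
        · rw [eL j (by omega), hr11, hr11]
          exact h2 i.succ ⟨j, by omega⟩ (by simp only; omega)
      · rcases hj with hj | hj
        · rw [eR j (by omega), hr11, hr11]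
          have := h2 i.succ ⟨j - 2, by omega⟩ (by simp only; omega)
          exact ⟨fun hh => this.1 (by simp only; omega), fun hh => this.2 (by simp only; omega)⟩
        · rw [eH j (by omega), hr10]
          refine ⟨fun hh => by omega, fun _ => Or.inr ?_⟩
          exact (hS.2.2 _ _ (by simp [Fin.ext_iff])).resolve_left h5
  refine ⟨(β, r), ⟨hsto, hval, (hr10 _).2 (Or.inl rfl), ?_⟩, ?_, hr11⟩
  · rintro c ⟨hc1, hc2⟩
    rcases mmZeta_cases p c with rfl | ⟨a, rfl⟩
    · exact hsto.1 _ hc2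
    · simp only at hc1 hc2
      rw [hr11] at hc1
      rw [hr10] at hc2
      rcases hc2 with rfl | hc2
      · exact hS.1 _ hc1
      · exact mmSTO_asymm hS hc1 hc2
  · intro i
    have := hβ i
    have := mmGam_cases p (β i)
    apply Fin.ext
    simp only
    omega

theorem mm_collapse_card (m l : ℕ) (p : Fin (m + 1)) :
    Nat.card (mmAset m l p) = Nat.card (mmBset m l p) := by
  refine Nat.card_congr (Equiv.ofBijective (fun t => ⟨_, mm_collapse t.2⟩) ⟨?_, ?_⟩)
  · intro s t h
    have h1 := congrArg Subtype.val h
    have h2 := congrArg Prod.fst h1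
    have h3 := congrArg Prod.snd h1
    refine Subtype.ext (mm_collapse_inj s.2 t.2 (fun i => ?_)
      fun a b => iff_of_eq (congrFun (congrFun h3 a) b))
    have := congrFun h2 i.succ
    simpa using this
  · intro σ
    obtain ⟨t, ht, hβ, hr⟩ := mm_expand σ.2
    refine ⟨⟨t, ht⟩, Subtype.ext (Prod.ext ?_ ?_)⟩
    · funext i
      induction i using Fin.cases with
      | zero => exact σ.2.2.2.symm
      | succ i => simpa using hβ i
    · funext a b
      exact propext (hr a b)


theorem mm_adjsum {K : ℕ} (f : Fin (K + 1) → Fin (K + 1) → ℤ)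
    (hf : ∀ j j' : Fin (K + 1), ¬ ((j' : ℕ) = j + 1 ∨ (j : ℕ) = j' + 1) → f j j' = 0) :
    ∑ j, ∑ j', f j j' = ∑ p : Fin K, (f p.castSucc p.succ + f p.succ p.castSucc) := by
  have h1 : ∀ j j' : Fin (K + 1), f j j' =
      ∑ p : Fin K, ((if j = p.castSucc then (if j' = p.succ then f j j' else 0) else 0) +
        (if j = p.succ then (if j' = p.castSucc then f j j' else 0) else 0)) := by
    intro j j'
    by_cases h : (j' : ℕ) = j + 1
    · have hj := j'.2
      have e1 : j = (⟨j, by omega⟩ : Fin K).castSucc := rfl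
      have e2 : j' = (⟨j, by omega⟩ : Fin K).succ := Fin.ext h
      rw [Finset.sum_eq_single (⟨j, by omega⟩ : Fin K)]
      · rw [if_pos e1, if_pos e2, if_neg, add_zero]
        intro h3
        have := congrArg Fin.val h3
        simp at this
      · intro q _ hq
        have h7 : ¬ j = q.castSucc := by
          intro h3
          apply hq
          have h4 := congrArg Fin.val h3
          exact Fin.ext h4.symm
        rw [if_neg h7, zero_add]
        split_ifs with h3 h5
        · have h4 := congrArg Fin.val h3
          have h6 := congrArg Fin.val h5
          simp only [Fin.val_succ, Fin.val_castSucc] at h4 h6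
          omega
        · rfl
        · rfl
      · simp
    · by_cases h' : (j : ℕ) = j' + 1
      · have hj := j.2
        have e1 : j' = (⟨j', by omega⟩ : Fin K).castSucc := rfl
        have e2 : j = (⟨j', by omega⟩ : Fin K).succ := Fin.ext h'
        rw [Finset.sum_eq_single (⟨j', by omega⟩ : Fin K)]
        · rw [if_pos e1, if_pos e2, if_neg, zero_add]
          intro h3
          have := congrArg Fin.val h3
          simp at this
          omega
        · intro q _ hq
          have h7 : ¬ j' = q.castSucc := by
            intro h3
            apply hq
            have h4 := congrArg Fin.val h3
            exact Fin.ext h4.symm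
          rw [if_neg h7, ite_self, add_zero]
          split_ifs with h3 h5
          · have h4 := congrArg Fin.val h3
            have h6 := congrArg Fin.val h5
            simp only [Fin.val_succ, Fin.val_castSucc] at h4 h6
            omega
          · rfl
          · rfl
        · simp
      · rw [hf j j' (by omega)]
        simp
  calc ∑ j, ∑ j', f j j' = ∑ j, ∑ j', ∑ p : Fin K,
      ((if j = p.castSucc then (if j' = p.succ then f j j' else 0) else 0) +
        (if j = p.succ then (if j' = p.castSucc then f j j' else 0) else 0)) :=
        Finset.sum_congr rfl fun j _ => Finset.sum_congr rfl fun j' _ => h1 j j'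
    _ = ∑ j, ∑ p : Fin K, ∑ j',
      ((if j = p.castSucc then (if j' = p.succ then f j j' else 0) else 0) +
        (if j = p.succ then (if j' = p.castSucc then f j j' else 0) else 0)) :=
        Finset.sum_congr rfl fun j _ => Finset.sum_comm
    _ = ∑ p : Fin K, ∑ j, ∑ j',
      ((if j = p.castSucc then (if j' = p.succ then f j j' else 0) else 0) +
        (if j = p.succ then (if j' = p.castSucc then f j j' else 0) else 0)) := Finset.sum_comm
    _ = _ := by
      refine Finset.sum_congr rfl fun p _ => ?_
      have h2 : ∀ j : Fin (K + 1), ∑ j' : Fin (K + 1),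
        ((if j = p.castSucc then (if j' = p.succ then f j j' else 0) else 0) +
        (if j = p.succ then (if j' = p.castSucc then f j j' else 0) else 0)) =
        (if j = p.castSucc then f j p.succ else 0) + (if j = p.succ then f j p.castSucc else 0) := by
        intro j
        rw [Finset.sum_add_distrib]
        congr 1 <;> split_ifs <;> simp
      simp only [h2]
      rw [Finset.sum_add_distrib]
      simp

/-- Adjacency of the critical values number `p` and `p + 1`. -/
def mmAdjP {m l : ℕ} (p : Fin (m + 1)) (τ : mmTy (m + 2) l) : Prop :=
  mmCov (mmFlip p τ.1.2) (mmZeta p (.inr 0)) (mmH p)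

theorem mmAdjP_card {m l : ℕ} (p : Fin (m + 1)) :
    Nat.card {τ : mmTy (m + 2) l // mmAdjP p τ} = Nat.card (mmAset m l p) := by
  refine Nat.card_congr
    { toFun := fun t => ⟨(t.1.1.1, mmFlip p t.1.1.2),
        mmFlip_STO p t.1.2.1, (mmVal_iff p _ _).1 t.1.2.2, t.2⟩
      invFun := fun t => ⟨⟨(t.1.1, mmFlip p t.1.2), mmFlip_STO p t.2.1,
        (mmVal_iff p _ _).2 (by rw [mmFlip_flip]; exact t.2.2.1)⟩, by
          unfold mmAdjP
          rw [mmFlip_flip]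
          exact t.2.2.2⟩
      left_inv := fun t => Subtype.ext (Subtype.ext (Prod.ext rfl (mmFlip_flip _ _)))
      right_inv := fun t => Subtype.ext (Prod.ext rfl (mmFlip_flip _ _)) }

theorem mmB_card {m l : ℕ} (p : Fin (m + 1)) :
    Nat.card {τ : mmTy m (l + 1) // τ.1.1 0 = p} = Nat.card (mmBset m l p) := by
  refine Nat.card_congr
    { toFun := fun t => ⟨(t.1.1.1, mmFlip p t.1.1.2),
        mmFlip_STO p t.1.2.1, (mmVal_iff p _ _).1 t.1.2.2, t.2⟩
      invFun := fun t => ⟨⟨(t.1.1, mmFlip p t.1.2), mmFlip_STO p t.2.1,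
        (mmVal_iff p _ _).2 (by rw [mmFlip_flip]; exact t.2.2.1)⟩, t.2.2.2⟩
      left_inv := fun t => Subtype.ext (Subtype.ext (Prod.ext rfl (mmFlip_flip _ _)))
      right_inv := fun t => Subtype.ext (Prod.ext rfl (mmFlip_flip _ _)) }

theorem mmAdjP_total {m l : ℕ} :
    ∑ τ : mmTy (m + 2) l, ∑ p : Fin (m + 1), mmI (mmAdjP p τ) =
      (Nat.card (mmTy m (l + 1)) : ℤ) := by
  rw [Finset.sum_comm]
  have h1 : ∀ p : Fin (m + 1), ∑ τ : mmTy (m + 2) l, mmI (mmAdjP p τ) =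
      ∑ σ : mmTy m (l + 1), mmI (σ.1.1 0 = p) := by
    intro p
    rw [mmI_sum, mmI_sum, mmAdjP_card, mmB_card, mm_collapse_card]
  rw [Finset.sum_congr rfl fun p _ => h1 p, Finset.sum_comm]
  have h2 : ∀ σ : mmTy m (l + 1), ∑ p : Fin (m + 1), mmI (σ.1.1 0 = p) = 1 := by
    intro σ
    rw [Finset.sum_eq_single (σ.1.1 0), mmI_pos rfl]
    · intro q _ hq
      exact mmI_neg fun h => hq h.symm
    · simp
  simp [h2]

theorem mm_cc_sum {m l : ℕ} (τ : mmTy (m + 2) l) :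
    ∑ j : Fin (m + 2), ∑ j' : Fin (m + 2),
      mmI (mmCov τ.1.2 (.inl j) (.inl j') ∧ mmR τ.1.1 (.inl j) (.inl j')) =
      ∑ p : Fin (m + 1), mmI (mmAdjP p τ) := by
  rw [mm_adjsum (K := m + 1)]
  · refine Finset.sum_congr rfl fun p _ => ?_
    have e : ∀ P Q : Prop, (P ↔ Q) → mmI P = mmI Q := fun P Q h => by rw [propext h]
    rcases Nat.mod_two_eq_zero_or_one (p : ℕ) with h | h
    · rw [mmI_neg (p := mmCov τ.1.2 (.inl p.succ) (.inl p.castSucc) ∧ _), add_zero]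
      · apply e
        unfold mmAdjP
        rw [mmFlip_even h]
        exact ⟨fun h => h.1, fun h' => ⟨h', by exact h, Or.inl rfl⟩⟩
      · rintro ⟨-, h1, -⟩
        simp only [Fin.val_succ] at h1
        omega
    · rw [mmI_neg (p := mmCov τ.1.2 (.inl p.castSucc) (.inl p.succ) ∧ _), zero_add]
      · apply e
        unfold mmAdjP
        rw [mmFlip_odd h, mmCov_flip]
        exact ⟨fun h => h.1, fun h' => ⟨h', by simp only [Fin.val_succ]; omega, Or.inr rfl⟩⟩
      · rintro ⟨-, h1, -⟩
        simp only [Fin.val_castSucc] at h1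
        omega
  · intro j j' h
    exact mmI_neg fun h' => h h'.2.2

theorem mm_split {m l : ℕ} (τ : mmTy m l) (a b) :
    mmI (mmCov τ.1.2 a b) * (mmS b - mmS a) =
      mmI (mmCov τ.1.2 a b ∧ mmR τ.1.1 a b) * (mmS b - mmS a) +
        mmI (mmFree a b τ) * (mmS b - mmS a) := by
  unfold mmFree
  by_cases h1 : mmCov τ.1.2 a b <;> by_cases h2 : mmR τ.1.1 a b <;> simp [mmI, h1, h2]

theorem mm_R_sum {m l : ℕ} (τ : mmTy m l) :
    ∑ a, ∑ b, mmI (mmCov τ.1.2 a b ∧ mmR τ.1.1 a b) * (mmS b - mmS a) =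
    2 * ∑ j : Fin m, ∑ j' : Fin m,
        mmI (mmCov τ.1.2 (.inl j) (.inl j') ∧ mmR τ.1.1 (.inl j) (.inl j')) +
      ∑ i : Fin l, ∑ j : Fin m,
        (mmI (mmCov τ.1.2 (.inl j) (.inr i) ∧ mmR τ.1.1 (.inl j) (.inr i)) +
        mmI (mmCov τ.1.2 (.inr i) (.inl j) ∧ mmR τ.1.1 (.inr i) (.inl j))) := by
  have h1 : ∀ j j' : Fin m, mmI (mmCov τ.1.2 (.inl j) (.inl j') ∧ mmR τ.1.1 (.inl j) (.inl j')) *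
      (mmS (l := l) (.inl j') - mmS (l := l) (.inl j)) =
      2 * mmI (mmCov τ.1.2 (.inl j) (.inl j') ∧ mmR τ.1.1 (.inl j) (.inl j')) := by
    intro j j'
    by_cases h : mmCov τ.1.2 (.inl j) (.inl j') ∧ mmR τ.1.1 (.inl j) (.inl j')
    · rw [mmI_pos h]
      obtain ⟨-, h2, h3⟩ := h
      simp only [mmS]
      rw [if_pos h2, if_neg (by omega)]
      norm_num
    · rw [mmI_neg h]; simp
  have h2 : ∀ (j : Fin m) (i : Fin l),
      mmI (mmCov τ.1.2 (.inl j) (.inr i) ∧ mmR τ.1.1 (.inl j) (.inr i)) *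
      (mmS (m := m) (.inr i) - mmS (l := l) (.inl j)) =
      mmI (mmCov τ.1.2 (.inl j) (.inr i) ∧ mmR τ.1.1 (.inl j) (.inr i)) := by
    intro j i
    by_cases h : mmCov τ.1.2 (.inl j) (.inr i) ∧ mmR τ.1.1 (.inl j) (.inr i)
    · rw [mmI_pos h]
      obtain ⟨-, h2, h3⟩ := h
      simp only [mmS]
      rw [if_pos h2]
      norm_num
    · rw [mmI_neg h]; simp
  have h3 : ∀ (j : Fin m) (i : Fin l),
      mmI (mmCov τ.1.2 (.inr i) (.inl j) ∧ mmR τ.1.1 (.inr i) (.inl j)) *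
      (mmS (l := l) (.inl j) - mmS (m := m) (.inr i)) =
      mmI (mmCov τ.1.2 (.inr i) (.inl j) ∧ mmR τ.1.1 (.inr i) (.inl j)) := by
    intro j i
    by_cases h : mmCov τ.1.2 (.inr i) (.inl j) ∧ mmR τ.1.1 (.inr i) (.inl j)
    · rw [mmI_pos h]
      obtain ⟨-, h2, h3⟩ := h
      simp only [mmS]
      rw [if_neg (by omega)]
      norm_num
    · rw [mmI_neg h]; simp
  have h4 : ∀ (i i' : Fin l),
      mmI (mmCov τ.1.2 (.inr i) (.inr i') ∧ mmR τ.1.1 (.inr i) (.inr i')) *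
      (mmS (m := m) (.inr i') - mmS (m := m) (.inr i)) = 0 := by
    intro i i'
    simp [mmS]
  simp only [Fintype.sum_sum_type, h1, h2, h3, h4, Finset.sum_add_distrib, Finset.mul_sum,
    Finset.sum_const_zero, add_zero]
  rw [Finset.sum_comm (f := fun (j : Fin m) (i : Fin l) =>
    mmI (mmCov τ.1.2 (.inl j) (.inr i) ∧ mmR τ.1.1 (.inl j) (.inr i)))]
  ring

theorem mm_local {m l : ℕ} (τ : mmTy (m + 2) l) :
    2 = 2 * ∑ p : Fin (m + 1), mmI (mmAdjP p τ) + ∑ i : Fin l, ∑ e, mmI (mmAdj i e τ) +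
      ∑ a, ∑ b, mmI (mmFree a b τ) * (mmS b - mmS a) := by
  have h1 := mm_telescope τ.2.1 mmS
  rw [mm_top_sum (by omega), mm_bot_sum (by omega)] at h1
  simp only [mm_split, Finset.sum_add_distrib] at h1
  rw [mm_R_sum, mm_cc_sum] at h1
  simp only [mm_adj_sum (show 0 < m + 2 by omega), Finset.sum_add_distrib] at h1 ⊢
  linarith

theorem mm_rec (m l : ℕ) :
    (Nat.card (mmTy m (l + 2)) : ℤ) = Nat.card (mmTy (m + 2) (l + 1)) -
      ((m : ℤ) + 3) * ((l : ℤ) + 1) * Nat.card (mmTy (m + 2) l) := by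
  have h1 : ∑ τ : mmTy (m + 2) (l + 1), (2 : ℤ) = _ :=
    Finset.sum_congr rfl fun τ _ => mm_local τ
  rw [Finset.sum_add_distrib, Finset.sum_add_distrib, mm_free_sum, ← Finset.mul_sum,
    mmAdjP_total] at h1
  have h2 : ∑ τ : mmTy (m + 2) (l + 1), ∑ i : Fin (l + 1), ∑ e, mmI (mmAdj i e τ) =
      ((l : ℤ) + 1) * (2 * (m : ℤ) + 6) * Nat.card (mmTy (m + 2) l) := by
    rw [Finset.sum_comm]
    have h3 : ∀ i : Fin (l + 1), ∑ τ : mmTy (m + 2) (l + 1), ∑ e, mmI (mmAdj i e τ) =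
        (2 * (m : ℤ) + 6) * Nat.card (mmTy (m + 2) l) := by
      intro i
      rw [Finset.sum_comm]
      have h4 : ∀ e : mmEnd (m + 2), ∑ τ : mmTy (m + 2) (l + 1), mmI (mmAdj i e τ) =
          (Nat.card (mmTy (m + 2) l) : ℤ) := by
        intro e
        rw [mmI_sum, mm_ins_card]
      rw [Finset.sum_congr rfl fun e _ => h4 e, Finset.sum_const, Finset.card_univ]
      simp only [mmEnd, Fintype.card_sum, Fintype.card_prod, Fintype.card_fin, Fintype.card_bool,
        nsmul_eq_mul]
      push_cast
      ring
    rw [Finset.sum_congr rfl fun i _ => h3 i, Finset.sum_const, Finset.card_univ, Fintype.card_fin,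
      nsmul_eq_mul]
    push_cast
    ring
  rw [h2, Finset.sum_const, Finset.card_univ, nsmul_eq_mul, ← Nat.card_eq_fintype_card] at h1
  linarith

theorem morsification_component_recurrence (n l : ℕ) (hn : 4 ≤ n) (hl : 1 ≤ l) :
    (Nat.card (ConnectedComponents ↥(V (n - 2) (l + 1))) : ℤ) =
      (Nat.card (ConnectedComponents ↥(V n l)) : ℤ) -
        (n : ℤ) * (l : ℤ) * (Nat.card (ConnectedComponents ↥(V n (l - 1))) : ℤ) := by
  obtain ⟨M, rfl⟩ := Nat.exists_eq_add_of_le' hn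
  obtain ⟨L, rfl⟩ := Nat.exists_eq_add_of_le' hl
  have e1 := mm_count (m := M + 1) (l := L + 2) (by omega)
  have e2 := mm_count (m := M + 3) (l := L + 1) (by omega)
  have e3 := mm_count (m := M + 3) (l := L) (by omega)
  have e4 := mm_rec (M + 1) L
  rw [← e1, ← e2, ← e3] at e4
  push_cast at e4 ⊢
  have e5 : ((M : ℤ) + 1 + 3) = M + 4 := by ring
  rw [e5] at e4
  exact e4
end

section
/- Let g : ℝ → ℝ be defined on (−π/2, π/2) by g(t) = 3t²/(1 − sin t) − 3t·cos t·(3 − sin t)/(1 − sin t)² + 3(2 − sin t)/(1 − sin t)². Then for every real t with |t| < π/2, the series ∑_{n=0}^∞ K n 4 · tⁿ/n! converges and its sum equals the fourth derivative g⁗(t) (iteratedDeriv 4 g t); that is, the exponential generating function for the multiboundary singularities B_n^4 is K_4(t) = ( 3t²/(1−sin t) − 3t cos t(3−sin t)/(1−sin t)² + 3(2−sin t)/(1−sin t)² )⁗. -/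
/-- The Bernoulli–Euler (zigzag, up-down) numbers: `A 0 = 1`, `A 1 = 1`, and
`2 * A (n+1) = ∑ k in range (n+1), (n.choose k) * A k * A (n-k)`. -/
def A : ℕ → ℕ
  | 0 => 1
  | 1 => 1
  | n + 2 =>
      (∑ k ∈ (Finset.range (n + 2)).attach,
        Nat.choose (n + 1) k.1 * A k.1 * A (n + 1 - k.1)) / 2
decreasing_by
  · have := Finset.mem_range.mp k.2; omega
  · have := Finset.mem_range.mp k.2; omega

/-- `K n l` : number of connected components of the space of very nice
M-morsifications of the multiboundary singularity `B_n^l`, extended by the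
recurrence `K n (l+1) = K (n+2) l − (n+2)·l·K (n+2) (l−1)` for `l ≥ 1`,
with `K n 0 = A (n-1)` for `n ≥ 1`, `K n 0 = 0` for `n ≤ 0`,
and `K n 1 = K (n+2) 0`. -/
def K : ℤ → ℕ → ℤ
  | n, 0 => if 1 ≤ n then (A (n - 1).toNat : ℤ) else 0
  | n, 1 => K (n + 2) 0
  | n, (l + 2) => K (n + 2) (l + 1) - (n + 2) * (l + 1) * K (n + 2) l

open Complex in
/-- the analytic function whose Taylor coefficients are the zigzag numbers -/
noncomputable def zy0 (z : ℂ) : ℂ := cos z / (1 - sin z)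

open Complex in
noncomputable def zy1 (z : ℂ) : ℂ := 1 / (1 - sin z)

open Complex in
noncomputable def zy2 (z : ℂ) : ℂ := cos z / (1 - sin z) ^ 2

open Complex in
noncomputable def zy3 (z : ℂ) : ℂ := (2 + sin z) / (1 - sin z) ^ 2

open Complex in
noncomputable def zG (u : ℂ) : ℂ :=
  3 * u ^ 2 / (1 - sin u) -
            3 * u * cos u * (3 - sin u) / (1 - sin u) ^ 2 +
            3 * (2 - sin u) / (1 - sin u) ^ 2

lemma A_even (m : ℕ) (hm : 1 ≤ m) :
    2 ∣ ∑ k ∈ Finset.range (m + 1), Nat.choose m k * A k * A (m - k) := by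
  rw [← CharP.cast_eq_zero_iff (ZMod 2) 2]
  push_cast
  refine Finset.sum_involution (fun k _ => m - k) ?_ ?_ ?_ ?_
  · intro k hk
    have hk' : k ≤ m := by have := Finset.mem_range.mp hk; omega
    rw [Nat.choose_symm hk', Nat.sub_sub_self hk', mul_right_comm, CharTwo.add_self_eq_zero]
  · intro k hk h1 h2
    have hk' : k ≤ m := by have := Finset.mem_range.mp hk; omega
    apply h1
    have h3 : m = 2 * k := by omega
    have h4 : 2 ∣ Nat.choose m k := by
      have := Nat.two_dvd_centralBinom_of_one_le (n := k) (by omega)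
      rwa [Nat.centralBinom, ← h3] at this
    rw [(CharP.cast_eq_zero_iff (ZMod 2) 2 _).2 h4]
    simp
  · intro k hk
    simp only [Finset.mem_range]
    omega
  · intro k hk
    have hk' : k ≤ m := by have := Finset.mem_range.mp hk; omega
    exact Nat.sub_sub_self hk'

lemma A_rec (n : ℕ) :
    2 * A (n + 2) = ∑ k ∈ Finset.range (n + 2), Nat.choose (n + 1) k * A k * A (n + 1 - k) := by
  rw [A, Finset.sum_attach (Finset.range (n + 2))
    (fun k => Nat.choose (n + 1) k * A k * A (n + 1 - k))]
  exact Nat.mul_div_cancel' (A_even (n + 1) (by omega))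

lemma K_four (n : ℕ) : K n 4 = (A (n + 7) : ℤ) - (6 * n + 20) * A (n + 5)
    + 3 * (n + 2) * (n + 4) * A (n + 3) := by
  have h0 : ∀ m : ℕ, K ((m : ℤ) + 1) 0 = A m := by
    intro m
    simp [K]
  have e1 := h0 (n + 7)
  have e2 := h0 (n + 5)
  have e3 := h0 (n + 3)
  simp only [K.eq_3, zero_add, K.eq_2]
  push_cast at e1 e2 e3
  have a1 : (n : ℤ) + 2 + 2 + 2 + 2 = n + 7 + 1 := by ring
  have a2 : (n : ℤ) + 2 + 2 + 2 = n + 5 + 1 := by ring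
  have a3 : (n : ℤ) + 2 + 2 = n + 3 + 1 := by ring
  rw [a1, a2, a3, e1, e2, e3]
  push_cast
  ring

lemma den_ne {z : ℂ} (hz : z ∈ Metric.ball (0 : ℂ) (Real.pi / 2)) : 1 - Complex.sin z ≠ 0 := by
  intro h
  have h1 : Complex.sin z = 1 := by linear_combination -h
  obtain ⟨k, hk⟩ := Complex.sin_eq_one_iff.1 h1
  have h2 : ‖z‖ < Real.pi / 2 := by simpa using hz
  have h3 : z = ((Real.pi / 2 + k * (2 * Real.pi) : ℝ) : ℂ) := by rw [← hk]; push_cast; ring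
  rw [h3, Complex.norm_real, Real.norm_eq_abs, abs_lt] at h2
  have hp := Real.pi_pos
  obtain ⟨h4, h5⟩ := h2
  have h6 : (k : ℝ) < 0 := by nlinarith
  have h7 : (-1 : ℝ) < k := by nlinarith
  have h8 : k < 0 := by exact_mod_cast h6
  have h9 : -1 < k := by exact_mod_cast h7
  omega

lemma d0 {z : ℂ} (h : 1 - Complex.sin z ≠ 0) : HasDerivAt zy0 (zy1 z) z := by
  have := (Complex.hasDerivAt_cos z).div ((Complex.hasDerivAt_sin z).const_sub 1) h
  refine this.congr_deriv ?_
  unfold zy1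
  field_simp
  linear_combination Complex.sin_sq_add_cos_sq z

lemma d1 {z : ℂ} (h : 1 - Complex.sin z ≠ 0) : HasDerivAt zy1 (zy2 z) z := by
  have := (hasDerivAt_const z (1 : ℂ)).div ((Complex.hasDerivAt_sin z).const_sub 1) h
  refine this.congr_deriv ?_
  unfold zy2
  field_simp
  ring

lemma d2 {z : ℂ} (h : 1 - Complex.sin z ≠ 0) : HasDerivAt zy2 (zy3 z) z := by
  have := (Complex.hasDerivAt_cos z).div (((Complex.hasDerivAt_sin z).const_sub 1).pow 2)
    (pow_ne_zero 2 h)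
  refine this.congr_deriv ?_
  unfold zy3
  simp only [Pi.pow_apply]
  field_simp
  linear_combination (2 - 2 * Complex.sin z) * Complex.sin_sq_add_cos_sq z

lemma ev_ne : ∀ᶠ z in nhds (0 : ℂ), 1 - Complex.sin z ≠ 0 := by
  filter_upwards [Metric.ball_mem_nhds (0 : ℂ) (half_pos Real.pi_pos)] with z hz
  exact den_ne hz

lemma an0 : AnalyticAt ℂ zy0 0 := by
  unfold zy0
  exact (Complex.differentiable_cos.analyticAt 0).div
    (analyticAt_const.sub (Complex.differentiable_sin.analyticAt 0)) (by simp)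

/-- `f` is analytic at `0` with `n`-th derivatives `a n` -/
def PC (a : ℕ → ℂ) (f : ℂ → ℂ) : Prop := AnalyticAt ℂ f 0 ∧ ∀ n, iteratedDeriv n f 0 = a n

lemma PC.deriv' {a : ℕ → ℂ} {f g : ℂ → ℂ} (h : PC a f)
    (hg : ∀ z, 1 - Complex.sin z ≠ 0 → HasDerivAt f (g z) z) : PC (fun n => a (n + 1)) g := by
  have e : deriv f =ᶠ[nhds 0] g := by
    filter_upwards [ev_ne] with z hz using (hg z hz).deriv
  refine ⟨h.1.deriv.congr e, fun n => ?_⟩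
  rw [← e.iteratedDeriv_eq n, ← iteratedDeriv_succ', h.2]

lemma PC.add' {a b : ℕ → ℂ} {f g : ℂ → ℂ} (h : PC a f) (k : PC b g) :
    PC (fun n => a n + b n) (fun z => f z + g z) := by
  refine ⟨h.1.add k.1, fun n => ?_⟩
  simp only [← h.2, ← k.2]
  exact iteratedDeriv_add h.1.contDiffAt k.1.contDiffAt

lemma PC.smul' {a : ℕ → ℂ} {f : ℂ → ℂ} (h : PC a f) (c : ℂ) :
    PC (fun n => c * a n) (fun z => c * f z) := by
  refine ⟨analyticAt_const.mul h.1, fun n => ?_⟩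
  simp only [← h.2]
  exact iteratedDeriv_const_mul_field c f

lemma PC.zmul {a : ℕ → ℂ} {f : ℂ → ℂ} (h : PC a f) :
    PC (fun n => n * a (n - 1)) (fun z => z * f z) := by
  refine ⟨analyticAt_id.mul h.1, fun n => ?_⟩
  have := iteratedDeriv_mul (n := n) (f := fun z : ℂ => z) (g := f) (x := (0 : ℂ))
    analyticAt_id.contDiffAt h.1.contDiffAt
  simp only [← h.2]
  refine Eq.trans this ?_
  simp only [iteratedDeriv_fun_id_zero]
  rcases n with _ | n
  · simp
  · rw [Finset.sum_eq_single 1]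
    · simp
    · intro b _ hb
      simp [hb]
    · intro hb
      simp at hb

lemma pc0 : PC (fun n => (A n : ℂ)) zy0 := by
  refine ⟨an0, fun n => ?_⟩
  have e : deriv zy0 =ᶠ[nhds 0] fun z => (1 / 2 : ℂ) * ((zy0 * zy0) z + 1) := by
    filter_upwards [ev_ne] with z hz
    rw [(d0 hz).deriv]
    simp only [Pi.mul_apply]
    unfold zy0 zy1
    field_simp
    linear_combination -Complex.sin_sq_add_cos_sq z
  induction n using Nat.strong_induction_on with
  | _ n ih =>
    match n, ih with
    | 0, _ => simp [zy0, A]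
    | 1, _ =>
      rw [iteratedDeriv_one, (d0 (by simp)).deriv]
      simp [zy1, A]
    | n + 2, ih =>
      rw [iteratedDeriv_succ', e.iteratedDeriv_eq (n + 1), iteratedDeriv_const_mul_field]
      have h1 : iteratedDeriv (n + 1) (fun z => (zy0 * zy0) z + 1) 0
          = iteratedDeriv (n + 1) (zy0 * zy0) 0 := by
        simp_rw [add_comm _ (1 : ℂ)]
        exact iteratedDeriv_const_add (by omega) 1
      rw [h1, iteratedDeriv_mul an0.contDiffAt an0.contDiffAt]
      have h2 := congrArg (Nat.cast : ℕ → ℂ) (A_rec n)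
      push_cast at h2
      rw [Finset.sum_congr rfl (g := fun k => ((n + 1).choose k : ℂ) * A k * A (n + 1 - k))]
      · rw [← h2]; ring
      · intro k hk
        have := Finset.mem_range.mp hk
        rw [ih k (by omega), ih (n + 1 - k) (by omega)]

lemma zG_coeff (n : ℕ) : iteratedDeriv (n + 4) zG 0 = (K n 4 : ℂ) := by
  have p1 := pc0.deriv' (fun z => d0)
  have p2 := p1.deriv' (fun z => d1)
  have p3 := p2.deriv' (fun z => d2)
  have P := (((p3.add' (p2.zmul.smul' (-6))).add' (p1.smul' 4)).add'
    (p1.zmul.zmul.smul' 3)).add' (pc0.zmul.smul' (-3))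
  have e : zG =ᶠ[nhds 0] fun z => zy3 z + -6 * (z * zy2 z) + 4 * zy1 z + 3 * (z * (z * zy1 z))
      + -3 * (z * zy0 z) := by
    filter_upwards [ev_ne] with z hz
    unfold zG zy0 zy1 zy2 zy3
    field_simp
    ring
  rw [e.iteratedDeriv_eq, P.2, K_four]
  simp only [show n + 4 - 1 = n + 3 by omega, show n + 3 - 1 = n + 2 by omega]
  push_cast
  ring

lemma zG_diff : DifferentiableOn ℂ zG (Metric.ball 0 (Real.pi / 2)) := by
  intro z hz
  have h := den_ne hz
  have h2 := pow_ne_zero 2 h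
  unfold zG
  apply DifferentiableAt.differentiableWithinAt
  fun_prop (disch := assumption)

lemma zG_diff_iter (k : ℕ) :
    DifferentiableOn ℂ (iteratedDeriv k zG) (Metric.ball 0 (Real.pi / 2)) := by
  induction k with
  | zero => simpa using zG_diff
  | succ k ih =>
    rw [iteratedDeriv_succ]
    exact ih.deriv Metric.isOpen_ball

lemma real_transfer (g : ℝ → ℝ) (hg : ∀ u : ℝ, g u = (zG u).re) (k : ℕ) :
    ∀ u : ℝ, |u| < Real.pi / 2 → iteratedDeriv k g u = (iteratedDeriv k zG u).re := by
  induction k with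
  | zero => intro u _; simpa using hg u
  | succ k ih =>
    intro u hu
    have hm : (u : ℂ) ∈ Metric.ball (0 : ℂ) (Real.pi / 2) := by simpa using hu
    have hd := ((zG_diff_iter k).differentiableAt
      (Metric.isOpen_ball.mem_nhds hm)).hasDerivAt.real_of_complex
    rw [iteratedDeriv_succ, iteratedDeriv_succ, ← hd.deriv]
    apply Filter.EventuallyEq.deriv_eq
    filter_upwards [(isOpen_lt continuous_abs continuous_const).mem_nhds hu] with v hv
    exact ih v hv


open Real in
/-- The exponential generating function for the multiboundary singularities `B_n^4`:
for `|t| < π/2`, `∑ K n 4 · tⁿ/n!` equals the fourth derivative of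
`g(t) = 3t²/(1−sin t) − 3t cos t(3−sin t)/(1−sin t)² + 3(2−sin t)/(1−sin t)²`. -/
theorem egf_K_four (t : ℝ) (ht : |t| < π / 2) :
    HasSum (fun n : ℕ => (K n 4 : ℝ) * t ^ n / n.factorial)
      (iteratedDeriv 4
        (fun u : ℝ =>
          3 * u ^ 2 / (1 - Real.sin u) -
            3 * u * Real.cos u * (3 - Real.sin u) / (1 - Real.sin u) ^ 2 +
            3 * (2 - Real.sin u) / (1 - Real.sin u) ^ 2) t) := by
  have hm : (t : ℂ) ∈ Metric.ball (0 : ℂ) (π / 2) := by simpa using ht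
  have hs := Complex.hasSum_taylorSeries_on_ball (zG_diff_iter 4) hm
  rw [real_transfer _ (fun u => ?_) 4 t ht]
  · convert Complex.hasSum_re hs using 2 with n
    have h1 : iteratedDeriv n (iteratedDeriv 4 zG) 0 = (K n 4 : ℂ) := by
      rw [← zG_coeff n, iteratedDeriv_eq_iterate, iteratedDeriv_eq_iterate,
        iteratedDeriv_eq_iterate, Function.iterate_add_apply]
    rw [h1]
    have h2 : ((n.factorial : ℂ)⁻¹ • ((t : ℂ) - 0) ^ n • (K n 4 : ℂ))
        = (((K n 4 : ℝ) * t ^ n / n.factorial : ℝ) : ℂ) := by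
      push_cast
      simp only [smul_eq_mul, sub_zero]
      ring
    rw [h2, Complex.ofReal_re]
  · rw [← Complex.ofReal_re (3 * u ^ 2 / (1 - Real.sin u) -
            3 * u * Real.cos u * (3 - Real.sin u) / (1 - Real.sin u) ^ 2 +
            3 * (2 - Real.sin u) / (1 - Real.sin u) ^ 2)]
    unfold zG
    push_cast
    rfl
end

section
/- For every integer n ≤ −1, one has K n ((−n).toNat) = ((−n − 1).toNat)!; that is, K_n^{−n} = (−n−1)! (e.g. K_{−1}^1 = 1, K_{−2}^2 = 1, K_{−3}^3 = 2, K_{−4}^4 = 6, K_{−5}^5 = 24). -/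
open Polynomial in
/-- Polynomials whose coefficients are `K (N+1-l) l / l!`. -/
noncomputable def S : ℕ → ℤ[X]
  | 0 => 1 + X
  | N + 1 => (1 - X ^ 2) * derivative (S N) + ((N : ℤ[X]) + 1) * X * S N

open Polynomial in
theorem S_conv (n : ℕ) : 2 * S (n + 2) =
    ∑ ij ∈ Finset.HasAntidiagonal.antidiagonal (n + 1), ((n + 1).choose ij.1 : ℤ[X]) * (S ij.1 * S ij.2) := by
  induction n with
  | zero =>
    simp [S, Finset.Nat.antidiagonal_succ]
    ring
  | succ n ih =>
    have h1 : 2 * S (n + 3) = (1 - X ^ 2) * derivative (2 * S (n + 2))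
        + ((n : ℤ[X]) + 3) * X * (2 * S (n + 2)) := by
      rw [S]; simp [derivative_mul]; ring
    rw [show n + 1 + 2 = n + 3 from rfl, h1, ih,
      Finset.sum_antidiagonal_choose_succ_mul (fun i j => S i * S j) (n + 1),
      derivative_sum, Finset.mul_sum, Finset.mul_sum, ← Finset.sum_add_distrib,
      ← Finset.sum_add_distrib]
    refine Finset.sum_congr rfl fun ij hij => ?_
    obtain ⟨i, j⟩ := ij
    have hs : i + j = n + 1 := Finset.HasAntidiagonal.mem_antidiagonal.mp hij
    have hc : (n + 1).choose j = (n + 1).choose i := by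
      rw [← hs, Nat.choose_symm_add]
    have hn : (n : ℤ[X]) = i + j - 1 := by
      have : ((i + j : ℕ) : ℤ[X]) = ((n + 1 : ℕ) : ℤ[X]) := by rw [hs]
      push_cast at this
      rw [this]; ring
    simp only [hc, S, derivative_mul, derivative_natCast, hn]
    ring

theorem A_eq (n : ℕ) : (A n : ℤ) = (S n).coeff 0 := by
  induction n using Nat.strong_induction_on with
  | _ n ih =>
    match n with
    | 0 => simp [A, S]
    | 1 => simp [A, S, Polynomial.coeff_zero_eq_eval_zero]
    | n + 2 =>
      have hc := congrArg (Polynomial.eval 0) (S_conv n)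
      rw [Finset.Nat.sum_antidiagonal_eq_sum_range_succ_mk] at hc
      simp only [Polynomial.eval_mul, Polynomial.eval_finset_sum, Polynomial.eval_ofNat,
        Polynomial.eval_natCast, ← Polynomial.coeff_zero_eq_eval_zero] at hc
      rw [A, Finset.sum_attach (Finset.range (n + 2))
        (fun k => Nat.choose (n + 1) k * A k * A (n + 1 - k))]
      have : ((∑ k ∈ Finset.range (n + 2),
          Nat.choose (n + 1) k * A k * A (n + 1 - k) : ℕ) : ℤ) = 2 * (S (n + 2)).coeff 0 := by
        rw [hc]
        push_cast
        refine Finset.sum_congr rfl fun k hk => ?_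
        have := Finset.mem_range.mp hk
        rw [ih k (by omega), ih (n + 1 - k) (by omega)]
        ring
      omega

theorem S_coeff_zero (N : ℕ) : (S (N + 1)).coeff 0 = (S N).coeff 1 := by
  simp [S, sub_mul, mul_assoc,
    Polynomial.coeff_derivative]

theorem S_coeff_succ (N l : ℕ) : (S (N + 1)).coeff (l + 1) =
    (l + 2) * (S N).coeff (l + 2) + (N + 1 - l) * (S N).coeff l := by
  have h : S (N + 1) = Polynomial.derivative (S N)
      - Polynomial.derivative (S N) * Polynomial.X * Polynomial.X
      + Polynomial.C ((N : ℤ) + 1) * (S N * Polynomial.X) := by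
    rw [S]; simp; ring
  rw [h]
  simp only [Polynomial.coeff_add, Polynomial.coeff_sub, Polynomial.coeff_C_mul,
    Polynomial.coeff_mul_X, Polynomial.coeff_derivative]
  cases l with
  | zero => simp; ring
  | succ l =>
    simp only [Polynomial.coeff_mul_X, Polynomial.coeff_derivative]
    push_cast
    ring

theorem K_zero_succ (N : ℕ) (n : ℤ) (h : n = N + 1) : K n 0 = (S N).coeff 0 := by
  rw [K, if_pos (by omega), ← A_eq, show (n - 1).toNat = N by omega]

theorem K_eq (l : ℕ) : ∀ (N : ℕ) (n : ℤ), n + l = N + 1 →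
    K n l = (l.factorial : ℤ) * (S N).coeff l := by
  induction l using Nat.strong_induction_on with
  | _ l ih =>
    intro N n hn
    match l with
    | 0 => rw [K_zero_succ N n (by simpa using hn)]; simp
    | 1 =>
      rw [K, K_zero_succ (N + 1) (n + 2) (by push_cast at hn ⊢; omega), S_coeff_zero]; simp
    | l + 2 =>
      push_cast at hn
      rw [K, ih (l + 1) (by omega) (N + 1) (n + 2) (by push_cast; omega),
        ih l (by omega) N (n + 2) (by omega), S_coeff_succ,
        show n + 2 = N + 1 - l by omega]
      simp only [Nat.factorial_succ]
      push_cast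
      ring

theorem K_diag (m : ℕ) : K (-((m : ℤ) + 1)) (m + 1) = (m.factorial : ℤ) := by
  induction m using Nat.strong_induction_on with
  | _ m ih =>
    match m with
    | 0 => simp [K, A]
    | 1 => simp [K, A]
    | m + 2 =>
      have h0 := K_eq (m + 2) 0 (-((m : ℤ) + 1)) (by push_cast; ring)
      have hS : (S 0).coeff (m + 2) = 0 := by
        simp [S, Polynomial.coeff_one, Polynomial.coeff_X]
      rw [hS, mul_zero] at h0
      rw [K]
      push_cast
      rw [show -((m : ℤ) + 2 + 1) + 2 = -((m : ℤ) + 1) by ring, h0, ih m (by omega)]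
      simp only [Nat.factorial_succ]
      push_cast
      ring

/-- For `n ≤ −1`, `K n (−n) = (−n−1)!`. -/
theorem K_neg_diag (n : ℤ) (hn : n ≤ -1) :
    K n (-n).toNat = (((-n - 1).toNat).factorial : ℤ) := by
  obtain ⟨m, rfl⟩ : ∃ m : ℕ, n = -((m : ℤ) + 1) := ⟨(-n - 1).toNat, by omega⟩
  rw [show (- -((m : ℤ) + 1)).toNat = m + 1 by omega,
    show (- -((m : ℤ) + 1) - 1).toNat = m by omega]
  exact K_diag m
end
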